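/- arXiv:1512.08708 — 5 statements merged into one kernel-verified Lean document; each statement's English description precedes it below -/
import Mathlib

section
/- For every finite abelian group G, there exists a natural number n ≥ 1 and an intermediate field K of the cyclotomic extension ℚ(ζₙ)/ℚ (where ζₙ is a primitive n-th root of unity) such that K/ℚ is a finite Galois extension and Gal(K/ℚ) is isomorphic to G. In particular, every finite abelian group occurs as a Galois group over ℚ. -/
/-!
If `p ≡ 1` modulo the order of `g`, the cyclic group `(ZMod p)ˣ` maps to `G` with `g` in the
image. Choosing distinct such primes for the different elements of `G` and multiplying these maps
together through the Chinese remainder theorem exhibits `G` as a quotient of `(ZMod n)ˣ`. This is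
the Galois group of the `n`-th cyclotomic extension as soon as the `n`-th cyclotomic polynomial is
irreducible over the base field, and the quotients of a Galois group are the Galois groups of the
fixed fields of its normal subgroups.
-/

open Function

theorem exists_monoidHom_mem_range_of_orderOf_dvd_card {C G : Type*} [Group C] [IsCyclic C]
    [Group G] {g : G} (hg : orderOf g ∣ Nat.card C) : ∃ f : C →* G, g ∈ f.range := by
  obtain ⟨c, hc⟩ := IsCyclic.exists_generator (α := C)
  rw [← orderOf_eq_card_of_forall_mem_zpowers hc] at hg
  exact ⟨monoidHomOfForallMemZpowers hc hg, c, monoidHomOfForallMemZpowers_apply_gen hc hg⟩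

theorem exists_units_zmod_monoidHom_mem_range {G : Type*} [Group G] {p : ℕ} (hp : p.Prime)
    {g : G} (hg : p ≡ 1 [MOD orderOf g]) : ∃ f : (ZMod p)ˣ →* G, g ∈ f.range := by
  have : Fact p.Prime := ⟨hp⟩
  apply exists_monoidHom_mem_range_of_orderOf_dvd_card
  rw [Nat.card_eq_fintype_card, ZMod.card_units]
  exact (Nat.modEq_iff_dvd' hp.one_le).1 hg.symm

theorem exists_injective_primes_modEq_one (ι : Type*) [Countable ι] {k : ℕ} (hk : k ≠ 0) :
    ∃ p : ι → ℕ, Injective p ∧ ∀ i, (p i).Prime ∧ p i ≡ 1 [MOD k] := by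
  obtain ⟨e, he⟩ := exists_injective_nat ι
  let q := (Nat.infinite_setOfPred_prime_modEq_one hk).natEmbedding
  exact ⟨fun i ↦ q (e i), Subtype.val_injective.comp (q.injective.comp he), fun i ↦ (q (e i)).2⟩

theorem exists_units_zmod_prod_monoidHom_surjective {ι G : Type*} [Fintype ι] [CommGroup G]
    {m : ι → ℕ} (hm : Pairwise (Nat.Coprime on m)) (f : ∀ i, (ZMod (m i))ˣ →* G)
    (hf : ⨆ i, (f i).range = ⊤) : ∃ F : (ZMod (∏ i, m i))ˣ →* G, Surjective F := by
  let crt : (ZMod (∏ i, m i))ˣ ≃* ∀ i, (ZMod (m i))ˣ :=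
    (Units.mapEquiv (ZMod.prodEquivPi m hm).toMulEquiv).trans MulEquiv.piUnits
  let P : (∀ i, (ZMod (m i))ˣ) →* G :=
    MonoidHom.noncommPiCoprod f fun _ _ _ _ _ ↦ Commute.all _ _
  have hP : Surjective P :=
    MonoidHom.range_eq_top.1 ((MonoidHom.noncommPiCoprod_range f).trans hf)
  exact ⟨P.comp crt.toMonoidHom, hP.comp crt.surjective⟩

theorem exists_units_zmod_monoidHom_surjective (G : Type*) [CommGroup G] [Finite G] :
    ∃ (n : ℕ+) (f : (ZMod n)ˣ →* G), Surjective f := by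
  have := Fintype.ofFinite G
  obtain ⟨p, p_injective, hp⟩ :=
    exists_injective_primes_modEq_one G (Monoid.exponent_ne_zero_of_finite (G := G))
  have p_coprime : Pairwise (Nat.Coprime on p) := fun g h hgh ↦
    (Nat.coprime_primes (hp g).1 (hp h).1).2 (p_injective.ne hgh)
  have mem_range (g : G) : ∃ f : (ZMod (p g))ˣ →* G, g ∈ f.range :=
    exists_units_zmod_monoidHom_mem_range (hp g).1
      ((hp g).2.of_dvd (Monoid.order_dvd_exponent g))
  choose f hf using mem_range
  have iSup_range : ⨆ g, (f g).range = ⊤ :=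
    eq_top_iff.2 fun g _ ↦ Subgroup.mem_iSup_of_mem g (hf g)
  exact ⟨⟨∏ g, p g, Finset.prod_pos fun g _ ↦ (hp g).1.pos⟩,
    exists_units_zmod_prod_monoidHom_surjective p_coprime f iSup_range⟩

theorem exists_intermediateField_galois_mulEquiv_of_surjective {K L G : Type*} [Field K] [Field L]
    [Algebra K L] [FiniteDimensional K L] [IsGalois K L] [Group G] {φ : Gal(L/K) →* G}
    (hφ : Surjective φ) :
    ∃ E : IntermediateField K L, IsGalois K E ∧ Nonempty (Gal(E/K) ≃* G) :=
  ⟨IntermediateField.fixedField φ.ker, inferInstance,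
    ⟨(IsGalois.normalAutEquivQuotient φ.ker).symm.trans
      (QuotientGroup.quotientKerEquivOfSurjective φ hφ)⟩⟩

theorem finite_abelian_group_occurs_as_galoisGroup_over_rat_general
    (k : Type*) [Field k] [CharZero k] (hk : ∀ n : ℕ+, Irreducible (Polynomial.cyclotomic n k))
    (G : Type*) [CommGroup G] [Finite G] :
    ∃ (n : ℕ+) (K : IntermediateField k (CyclotomicField n k)),
      FiniteDimensional k K ∧ IsGalois k K ∧ Nonempty (Gal(K/k) ≃* G) := by
  obtain ⟨n, f, hf⟩ := exists_units_zmod_monoidHom_surjective G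
  have : NeZero ((n : ℕ) : k) := NeZero.charZero
  have : FiniteDimensional k (CyclotomicField n k) :=
    IsCyclotomicExtension.finiteDimensional {(n : ℕ)} k _
  have : IsGalois k (CyclotomicField n k) := IsCyclotomicExtension.isGalois {(n : ℕ)} k _
  let galEquiv : Gal(CyclotomicField n k/k) ≃* (ZMod n)ˣ :=
    IsCyclotomicExtension.autEquivPow _ (hk n)
  have hφ : Surjective (f.comp galEquiv.toMonoidHom) := hf.comp galEquiv.surjective
  obtain ⟨K, isGalois, equiv⟩ := exists_intermediateField_galois_mulEquiv_of_surjective hφ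
  exact ⟨n, K, inferInstance, isGalois, equiv⟩

/-- **Kronecker–Weber.** Every finite abelian group `G` occurs as the Galois group of a
subfield of a cyclotomic field `ℚ(ζₙ)`: there are `n ≥ 1` and an intermediate field `K`
of `ℚ(ζₙ)/ℚ` such that `K/ℚ` is finite Galois with `Gal(K/ℚ) ≃ G`. -/
theorem finite_abelian_group_occurs_as_galoisGroup_over_rat
    (G : Type) [CommGroup G] [Finite G] :
    ∃ (n : ℕ+) (K : IntermediateField ℚ (CyclotomicField n ℚ)),
      FiniteDimensional ℚ K ∧ IsGalois ℚ K ∧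
        Nonempty ((K ≃ₐ[ℚ] K) ≃* G) :=
  finite_abelian_group_occurs_as_galoisGroup_over_rat_general ℚ
    (fun n ↦ Polynomial.cyclotomic.irreducible_rat n.pos) G
end

section
/- For every natural number n ≥ 1, the symmetric group Sₙ occurs as a Galois group over ℚ; that is, there exists a finite Galois extension M/ℚ with Gal(M/ℚ) isomorphic to the symmetric group on n letters. -/
/-!
Let `K` be the splitting field over `ℚ` of `f = X ^ n - X - 1`, irreducible by Selmer. By Minkowski
no proper extension of `ℚ` is everywhere unramified, so `Gal(K/ℚ)` is generated by its inertia
groups. A multiple root `r` of `X ^ n + a X + b` over a field in which `a` and `b` are nonzero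
satisfies `a (n - 1) r = -n b`, which determines it, and it is not a root of the second derivative
`n (n - 1) X ^ (n - 2)`. Hence at most two roots of `f` become equal modulo any prime of `K`, and an
inertia element, which fixes every root modulo the prime, is trivial or a transposition of the
roots. A transitive permutation group generated by transpositions is the full symmetric group.
-/

open Polynomial NumberField

section Inertia

theorem ramificationIdx_under_eq_one_of_inertia_le {A B C G : Type*} [CommRing A] [CommRing B]
    [CommRing C] [IsDomain A] [IsDomain B] [IsDomain C] [Algebra A B] [Algebra A C] [Algebra B C]
    [IsScalarTower A B C] [Module.Finite A C] [Module.Flat A C] [Module.Flat B C]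
    [Group G] [Finite G] [MulSemiringAction G C] [IsGaloisGroup G A C]
    (H : Subgroup G) [IsGaloisGroup H B C] (Q : Ideal C) [Q.IsPrime]
    [PerfectField (Q.under A).ResidueField] [PerfectField (Q.under B).ResidueField]
    (hQH : Q.inertia G ≤ H) : (Q.under B).ramificationIdx A = 1 := by
  have : Module.Finite B C := Module.Finite.right A B C
  have card_inertia_G : Nat.card (Q.inertia G) = Q.ramificationIdx A := by
    rw [Ideal.card_inertia_eq_ramificationIdxIn (Q.under A) Q,
      Ideal.ramificationIdxIn_eq_ramificationIdx (Q.under A) Q G]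
  have card_inertia_H : Nat.card (Q.inertia H) = Q.ramificationIdx B := by
    rw [Ideal.card_inertia_eq_ramificationIdxIn (Q.under B) Q,
      Ideal.ramificationIdxIn_eq_ramificationIdx (Q.under B) Q H]
  have card_inertia_eq : Nat.card (Q.inertia G) = Nat.card (Q.inertia H) :=
    (Nat.card_congr (Subgroup.subgroupOfEquivOfLe hQH).toEquiv).symm
  have tower := Ideal.ramificationIdx_tower (R := A) (Q.under B) Q
  rw [← card_inertia_G, card_inertia_eq, card_inertia_H] at tower
  exact (right_eq_mul₀ (Q.ramificationIdx_pos B).ne').mp tower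

variable {K : Type*} [Field K] [NumberField K] [IsGalois ℚ K]

theorem eq_top_of_forall_inertia_le (H : Subgroup Gal(K/ℚ))
    (hH : ∀ Q : Ideal (𝓞 K), Q.IsMaximal → Q.inertia Gal(K/ℚ) ≤ H) : H = ⊤ := by
  let E : IntermediateField ℚ K := FixedPoints.intermediateField H
  have : IsGaloisGroup H (𝓞 E) (𝓞 K) := IsGaloisGroup.of_isFractionRing H (𝓞 E) (𝓞 K) E K
  suffices Module.finrank ℚ E = 1 by
    have E_eq_bot : FixedPoints.intermediateField H = (⊥ : IntermediateField ℚ K) :=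
      IntermediateField.finrank_eq_one_iff.mp this
    rw [← IsGaloisGroup.fixingSubgroup_fixedPoints Gal(K/ℚ) ℚ K H, E_eq_bot,
      IsGaloisGroup.fixingSubgroup_bot]
  by_contra hE
  obtain ⟨P, hP, ramified⟩ := exists_not_isUnramifiedAt_int (K := E) (𝒪 := 𝓞 E) hE
  obtain ⟨Q, hQ, hQP⟩ := Ideal.exists_maximal_ideal_liesOver_of_isIntegral (S := 𝓞 K) P
  obtain rfl := hQP.over
  have : Finite (𝓞 E ⧸ Q.under (𝓞 E)) :=
    Ring.HasFiniteQuotients.finiteQuotient (Ideal.IsMaximal.ne_bot_of_isIntegral_int _)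
  have : (Q.under ℤ).IsMaximal := Ideal.IsMaximal.under ℤ Q
  have : Finite (ℤ ⧸ Q.under ℤ) :=
    Ring.HasFiniteQuotients.finiteQuotient (Ideal.IsMaximal.ne_bot_of_isIntegral_int _)
  have : Finite (ℤ ⧸ (Q.under (𝓞 E)).under ℤ) := by rwa [Ideal.under_under]
  have : ((Q.under (𝓞 E)).under ℤ).IsMaximal := by rwa [Ideal.under_under]
  exact ramified (Ideal.ramificationIdx_eq_one_iff.mp
    (ramificationIdx_under_eq_one_of_inertia_le H Q (hH Q hQ)))

theorem iSup_inertia_eq_top :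
    ⨆ m : MaximalSpectrum (𝓞 K), m.asIdeal.inertia Gal(K/ℚ) = ⊤ :=
  eq_top_of_forall_inertia_le _ fun Q hQ ↦
    le_iSup (fun m : MaximalSpectrum (𝓞 K) ↦ m.asIdeal.inertia Gal(K/ℚ)) ⟨Q, hQ⟩

end Inertia

section IntegralRoots

theorem splits_map_of_isIntegralClosure {R S K : Type*} [CommRing R] [CommRing S] [Field K]
    [Algebra R S] [Algebra R K] [Algebra S K] [IsScalarTower R S K] [IsIntegralClosure S R K]
    {f : R[X]} (hf : f.Monic) (h : (f.map (algebraMap R K)).Splits) :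
    (f.map (algebraMap R S)).Splits := by
  rw [IsScalarTower.algebraMap_eq R S K, ← Polynomial.map_map] at h
  refine h.of_splits_map_of_injective (IsIntegralClosure.algebraMap_injective S R K) fun a ha ↦ ?_
  rw [Polynomial.map_map, ← IsScalarTower.algebraMap_eq] at ha
  exact IsIntegralClosure.isIntegral_iff.mp ⟨f, hf, by simpa [eval_map] using (mem_roots'.mp ha).2⟩

variable {R S F K : Type*} [CommRing R] [CommRing S] [IsDomain S] [Field F] [Field K]
  [Algebra R S] [Algebra R F] [Algebra R K] [Algebra S K] [Algebra F K]
  [IsScalarTower R S K] [IsScalarTower R F K] {f : R[X]}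

theorem algebraMap_mem_rootSet_map_iff [FaithfulSMul S K] (hf : f.Monic) {x : S} :
    algebraMap S K x ∈ (f.map (algebraMap R F)).rootSet K ↔ x ∈ f.rootSet S := by
  simp [mem_rootSet', (hf.map _).ne_zero, aeval_map_algebraMap, aeval_algebraMap_apply]

theorem image_algebraMap_rootSet [IsIntegralClosure S R K] (hf : f.Monic) :
    algebraMap S K '' f.rootSet S = (f.map (algebraMap R F)).rootSet K := by
  have : FaithfulSMul S K := (faithfulSMul_iff_algebraMap_injective S K).mpr
    (IsIntegralClosure.algebraMap_injective S R K)
  refine Set.Subset.antisymm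
    (Set.image_subset_iff.mpr fun x ↦ (algebraMap_mem_rootSet_map_iff hf).mpr) fun x hx ↦ ?_
  have aeval_eq_zero : aeval x f = 0 := by
    simpa [aeval_map_algebraMap] using aeval_eq_zero_of_mem_rootSet hx
  obtain ⟨y, rfl⟩ := (IsIntegralClosure.isIntegral_iff (A := S)).mp ⟨f, hf, aeval_eq_zero⟩
  exact Set.mem_image_of_mem _ ((algebraMap_mem_rootSet_map_iff hf).mp hx)

theorem ncard_rootSet_eq_natDegree [IsIntegralClosure S R K] (hf : f.Monic)
    (hsep : (f.map (algebraMap R F)).Separable)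
    (h : ((f.map (algebraMap R F)).map (algebraMap F K)).Splits) :
    (f.rootSet S).ncard = f.natDegree := by
  rw [← Set.ncard_image_of_injective _ (IsIntegralClosure.algebraMap_injective S R K),
    image_algebraMap_rootSet (F := F) hf, ← Nat.card_coe_set_eq, Nat.card_eq_fintype_card,
    card_rootSet_eq_natDegree hsep h, hf.natDegree_map]

variable [MulSemiringAction Gal(K/F) S] [SMulDistribClass Gal(K/F) S K] [SMulCommClass Gal(K/F) R S]

theorem isPretransitive_rootSet [FaithfulSMul S K] [Normal F K] (hf : f.Monic)
    (hirr : Irreducible (f.map (algebraMap R F))) :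
    MulAction.IsPretransitive Gal(K/F) (f.rootSet S) where
  exists_smul_eq x y := by
    have minpoly_eq (z : f.rootSet S) :
        minpoly F (algebraMap S K z) = f.map (algebraMap R F) :=
      (minpoly.eq_of_irreducible_of_monic hirr
        (aeval_eq_zero_of_mem_rootSet ((algebraMap_mem_rootSet_map_iff hf).mpr z.2))
        (hf.map _)).symm
    obtain ⟨σ, hσ⟩ := (Normal.minpoly_eq_iff_mem_orbit K).mp
      ((minpoly_eq y).trans (minpoly_eq x).symm)
    refine ⟨σ, Subtype.ext (FaithfulSMul.algebraMap_injective S K ?_)⟩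
    rw [rootSet.coe_smul, algebraMap.smul']
    exact hσ

theorem injective_toPermHom_rootSet [IsIntegralClosure S R K]
    [IsSplittingField F K (f.map (algebraMap R F))] (hf : f.Monic) :
    Function.Injective (MulAction.toPermHom Gal(K/F) (f.rootSet S)) := by
  refine (injective_iff_map_eq_one _).mpr fun σ hσ ↦ ?_
  have fixes_roots : Set.EqOn (σ : K →ₐ[F] K) (AlgHom.id F K)
      ((f.map (algebraMap R F)).rootSet K) := by
    rw [← image_algebraMap_rootSet (S := S) hf]
    rintro _ ⟨x, hx, rfl⟩
    have smul_eq : σ • x = x :=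
      congrArg (fun z : f.rootSet S ↦ (z : S)) (DFunLike.congr_fun hσ (⟨x, hx⟩ : f.rootSet S))
    exact (algebraMap.smul' σ x K).symm.trans (congrArg _ smul_eq)
  have σ_eq_id := AlgHom.ext_of_adjoin_eq_top
    (IsSplittingField.adjoin_rootSet K (f.map (algebraMap R F))) fixes_roots
  exact AlgEquiv.ext fun x ↦ DFunLike.congr_fun σ_eq_id x

end IntegralRoots

section NumberField

variable {K : Type*} [Field K] [NumberField K] {f : ℤ[X]}
  [IsSplittingField ℚ K (f.map (algebraMap ℤ ℚ))]

theorem splits_map_ringOfIntegers (hf : f.Monic) : (f.map (algebraMap ℤ (𝓞 K))).Splits := by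
  refine splits_map_of_isIntegralClosure (K := K) hf ?_
  rw [IsScalarTower.algebraMap_eq ℤ ℚ K, ← Polynomial.map_map]
  exact IsSplittingField.splits K _

theorem bijective_toPermHom_rootSet_ringOfIntegers (hf : f.Monic)
    (hirr : Irreducible (f.map (algebraMap ℤ ℚ)))
    (hcoll : ∀ m : MaximalSpectrum (𝓞 K),
      f.natDegree ≤ (f.rootSet (𝓞 K ⧸ m.asIdeal)).ncard + 1) :
    Function.Bijective (MulAction.toPermHom Gal(K/ℚ) (f.rootSet (𝓞 K))) := by
  have : IsGalois ℚ K := .of_separable_splitting_field hirr.separable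
  have : MulAction.IsPretransitive Gal(K/ℚ) (f.rootSet (𝓞 K)) :=
    isPretransitive_rootSet hf hirr
  exact ⟨injective_toPermHom_rootSet hf,
    (splits_map_ringOfIntegers hf).surjective_toPermHom_of_iSup_inertia_eq_top
      (fun m ↦ (ncard_rootSet_le f (𝓞 K)).trans (hcoll m)) iSup_inertia_eq_top⟩

theorem nonempty_galoisGroup_mulEquiv_perm_natDegree (hf : f.Monic)
    (hirr : Irreducible (f.map (algebraMap ℤ ℚ)))
    (hcoll : ∀ m : MaximalSpectrum (𝓞 K),
      f.natDegree ≤ (f.rootSet (𝓞 K ⧸ m.asIdeal)).ncard + 1) :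
    Nonempty (Gal(K/ℚ) ≃* Equiv.Perm (Fin f.natDegree)) := by
  have card_rootSet : Nat.card (f.rootSet (𝓞 K)) = f.natDegree :=
    (Nat.card_coe_set_eq _).trans <| ncard_rootSet_eq_natDegree (F := ℚ) (K := K) hf
      hirr.separable (IsSplittingField.splits K _)
  exact ⟨(MulEquiv.ofBijective _
    (bijective_toPermHom_rootSet_ringOfIntegers hf hirr hcoll)).trans
      (Finite.equivFinOfCardEq card_rootSet).permCongrHom⟩

end NumberField

theorem multiset_card_le_card_toFinset_add_one {α : Type*} [DecidableEq α] {s : Multiset α} (c : α)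
    (hc : s.count c ≤ 2) (h : ∀ a ≠ c, s.count a ≤ 1) : s.card ≤ s.toFinset.card + 1 := by
  have le_dedup_add : s ≤ s.dedup + {c} := by
    refine Multiset.le_iff_count.mpr fun a ↦ ?_
    rw [Multiset.count_add, Multiset.count_dedup, Multiset.count_singleton]
    grind [Multiset.count_eq_zero]
  calc s.card ≤ (s.dedup + {c}).card := Multiset.card_le_card le_dedup_add
    _ = s.toFinset.card + 1 := Multiset.card_add _ _

section BringJerrard

/-- The trinomial `X ^ n + a X + b` in Bring–Jerrard form. The case `a = b = -1` is the Selmer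
polynomial `X ^ n - X - 1`, whose splitting field realizes the symmetric group. -/
noncomputable def bringJerrard {R : Type*} [Semiring R] (n : ℕ) (a b : R) : R[X] :=
  X ^ n + C a * X + C b

namespace bringJerrard

section Semiring

variable {R S : Type*} [Semiring R] [Semiring S] {n : ℕ}

theorem eq_trinomial (n : ℕ) (a b : R) : bringJerrard n a b = trinomial 0 1 n b a 1 := by
  simp only [bringJerrard, trinomial, C_1, pow_zero, pow_one, mul_one, one_mul]
  abel

theorem map_eq (φ : R →+* S) (n : ℕ) (a b : R) :
    (bringJerrard n a b).map φ = bringJerrard n (φ a) (φ b) := by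
  simp [bringJerrard]

theorem monic (hn : 1 < n) (a b : R) : (bringJerrard n a b).Monic := by
  rw [eq_trinomial]
  exact trinomial_monic zero_lt_one hn

theorem natDegree_eq [Nontrivial R] (hn : 1 < n) (a b : R) :
    (bringJerrard n a b).natDegree = n := by
  rw [eq_trinomial]
  exact trinomial_natDegree zero_lt_one hn one_ne_zero

end Semiring

section Field

variable {k : Type*} [Field k] {n : ℕ} {a b r : k}

theorem eval_eq_zero_and_eval_derivative_eq_zero
    (h : 1 < (bringJerrard n a b).rootMultiplicity r) :
    r ^ n + a * r + b = 0 ∧ n * r ^ (n - 1) + a = 0 := by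
  have ne_zero : bringJerrard n a b ≠ 0 := by
    intro h0
    simp [h0] at h
  simpa [bringJerrard, derivative_X_pow] using (one_lt_rootMultiplicity_iff_isRoot ne_zero).mp h

theorem mul_eq_of_one_lt_rootMultiplicity (h : 1 < (bringJerrard n a b).rootMultiplicity r) :
    a * (n - 1) * r = -(n * b) := by
  obtain ⟨eval_eq, eval_derivative_eq⟩ := eval_eq_zero_and_eval_derivative_eq_zero h
  have pow_eq : (n : k) * r ^ (n - 1) * r = n * r ^ n := by
    cases n <;> simp [pow_succ, mul_assoc]
  linear_combination n * eval_eq - r * eval_derivative_eq + pow_eq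

theorem ne_zero_of_one_lt_rootMultiplicity (ha : a ≠ 0) (hb : b ≠ 0)
    (h : 1 < (bringJerrard n a b).rootMultiplicity r) :
    (n : k) ≠ 0 ∧ (n : k) - 1 ≠ 0 ∧ r ≠ 0 := by
  have n_ne_zero : (n : k) ≠ 0 := by
    intro hn
    have := (eval_eq_zero_and_eval_derivative_eq_zero h).2
    simp [hn, ha] at this
  have prod_ne_zero : a * (n - 1) * r ≠ 0 := by
    simp [mul_eq_of_one_lt_rootMultiplicity h, n_ne_zero, hb]
  exact ⟨n_ne_zero, right_ne_zero_of_mul (left_ne_zero_of_mul prod_ne_zero),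
    right_ne_zero_of_mul prod_ne_zero⟩

theorem rootMultiplicity_le_two (ha : a ≠ 0) (hb : b ≠ 0) (r : k) :
    (bringJerrard n a b).rootMultiplicity r ≤ 2 := by
  by_contra! h
  obtain ⟨n_ne_zero, n_sub_one_ne_zero, r_ne_zero⟩ :=
    ne_zero_of_one_lt_rootMultiplicity ha hb (one_lt_two.trans h)
  obtain ⟨m, rfl⟩ : ∃ m, n = m + 1 :=
    Nat.exists_eq_succ_of_ne_zero fun hn ↦ n_ne_zero (by simp [hn])
  have eval_second_derivative : ((m + 1 : ℕ) : k) * (m * r ^ (m - 1)) = 0 := by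
    simpa [bringJerrard, derivative_X_pow] using
      isRoot_iterate_derivative_of_lt_rootMultiplicity h
  have m_ne_zero : (m : k) ≠ 0 := by simpa using n_sub_one_ne_zero
  exact mul_ne_zero n_ne_zero (mul_ne_zero m_ne_zero (pow_ne_zero _ r_ne_zero))
    eval_second_derivative

theorem natDegree_le_card_toFinset_roots_add_one [DecidableEq k] (ha : a ≠ 0) (hb : b ≠ 0)
    (h : (bringJerrard n a b).Splits) :
    (bringJerrard n a b).natDegree ≤ (bringJerrard n a b).roots.toFinset.card + 1 := by
  rw [h.natDegree_eq_card_roots]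
  refine multiset_card_le_card_toFinset_add_one (-(n * b) / (a * (n - 1))) ?_ fun r hr ↦ ?_
  · exact (count_roots _).trans_le (rootMultiplicity_le_two ha hb _)
  · rw [count_roots]
    contrapose! hr
    have n_sub_one_ne_zero := (ne_zero_of_one_lt_rootMultiplicity ha hb hr).2.1
    rw [eq_div_iff (mul_ne_zero ha n_sub_one_ne_zero), mul_comm]
    exact mul_eq_of_one_lt_rootMultiplicity hr

end Field

theorem natDegree_le_ncard_rootSet_add_one {R k : Type*} [CommRing R] [Field k] [Algebra R k]
    {n : ℕ} (hn : 1 < n) {a b : R} (ha : IsUnit a) (hb : IsUnit b)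
    (h : ((bringJerrard n a b).map (algebraMap R k)).Splits) :
    (bringJerrard n a b).natDegree ≤ ((bringJerrard n a b).rootSet k).ncard + 1 := by
  classical
  rw [← (monic hn a b).natDegree_map (algebraMap R k), rootSet, Set.ncard_coe_finset, aroots,
    map_eq]
  rw [map_eq] at h
  exact natDegree_le_card_toFinset_roots_add_one (ha.map (algebraMap R k)).ne_zero
    (hb.map (algebraMap R k)).ne_zero h

theorem nonempty_galoisGroup_mulEquiv_perm {n : ℕ} (hn : 1 < n) {a b : ℤ} (ha : IsUnit a)
    (hb : IsUnit b) (hirr : Irreducible ((bringJerrard n a b).map (algebraMap ℤ ℚ)))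
    {K : Type*} [Field K] [NumberField K]
    [IsSplittingField ℚ K ((bringJerrard n a b).map (algebraMap ℤ ℚ))] :
    Nonempty (Gal(K/ℚ) ≃* Equiv.Perm (Fin n)) := by
  have splits := splits_map_ringOfIntegers (K := K) (monic hn a b)
  rw [← natDegree_eq hn a b]
  refine nonempty_galoisGroup_mulEquiv_perm_natDegree (monic hn a b) hirr fun m ↦ ?_
  let _ : Field (𝓞 K ⧸ m.asIdeal) := Ideal.Quotient.field m.asIdeal
  exact natDegree_le_ncard_rootSet_add_one hn ha hb
    (splits.of_algHom (Ideal.Quotient.mkₐ ℤ m.asIdeal))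

end bringJerrard

end BringJerrard

/-- **Hilbert.** For every natural number `n ≥ 1`, the symmetric group `Sₙ` occurs as a
Galois group over `ℚ`: there is a finite Galois extension `M/ℚ` with
`Gal(M/ℚ) ≃ Sₙ`. -/
theorem symmetricGroup_occurs_as_galoisGroup_over_rat (n : ℕ) (hn : 1 ≤ n) :
    ∃ (M : Type) (_ : Field M) (_ : Algebra ℚ M),
      FiniteDimensional ℚ M ∧ IsGalois ℚ M ∧
        Nonempty ((M ≃ₐ[ℚ] M) ≃* Equiv.Perm (Fin n)) := by
  rcases hn.eq_or_lt with rfl | hn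
  · have : Unique Gal(ℚ/ℚ) := uniqueOfSubsingleton 1
    exact ⟨ℚ, inferInstance, inferInstance, inferInstance, inferInstance, ⟨.ofUnique⟩⟩
  · let f : ℚ[X] := (bringJerrard n (-1) (-1) : ℤ[X]).map (algebraMap ℤ ℚ)
    have irreducible : Irreducible f := by
      simpa [f, bringJerrard, sub_eq_add_neg] using X_pow_sub_X_sub_one_irreducible_rat hn.ne'
    have : NumberField f.SplittingField := ⟨⟩
    -- The `ℚ`-algebra structure is here the one coming from characteristic zero.
    have : IsSplittingField ℚ f.SplittingField f := by
      convert! IsSplittingField.splittingField f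
    exact ⟨f.SplittingField, inferInstance, inferInstance, inferInstance,
      .of_separable_splitting_field irreducible.separable,
      bringJerrard.nonempty_galoisGroup_mulEquiv_perm hn isUnit_neg_one isUnit_neg_one irreducible⟩
end

section
/- For every natural number n ≥ 1, the alternating group Aₙ occurs as a Galois group over ℚ; that is, there exists a finite Galois extension M/ℚ with Gal(M/ℚ) isomorphic to the alternating group on n letters. -/
/-!
Take a cover of the projective line by itself of degree `n` with three branch points, one branch
cycle being a 3-cycle. Ramification at the three places only is expressed by a differential equation
`A F' - B F = κ X ^ k (X - γ) ^ 2`, from which the discriminant of the fibre `F = F_T` over `T` can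
be read off as `ε κ ^ m T ^ k (D + T) ^ 2` with a sign `ε`. Two such covers, one for each parity
of `n`, have `k` odd and `m` even.

Instead of appealing to Hilbert's irreducibility theorem, `T` is specialised explicitly.
* With `T = ε S ^ 2` the discriminant is a square, so that the Galois group is contained in `Aₙ`.
* `S` is divisible exactly once by suitable primes, which determines the Newton polygon of `F`
  there; the valuations of the roots then force the group to be primitive.
* `S` is chosen modulo the square of a further prime `r` so that `r` divides `D + T` exactly once.
  Then `r` ramifies, with a 3-cycle in the inertia group.

By Jordan's theorem a primitive group containing a 3-cycle contains `Aₙ`.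
-/

open Polynomial NumberField
open scoped Pointwise

namespace HilbertAlternating

section Discriminant

lemma resultant_of_natDegree_le {R : Type*} [CommRing R] {f g : R[X]} {n : ℕ} (hf : f.Monic)
    (hg : g.natDegree ≤ n) : resultant f g f.natDegree n = resultant f g := by
  obtain ⟨k, rfl⟩ := Nat.exists_eq_add_of_le hg
  rw [resultant_add_right_deg _ _ _ _ _ le_rfl, hf.coeff_natDegree, one_pow, one_mul]

lemma resultant_mul_right_of_monic {R : Type*} [CommRing R] {f : R[X]} (hf : f.Monic)
    (g h : R[X]) : resultant f (g * h) = resultant f g * resultant f h := by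
  rw [← resultant_of_natDegree_le hf natDegree_mul_le, resultant_mul_right _ _ _ _ le_rfl]

lemma resultant_add_mul_right_of_monic {R : Type*} [CommRing R] {f : R[X]} (hf : f.Monic)
    (g p : R[X]) : resultant f (g + f * p) = resultant f g := by
  have hg : g.natDegree ≤ g.natDegree + (p.natDegree + f.natDegree) := by lia
  have hfp : (f * p).natDegree ≤ g.natDegree + (p.natDegree + f.natDegree) :=
    natDegree_mul_le.trans (by lia)
  rw [← resultant_of_natDegree_le hf (natDegree_add_le_of_degree_le hg hfp),
    resultant_add_mul_right _ _ _ _ _ (by lia) le_rfl, resultant_of_natDegree_le hf hg]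

lemma resultant_derivative_of_monic {R : Type*} [CommRing R] {f : R[X]} (hf : f.Monic) :
    resultant f (derivative f) = (-1) ^ (f.natDegree * (f.natDegree - 1) / 2) * f.discr := by
  nontriviality R
  rcases f.natDegree.eq_zero_or_pos with h | h
  · have h1 : (1 : R[X]).discr = 1 := by rw [← C_1, discr_C]
    simp [hf.natDegree_eq_zero.1 h, h1]
  · rw [← resultant_of_natDegree_le hf (natDegree_derivative_le f),
      resultant_deriv (natDegree_pos_iff_degree_pos.1 h), hf.leadingCoeff, mul_one]

lemma discr_map_of_monic {R S : Type*} [CommRing R] [CommRing S] (φ : R →+* S) {f : R[X]}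
    (hf : f.Monic) : (f.map φ).discr = φ f.discr := by
  nontriviality S
  have h : resultant (f.map φ) (derivative (f.map φ)) = φ (resultant f (derivative f)) := by
    rw [← resultant_of_natDegree_le (hf.map φ) (natDegree_derivative_le _), derivative_map,
      resultant_map_map, hf.natDegree_map, resultant_of_natDegree_le hf (natDegree_derivative_le f)]
  rw [resultant_derivative_of_monic hf, resultant_derivative_of_monic (hf.map φ),
    hf.natDegree_map, map_mul, map_pow, map_neg, map_one] at h
  exact (IsUnit.pow _ isUnit_neg_one).mul_left_cancel h

/-- Comparing resultants with `f` on both sides of the differential equation. -/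
lemma resultant_mul_discr_of_derivative_eq {R : Type*} [CommRing R] {f A B : R[X]} {κ γ : R}
    {k : ℕ} (hf : f.Monic)
    (h : A * derivative f - B * f = C κ * X ^ k * (X - C γ) ^ 2) :
    resultant f A * ((-1) ^ (f.natDegree * (f.natDegree - 1) / 2) * f.discr) =
      κ ^ f.natDegree * ((-1) ^ (f.natDegree * k) * f.coeff 0 ^ k) * f.eval γ ^ 2 := by
  nontriviality R
  have hX : resultant f (X ^ k) = (-1) ^ (f.natDegree * k) * f.coeff 0 ^ k := by
    simpa using resultant_X_pow_right f _ k le_rfl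
  have hγ : resultant f ((X - C γ) ^ 2) = f.eval γ ^ 2 := by
    have := resultant_X_sub_C_pow_right f γ _ 2 le_rfl
    rw [resultant_of_natDegree_le hf (by simp [natDegree_pow'])] at this
    simpa [pow_mul'] using this
  rw [← resultant_derivative_of_monic hf, ← resultant_mul_right_of_monic hf,
    ← resultant_add_mul_right_of_monic hf _ (-B),
    show A * derivative f + f * -B = A * derivative f - B * f by ring, h,
    resultant_mul_right_of_monic hf, resultant_mul_right_of_monic hf, hX, hγ]
  simp

lemma eval_derivative_prod_X_sub_C {ι R : Type*} [CommRing R] [Fintype ι] [DecidableEq ι]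
    (v : ι → R) (i : ι) :
    eval (v i) (derivative (∏ j, (X - C (v j)))) = ∏ j ∈ Finset.univ.erase i, (v i - v j) := by
  rw [derivative_prod_finset, eval_finsetSum, Finset.sum_eq_single i]
  · simp [eval_prod]
  · intro j _ hj
    rw [eval_mul, eval_prod, Finset.prod_eq_zero (i := i) (by simp [hj.symm]) (by simp), zero_mul]
  · simp

lemma sum_card_Ioi (n : ℕ) : ∑ i : Fin n, (Finset.Ioi i).card = n * (n - 1) / 2 := by
  simp_rw [Fin.card_Ioi]
  rw [← Finset.sum_range_id, Finset.sum_range fun i => i, ← Equiv.sum_comp Fin.revPerm]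
  refine Finset.sum_congr rfl fun i _ => ?_
  simp only [Fin.revPerm_apply, Fin.val_rev]
  lia

lemma prod_prod_erase_sub {n : ℕ} {R : Type*} [CommRing R] (v : Fin n → R) :
    ∏ i, ∏ j ∈ Finset.univ.erase i, (v i - v j) =
      (-1) ^ (n * (n - 1) / 2) * (Matrix.vandermonde v).det ^ 2 := by
  have h := Finset.prod_prod_Ioi_mul_eq_prod_prod_off_diag fun i j : Fin n => v j - v i
  simp_rw [← Finset.compl_singleton, ← h, Matrix.det_vandermonde, ← Finset.prod_pow,
    ← sum_card_Ioi, ← Finset.prod_pow_eq_pow_sum, ← Finset.prod_const, ← Finset.prod_mul_distrib]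
  exact Finset.prod_congr rfl fun i _ => Finset.prod_congr rfl fun j _ => by ring

lemma discr_prod_X_sub_C {n : ℕ} {R : Type*} [CommRing R] [IsDomain R] (v : Fin n → R) :
    (∏ i, (X - C (v i))).discr = (Matrix.vandermonde v).det ^ 2 := by
  have hm : (∏ i, (X - C (v i))).Monic := monic_prod_X_sub_C v _
  have hn : (∏ i, (X - C (v i))).natDegree = n := by simp
  have h := resultant_derivative_of_monic hm
  rw [resultant_prod_left _ _ _ _ (by simp) le_rfl, hn] at h
  simp only [natDegree_X_sub_C, resultant_X_sub_C_left _ _ _ le_rfl,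
    eval_derivative_prod_X_sub_C, prod_prod_erase_sub] at h
  exact ((IsUnit.pow _ isUnit_neg_one).mul_left_cancel h).symm

/-- An automorphism multiplies the Vandermonde determinant of the roots, a square root of the
discriminant, by the sign of the permutation it induces. -/
lemma sign_toPerm_eq_one {K L ι : Type*} [Field K] [NeZero (2 : K)] [Field L] [Algebra K L]
    [Fintype ι] [DecidableEq ι] [MulAction Gal(L/K) ι] {a : ι → L} (ha : Function.Injective a)
    (hsmul : ∀ (σ : Gal(L/K)) i, a (σ • i) = σ (a i)) {f : K[X]}
    (hf : f.map (algebraMap K L) = ∏ i, (X - C (a i))) (hd : IsSquare f.discr) (σ : Gal(L/K)) :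
    Equiv.Perm.sign (MulAction.toPerm σ : Equiv.Perm ι) = 1 := by
  let e : Fin (Fintype.card ι) ≃ ι := (Fintype.equivFin ι).symm
  let τ : Equiv.Perm (Fin (Fintype.card ι)) := e.symm.permCongr (MulAction.toPerm σ)
  set D : L := (Matrix.vandermonde (a ∘ e)).det
  have hD0 : D ≠ 0 := Matrix.det_vandermonde_ne_zero_iff.2 (ha.comp e.injective)
  have hD2 : D ^ 2 = algebraMap K L f.discr := by
    have hm : f.Monic := monic_of_injective (algebraMap K L).injective
      (hf ▸ monic_prod_X_sub_C a _)
    rw [← discr_map_of_monic _ hm, hf, ← e.prod_comp]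
    exact (discr_prod_X_sub_C (a ∘ e)).symm
  have hfix : σ D = D := by
    obtain ⟨q, hq⟩ := hd
    rw [hq, map_mul, ← sq] at hD2
    rcases sq_eq_sq_iff_eq_or_eq_neg.1 hD2 with h | h <;> simp [h]
  have hsign : σ D = Equiv.Perm.sign τ * D := by
    rw [← Matrix.det_permute]
    refine (AlgEquiv.map_det σ _).trans (congrArg _ ?_)
    ext i j
    simp [τ, Matrix.vandermonde_apply, hsmul]
  have hτ : Equiv.Perm.sign τ = 1 := by
    refine (Int.units_eq_one_or _).resolve_right fun h => ?_
    have h2 : (2 : L) ≠ 0 := by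
      rw [← map_ofNat (algebraMap K L) 2]
      exact (_root_.map_ne_zero _).2 two_ne_zero
    refine mul_ne_zero h2 hD0 ?_
    rw [h, hfix] at hsign
    push_cast at hsign
    linear_combination hsign
  rwa [Equiv.Perm.sign_permCongr] at hτ

end Discriminant

section LocalAnalysis

lemma rootMultiplicity_le_of_derivative_eq {K : Type*} [CommRing K] {f h A B : K[X]}
    (hh : h ≠ 0) (hid : A * derivative f - B * f = h) (x : K) :
    f.rootMultiplicity x ≤ h.rootMultiplicity x + 1 := by
  rw [← Nat.sub_le_iff_le_add, le_rootMultiplicity_iff hh, ← hid]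
  have hf := pow_rootMultiplicity_dvd f x
  exact dvd_sub ((pow_sub_one_dvd_derivative_of_pow_dvd hf).mul_left _)
    (((pow_dvd_pow _ (Nat.sub_le _ 1)).trans hf).mul_left _)

lemma rootMultiplicity_C_mul_X_pow_mul {K : Type*} [CommRing K] [IsDomain K] [DecidableEq K]
    {κ γ x : K} (hκ : κ ≠ 0) (hx : x ≠ 0) (k : ℕ) :
    (C κ * X ^ k * (X - C γ) ^ 2).rootMultiplicity x = if x = γ then 2 else 0 := by
  have hX : ¬ (X ^ k : K[X]).IsRoot x := by simp [hx]
  have hC : ¬ (C κ : K[X]).IsRoot x := by simp [hκ]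
  have hγ := X_sub_C_ne_zero γ
  have h0 : C κ * X ^ k ≠ 0 := mul_ne_zero (C_ne_zero.2 hκ) (pow_ne_zero k X_ne_zero)
  rw [rootMultiplicity_mul (mul_ne_zero h0 (pow_ne_zero 2 hγ)), rootMultiplicity_mul h0,
    rootMultiplicity_eq_zero hX, rootMultiplicity_eq_zero hC, sq,
    rootMultiplicity_mul (mul_ne_zero hγ hγ), rootMultiplicity_X_sub_C]
  split_ifs <;> rfl

lemma card_filter_eq_rootMultiplicity {ι K : Type*} [CommRing K] [IsDomain K] [DecidableEq K]
    [Fintype ι] (a : ι → K) (x : K) :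
    (Finset.univ.filter fun i => a i = x).card = (∏ i, (X - C (a i))).rootMultiplicity x := by
  have h : (∏ i, (X - C (a i))).roots = Finset.univ.val.map a := by
    rw [← roots_multiset_prod_X_sub_C (Finset.univ.val.map a), Multiset.map_map]
    rfl
  rw [← count_roots, h, Multiset.count_map, Finset.card_def, Finset.filter_val]
  simp_rw [eq_comm]

lemma card_filter_le_of_derivative_eq {ι K : Type*} [CommRing K] [IsDomain K] [DecidableEq K]
    [Fintype ι] {a : ι → K} {A B : K[X]} {κ γ : K} {k : ℕ}
    (hid : A * derivative (∏ i, (X - C (a i))) - B * ∏ i, (X - C (a i)) =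
      C κ * X ^ k * (X - C γ) ^ 2) (hκ : κ ≠ 0) {x : K} (hx : x ≠ 0) :
    (Finset.univ.filter fun i => a i = x).card ≤ if x = γ then 3 else 1 := by
  have hne : C κ * X ^ k * (X - C γ) ^ 2 ≠ 0 :=
    mul_ne_zero (mul_ne_zero (C_ne_zero.2 hκ) (pow_ne_zero k X_ne_zero))
      (pow_ne_zero 2 (X_sub_C_ne_zero γ))
  have h := rootMultiplicity_le_of_derivative_eq hne hid x
  rw [rootMultiplicity_C_mul_X_pow_mul hκ hx, ← card_filter_eq_rootMultiplicity] at h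
  split_ifs at h ⊢ <;> lia

lemma eval_mem_sq_of_derivative_mem {ι S : Type*} [CommRing S] [Fintype ι] {a : ι → S}
    {P : Ideal S} [P.IsPrime] {γ : S} (h0 : (∏ i, (X - C (a i))).eval γ ∈ P)
    (h1 : (derivative (∏ i, (X - C (a i)))).eval γ ∈ P) :
    (∏ i, (X - C (a i))).eval γ ∈ P ^ 2 := by
  classical
  obtain ⟨i, -, hi⟩ : ∃ i ∈ Finset.univ, γ - a i ∈ P := by
    simpa [eval_prod, Ideal.IsPrime.prod_mem_iff] using h0
  rw [← Finset.mul_prod_erase _ _ (Finset.mem_univ i)] at h1 ⊢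
  set g := ∏ j ∈ Finset.univ.erase i, (X - C (a j))
  have hg : g.eval γ ∈ P := by
    simp only [derivative_mul, derivative_X_sub_C, one_mul, eval_add, eval_mul, eval_sub, eval_X,
      eval_C] at h1
    exact (Ideal.add_mem_iff_left _ (P.mul_mem_right _ hi)).1 h1
  rw [eval_mul, sq]
  exact Ideal.mul_mem_mul (by simpa using hi) hg

lemma natCast_mem_sq {S : Type*} [CommRing S] {P : Ideal S} {r : ℕ} (hr : r.Prime)
    (hrP : (r : S) ∈ P) {z : ℤ} (h1 : (r : ℤ) ∣ z) (h2 : ¬ (r : ℤ) ^ 2 ∣ z)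
    (hz : (z : S) ∈ P ^ 2) : (r : S) ∈ P ^ 2 := by
  obtain ⟨u, rfl⟩ := h1
  have hru : ¬ (r : ℤ) ∣ u := fun ⟨w, hw⟩ => h2 ⟨w, by rw [hw]; ring⟩
  obtain ⟨w, v, hwv⟩ := (Nat.prime_iff_prime_int.1 hr).coprime_iff_not_dvd.2 hru
  have h : (r : S) = w * (r * r) + v * ((r * u : ℤ) : S) := by
    have := congrArg (fun t : ℤ => ((t * r : ℤ) : S)) hwv
    push_cast at this ⊢
    linear_combination -this
  rw [h]
  exact add_mem (Ideal.mul_mem_left _ _ (sq P ▸ Ideal.mul_mem_mul hrP hrP))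
    (Ideal.mul_mem_left _ _ hz)

lemma card_support_le_three_of_mem_inertia {G S ι : Type*} [Group G] [CommRing S]
    [MulSemiringAction G S] [Fintype ι] [DecidableEq ι] [MulAction G ι] {P : Ideal S} [P.IsPrime]
    {a : ι → S} (hsmul : ∀ (σ : G) i, a (σ • i) = σ • a i) {A B : S[X]} {κ γ : S} {k : ℕ}
    (hid : A * derivative (∏ i, (X - C (a i))) - B * ∏ i, (X - C (a i)) =
      C κ * X ^ k * (X - C γ) ^ 2) (hκ : κ ∉ P) (h0 : (∏ i, (X - C (a i))).eval 0 ∉ P)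
    {σ : G} (hσ : σ ∈ P.inertia G) :
    (MulAction.toPerm σ : Equiv.Perm ι).support.card ≤ 3 := by
  classical
  let π := Ideal.Quotient.mk P
  have hidP := congrArg (Polynomial.map π) hid
  simp only [Polynomial.map_sub, Polynomial.map_mul, Polynomial.map_pow, Polynomial.map_prod,
    map_X, map_C, ← derivative_map] at hidP
  have hκP : π κ ≠ 0 := fun h => hκ (Ideal.Quotient.eq_zero_iff_mem.1 h)
  have haP (i) : π (a i) ≠ 0 := fun h => h0 <| by
    rw [eval_prod]
    refine Ideal.mem_of_dvd _ (Finset.dvd_prod_of_mem _ (Finset.mem_univ i)) ?_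
    simpa using Ideal.Quotient.eq_zero_iff_mem.1 h
  have hcongr (i) (hi : σ • i ≠ i) : π (a i) = π γ := by
    have h := card_filter_le_of_derivative_eq hidP hκP (haP i)
    by_contra hγ
    rw [if_neg hγ, Finset.card_le_one] at h
    refine hi (h _ ?_ _ ?_) <;> simp only [Finset.mem_filter_univ]
    rw [hsmul]
    exact Ideal.Quotient.mk_eq_mk_iff_sub_mem _ _ |>.2 (hσ (a i))
  have hle : (MulAction.toPerm σ : Equiv.Perm ι).support ⊆
      Finset.univ.filter fun i => π (a i) = π γ := fun i hi => by
    simpa using hcongr i (by simpa using hi)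
  refine (Finset.card_le_card hle).trans ?_
  by_cases hγ : π γ = 0
  · simp [hγ, haP]
  · simpa using card_filter_le_of_derivative_eq hidP hκP hγ

lemma isThreeCycle_of_card_support_le_three {ι : Type*} [Fintype ι] [DecidableEq ι]
    {τ : Equiv.Perm ι} (h1 : τ ≠ 1) (hsign : τ.sign = 1) (hcard : τ.support.card ≤ 3) :
    τ.IsThreeCycle := by
  have h2 : τ.support.card ≠ 2 := fun h => by
    have := (Equiv.Perm.card_support_eq_two.1 h).sign_eq
    rw [hsign] at this
    exact absurd this (by decide)
  have := Equiv.Perm.one_lt_card_support_of_ne_one h1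
  exact card_support_eq_three_iff.1 (by lia)

variable {L : Type*} [Field L] [NumberField L] [IsGalois ℚ L]

lemma exists_mem_inertia_ne_one {r : ℕ} (hr : r.Prime) (P : Ideal (𝓞 L)) [P.IsPrime]
    (hrP : (r : 𝓞 L) ∈ P ^ 2) : ∃ σ ∈ P.inertia Gal(L/ℚ), σ ≠ 1 := by
  have hp0 : Ideal.span {(r : ℤ)} ≠ ⊥ := by simp [hr.ne_zero]
  have : (Ideal.span {(r : ℤ)}).IsPrime := by
    rw [Ideal.span_singleton_prime (by exact_mod_cast hr.ne_zero)]
    exact Nat.prime_iff_prime_int.1 hr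
  have : (Ideal.span {(r : ℤ)}).IsMaximal := this.isMaximal hp0
  have : P.LiesOver (Ideal.span {(r : ℤ)}) :=
    ⟨this.eq_of_le (Ideal.comap_ne_top _ ‹P.IsPrime›.ne_top) (by
      simpa [Ideal.span_le] using Ideal.pow_le_self two_ne_zero hrP)⟩
  have : Finite (ℤ ⧸ Ideal.span {(r : ℤ)}) := Ring.HasFiniteQuotients.finiteQuotient hp0
  have : Finite (Ideal.span {(r : ℤ)}).ResidueField :=
    Finite.of_surjective _ (Ideal.bijective_algebraMap_quotient_residueField _).2
  by_contra! h
  have hcard := Ideal.card_inertia_eq_ramificationIdxIn (G := Gal(L/ℚ)) (Ideal.span {(r : ℤ)}) P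
  rw [(Subgroup.eq_bot_iff_forall _).2 h, Subgroup.card_bot,
    Ideal.ramificationIdxIn_eq_ramificationIdx (Ideal.span {(r : ℤ)}) P Gal(L/ℚ),
    ← Ideal.ramificationIdx'_eq_ramificationIdx _ _ hp0] at hcard
  refine (Ideal.ramificationIdx'_ne_one_iff ?_).2 ?_ hcard.symm
  · exact Ideal.map_le_iff_le_comap.2 (Ideal.over_def P (Ideal.span {(r : ℤ)})).le
  · simpa [Ideal.map_span, Ideal.span_le] using hrP

/-- The differential equation makes `γ` a multiple root of `F` modulo `r`. As `r` divides `F(γ)`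
exactly once, it ramifies, and inertia moves only roots reducing to `γ`, of which there are at most
three; by parity a nontrivial element is a 3-cycle. -/
theorem exists_isThreeCycle {ι : Type*} [Fintype ι] [DecidableEq ι] [MulAction Gal(L/ℚ) ι]
    [FaithfulSMul Gal(L/ℚ) ι] {a : ι → 𝓞 L} (hsmul : ∀ (σ : Gal(L/ℚ)) i, a (σ • i) = σ • a i)
    {F A B : ℤ[X]} (hF : F.map (algebraMap ℤ (𝓞 L)) = ∏ i, (X - C (a i)))
    (hsign : ∀ σ : Gal(L/ℚ), Equiv.Perm.sign (MulAction.toPerm σ : Equiv.Perm ι) = 1)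
    {κ γ : ℤ} {k : ℕ} (hid : A * derivative F - B * F = C κ * X ^ k * (X - C γ) ^ 2)
    {r : ℕ} (hr : r.Prime) (hκ : ¬ (r : ℤ) ∣ κ) (h0 : ¬ (r : ℤ) ∣ F.eval 0)
    (hA : ¬ (r : ℤ) ∣ A.eval γ) (h1 : (r : ℤ) ∣ F.eval γ) (h2 : ¬ (r : ℤ) ^ 2 ∣ F.eval γ) :
    ∃ σ : Gal(L/ℚ), (MulAction.toPerm σ : Equiv.Perm ι).IsThreeCycle := by
  have : (Ideal.span {(r : ℤ)}).IsMaximal :=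
    PrincipalIdealRing.isMaximal_of_irreducible (Nat.prime_iff_prime_int.1 hr).irreducible
  obtain ⟨P, hP, hPr⟩ := Ideal.exists_maximal_ideal_liesOver_of_isIntegral
    (S := 𝓞 L) (Ideal.span {(r : ℤ)})
  have hmem (z : ℤ) : algebraMap ℤ (𝓞 L) z ∈ P ↔ (r : ℤ) ∣ z := by
    rw [← Ideal.mem_span_singleton, Ideal.over_def P (Ideal.span {(r : ℤ)}), Ideal.mem_comap]
  have heval (g : ℤ[X]) (z : ℤ) :
      (g.map (algebraMap ℤ (𝓞 L))).eval (algebraMap ℤ (𝓞 L) z) ∈ P ↔ (r : ℤ) ∣ g.eval z := by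
    rw [eval_map_apply, hmem]
  have hid' := congrArg (Polynomial.map (algebraMap ℤ (𝓞 L))) hid
  simp only [Polynomial.map_sub, Polynomial.map_mul, Polynomial.map_pow, map_X, map_C,
    ← derivative_map] at hid'
  have hFγ : (F.map (algebraMap ℤ (𝓞 L))).eval (algebraMap ℤ (𝓞 L) γ) ∈ P := (heval F γ).2 h1
  have hF'γ : (derivative (F.map (algebraMap ℤ (𝓞 L)))).eval (algebraMap ℤ (𝓞 L) γ) ∈ P := by
    have h := congrArg (eval (algebraMap ℤ (𝓞 L) γ)) hid'
    simp only [eval_sub, eval_mul, eval_pow, eval_X, eval_C, sub_self, zero_pow two_ne_zero,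
      mul_zero, sub_eq_zero] at h
    refine (hP.isPrime.mem_or_mem (h ▸ P.mul_mem_left _ hFγ)).resolve_left ?_
    rwa [heval]
  rw [hF] at hFγ hF'γ hid'
  have hsq := eval_mem_sq_of_derivative_mem hFγ hF'γ
  rw [← hF, eval_map_apply] at hsq
  have hrP : (r : 𝓞 L) ∈ P := by simpa using (hmem r).2 dvd_rfl
  obtain ⟨σ, hσ, hσ1⟩ := exists_mem_inertia_ne_one hr P
    (natCast_mem_sq hr hrP h1 h2 (by simpa using hsq))
  refine ⟨σ, isThreeCycle_of_card_support_le_three ?_ (hsign σ)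
    (card_support_le_three_of_mem_inertia hsmul hid' (by rwa [hmem]) ?_ hσ)⟩
  · exact fun h => hσ1 <| MulAction.toPerm_injective <|
      h.trans (map_one (MulAction.toPermHom _ _)).symm
  · rwa [← hF, ← map_zero (algebraMap ℤ (𝓞 L)), heval]

end LocalAnalysis

section BlocksAndFixedPoints

variable {G X : Type*} [Group G] [MulAction G X]

lemma isPretransitive_of_card_dvd_ncard [Finite X] [Nonempty X]
    (h : ∀ B : Set X, (∀ g : G, g • B ⊆ B) → Nat.card X ∣ B.ncard) :
    MulAction.IsPretransitive G X := by
  obtain ⟨x⟩ := ‹Nonempty X›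
  rw [MulAction.isPretransitive_iff_orbit_eq_univ x]
  have hpos : 0 < (MulAction.orbit G x).ncard :=
    (Set.ncard_pos (Set.toFinite _)).2 ⟨x, MulAction.mem_orbit_self x⟩
  refine Set.eq_of_subset_of_ncard_le (Set.subset_univ _) ?_
  rw [Set.ncard_univ]
  exact Nat.le_of_dvd hpos (h _ fun g => MulAction.smul_orbit_subset g x)

lemma dvd_mul_ncard_sub_one_of_isBlock {D : Subgroup G} {x : X} {m s : ℕ}
    (hfix : ∀ g ∈ D, g • x = x)
    (hdvd : ∀ B : Set X, B ⊆ {x}ᶜ → (∀ g ∈ D, g • B ⊆ B) → m ∣ s * B.ncard)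
    {B : Set X} (hx : x ∈ B) (hB : MulAction.IsBlock G B) : m ∣ s * (B.ncard - 1) := by
  rw [← Set.ncard_sdiff_singleton_of_mem hx]
  refine hdvd _ (fun y hy => hy.2) fun g hg => ?_
  rw [Set.smul_set_sdiff, Set.smul_set_singleton, hfix g hg,
    hB.smul_eq_of_mem hx (by rwa [hfix g hg])]

end BlocksAndFixedPoints

section NewtonPolygon

variable {K : Type*} [NormedField K] [IsUltrametricDist K]

lemma norm_sub_eq_max {a b : K} (h : ‖a‖ ≠ ‖b‖) : ‖a - b‖ = max ‖a‖ ‖b‖ := by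
  rw [sub_eq_add_neg, IsUltrametricDist.norm_add_eq_max_of_norm_ne_norm (by rwa [norm_neg]),
    norm_neg]

lemma norm_eval_le {q : K[X]} {c : ℝ} (hq : ∀ i, ‖q.coeff i‖ ≤ c) {z : K} {n : ℕ}
    (hn : q.natDegree ≤ n) : ‖q.eval z‖ ≤ c * max 1 ‖z‖ ^ n := by
  have hc : 0 ≤ c := (norm_nonneg _).trans (hq 0)
  rw [eval_eq_sum_range' (Nat.lt_succ_of_le hn)]
  refine IsUltrametricDist.norm_sum_le_of_forall_le_of_nonneg (by positivity) fun i hi => ?_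
  rw [norm_mul, norm_pow]
  have hz : ‖z‖ ^ i ≤ max 1 ‖z‖ ^ n :=
    (pow_le_pow_left₀ (norm_nonneg z) (le_max_right 1 _) i).trans
      (pow_le_pow_right₀ (le_max_left 1 _) (Nat.lt_succ_iff.1 (Finset.mem_range.1 hi)))
  exact mul_le_mul (hq i) hz (by positivity) hc

lemma norm_eval_eq_of_norm_lt_one {q : K[X]} (hq : ∀ i, ‖q.coeff i‖ ≤ ‖q.coeff 0‖) {z : K}
    (hz : ‖z‖ < 1) : ‖q.eval z‖ = ‖q.coeff 0‖ := by
  rcases (norm_nonneg (q.coeff 0)).eq_or_lt with h0 | h0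
  · have : q = 0 := ext fun i => norm_le_zero_iff.1 (h0 ▸ hq i)
    simp [this]
  have hX : ‖q.divX.eval z * z‖ < ‖q.coeff 0‖ := by
    have h := norm_eval_le (q := q.divX) (c := ‖q.coeff 0‖) (z := z)
      (fun i => by rw [coeff_divX]; exact hq _) le_rfl
    rw [max_eq_left hz.le, one_pow, mul_one] at h
    rw [norm_mul]
    nlinarith [norm_nonneg z]
  conv_lhs => rw [← q.divX_mul_X_add, eval_add, eval_mul, eval_X, eval_C]
  rw [IsUltrametricDist.norm_add_eq_max_of_norm_ne_norm hX.ne, max_eq_right hX.le]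

variable {q : K[X]} {z : K}

lemma norm_pow_eq_of_isRoot_X_pow_add {n : ℕ} (hq : ∀ i, ‖q.coeff i‖ ≤ ‖q.coeff 0‖)
    (hq1 : ‖q.coeff 0‖ < 1) (hdeg : q.natDegree ≤ n) (hz : (X ^ n + q).IsRoot z) :
    ‖z‖ ^ n = ‖q.coeff 0‖ := by
  have hzq : ‖z‖ ^ n = ‖q.eval z‖ := by
    rw [IsRoot, eval_add, eval_pow, eval_X, add_eq_zero_iff_eq_neg] at hz
    rw [← norm_pow, hz, norm_neg]
  rcases lt_or_ge ‖z‖ 1 with h | h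
  · rw [hzq, norm_eval_eq_of_norm_lt_one hq h]
  · have hle := norm_eval_le hq hdeg (z := z)
    rw [← hzq, max_eq_right h] at hle
    nlinarith [one_le_pow₀ h (n := n)]

lemma norm_eq_one_or_norm_pow_eq_of_isRoot {m : ℕ} {a : K} (ha : ‖a‖ = 1)
    (hq : ∀ i, ‖q.coeff i‖ ≤ ‖q.coeff 0‖) (hq1 : ‖q.coeff 0‖ < 1) (hdeg : q.natDegree ≤ m + 1)
    (hz : (X ^ m * (X - C a) + q).IsRoot z) : ‖z‖ = 1 ∨ ‖z‖ ^ m = ‖q.coeff 0‖ := by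
  have hzq : ‖z‖ ^ m * ‖z - a‖ = ‖q.eval z‖ := by
    rw [IsRoot, eval_add, eval_mul, eval_pow, eval_sub, eval_X, eval_C,
      add_eq_zero_iff_eq_neg] at hz
    rw [← norm_pow, ← norm_mul, hz, norm_neg]
  rw [or_iff_not_imp_left]
  intro h1
  rw [norm_sub_eq_max (by rwa [ha]), ha] at hzq
  rcases lt_or_gt_of_ne h1 with h | h
  · rw [← norm_eval_eq_of_norm_lt_one hq h, ← hzq, max_eq_right h.le, mul_one]
  · have hle := norm_eval_le hq hdeg (z := z)
    rw [← hzq, max_eq_left h.le, max_eq_right h.le, ← pow_succ] at hle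
    nlinarith [one_le_pow₀ h.le (n := m + 1)]

lemma exists_eq_one_of_prod_eq {ι : Type*} [Fintype ι] {w : ι → ℝ} {m : ℕ} {c : ℝ} (hc0 : 0 < c)
    (hc1 : c < 1) (hcard : Fintype.card ι = m + 1) (hw : ∀ i, w i = 1 ∨ w i ^ m = c)
    (hprod : ∏ i, w i = c) : ∃ i, w i = 1 ∧ ∀ j ≠ i, w j ^ m = c := by
  classical
  let U := Finset.univ.filter fun i => w i = 1
  have hone : ∏ i ∈ U, w i ^ m = 1 :=
    Finset.prod_eq_one fun i hi => by rw [(Finset.mem_filter_univ i).1 hi, one_pow]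
  have hc : ∏ i ∈ Uᶜ, w i ^ m = c ^ Uᶜ.card :=
    Finset.prod_eq_pow_card fun i hi => (hw i).resolve_left fun h =>
      Finset.mem_compl.1 hi ((Finset.mem_filter_univ i).2 h)
  have hpow : c ^ Uᶜ.card = c ^ m := by
    calc c ^ Uᶜ.card = ∏ i, w i ^ m := by
          rw [← Finset.prod_mul_prod_compl U, hone, one_mul, hc]
      _ = c ^ m := by rw [Finset.prod_pow, hprod]
  have hU : U.card = 1 := by
    have h1 := pow_right_injective₀ hc0 hc1.ne hpow
    have h2 := Finset.card_add_card_compl U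
    lia
  obtain ⟨i, hi⟩ := Finset.card_eq_one.1 hU
  have hiff (j) : w j = 1 ↔ j = i := by
    simpa [U] using congrArg (j ∈ ·) hi
  exact ⟨i, (hiff i).2 rfl, fun j hj => (hw j).resolve_left fun h => hj ((hiff j).1 h)⟩

end NewtonPolygon

section PadicEmbedding

variable {p : ℕ} [Fact p.Prime]

lemma padicAlgCl_norm_intCast (z : ℤ) : ‖(z : PadicAlgCl p)‖ = ‖(z : ℚ_[p])‖ := by
  rw [← PadicAlgCl.norm_extends p (z : ℚ_[p]), map_intCast]

lemma padicAlgCl_norm_intCast_eq_one {z : ℤ} (h : ¬ (p : ℤ) ∣ z) : ‖(z : PadicAlgCl p)‖ = 1 := by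
  rw [padicAlgCl_norm_intCast]
  exact (Padic.norm_int_le_one z).antisymm (not_lt.1 (mt Padic.norm_intCast_lt_one_iff.1 h))

lemma padicAlgCl_norm_pow_mul (s : ℕ) (z : ℤ) :
    ‖(((p : ℤ) ^ s * z : ℤ) : PadicAlgCl p)‖ = ((p : ℝ) ^ s)⁻¹ * ‖(z : PadicAlgCl p)‖ := by
  simp_rw [padicAlgCl_norm_intCast]
  push_cast
  rw [norm_mul, norm_pow, Padic.norm_p, inv_pow]

variable (p) in
lemma inv_prime_pow_lt_one {s : ℕ} (hs : s ≠ 0) : ((p : ℝ) ^ s)⁻¹ < 1 :=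
  inv_lt_one_of_one_lt₀ (one_lt_pow₀ (by exact_mod_cast (Fact.out : p.Prime).one_lt) hs)

section Roots

variable {g : ℤ[X]} {m n s : ℕ} {a : ℤ} {z : PadicAlgCl p}

lemma padicAlgCl_norm_coeff_zero (hg : ¬ (p : ℤ) ∣ g.coeff 0) :
    ‖((C ((p : ℤ) ^ s) * g).map (Int.castRingHom (PadicAlgCl p))).coeff 0‖ = ((p : ℝ) ^ s)⁻¹ := by
  rw [coeff_map, coeff_C_mul, eq_intCast, padicAlgCl_norm_pow_mul,
    padicAlgCl_norm_intCast_eq_one hg, mul_one]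

lemma padicAlgCl_norm_coeff_le (hg : ¬ (p : ℤ) ∣ g.coeff 0) (i : ℕ) :
    ‖((C ((p : ℤ) ^ s) * g).map (Int.castRingHom (PadicAlgCl p))).coeff i‖ ≤
      ‖((C ((p : ℤ) ^ s) * g).map (Int.castRingHom (PadicAlgCl p))).coeff 0‖ := by
  rw [padicAlgCl_norm_coeff_zero hg, coeff_map, coeff_C_mul, eq_intCast, padicAlgCl_norm_pow_mul]
  exact mul_le_of_le_one_right (by positivity)
    ((padicAlgCl_norm_intCast _).trans_le (Padic.norm_int_le_one _))

lemma padicAlgCl_norm_pow_of_isRoot (hg : ¬ (p : ℤ) ∣ g.coeff 0) (hs : s ≠ 0)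
    (hdeg : g.natDegree ≤ n)
    (hz : ((X ^ n + C ((p : ℤ) ^ s) * g).map (Int.castRingHom (PadicAlgCl p))).IsRoot z) :
    ‖z‖ ^ n = ((p : ℝ) ^ s)⁻¹ := by
  rw [Polynomial.map_add, Polynomial.map_pow, map_X] at hz
  rw [← padicAlgCl_norm_coeff_zero hg]
  refine norm_pow_eq_of_isRoot_X_pow_add (padicAlgCl_norm_coeff_le hg) ?_
    (natDegree_map_le.trans ((natDegree_C_mul_le _ _).trans hdeg)) hz
  rw [padicAlgCl_norm_coeff_zero hg]
  exact inv_prime_pow_lt_one p hs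

lemma padicAlgCl_norm_eq_one_or_norm_pow_of_isRoot (ha : ¬ (p : ℤ) ∣ a)
    (hg : ¬ (p : ℤ) ∣ g.coeff 0) (hs : s ≠ 0) (hdeg : g.natDegree ≤ m + 1)
    (hz : ((X ^ m * (X - C a) + C ((p : ℤ) ^ s) * g).map
      (Int.castRingHom (PadicAlgCl p))).IsRoot z) :
    ‖z‖ = 1 ∨ ‖z‖ ^ m = ((p : ℝ) ^ s)⁻¹ := by
  rw [Polynomial.map_add, Polynomial.map_mul, Polynomial.map_pow, Polynomial.map_sub, map_X,
    map_C] at hz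
  rw [← padicAlgCl_norm_coeff_zero hg]
  refine norm_eq_one_or_norm_pow_eq_of_isRoot (padicAlgCl_norm_intCast_eq_one ha)
    (padicAlgCl_norm_coeff_le hg) ?_
    (natDegree_map_le.trans ((natDegree_C_mul_le _ _).trans hdeg)) hz
  rw [padicAlgCl_norm_coeff_zero hg]
  exact inv_prime_pow_lt_one p hs

end Roots

variable {L : Type*} [Field L] [NumberField L] (φ : L →ₐ[ℚ] PadicAlgCl p)

/-- The decomposition group at the place of `L` above `p` given by an embedding `φ` into the
algebraic closure of `ℚ_[p]`, encoded as the automorphisms preserving the absolute value induced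
by `φ`. -/
def decompositionGroup : Subgroup Gal(L/ℚ) where
  carrier := {g | ∀ x, ‖φ (g x)‖ = ‖φ x‖}
  one_mem' _ := rfl
  mul_mem' hg hh x := (hg _).trans (hh x)
  inv_mem' {g} hg x := by
    rw [← hg, ← AlgEquiv.mul_apply, mul_inv_cancel, AlgEquiv.one_apply]

lemma exists_norm_eq_zpow [IsGalois ℚ L] {z : L} (hz : z ≠ 0)
    (hfix : ∀ g ∈ decompositionGroup φ, g z = z) : ∃ k : ℤ, ‖φ z‖ = (p : ℝ) ^ k := by
  let : Algebra L (PadicAlgCl p) := φ.toRingHom.toAlgebra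
  have : IsScalarTower ℚ L (PadicAlgCl p) :=
    IsScalarTower.of_algebraMap_eq' φ.comp_algebraMap.symm
  have hbot : φ z ∈ (⊥ : IntermediateField ℚ_[p] (PadicAlgCl p)) := by
    rw [InfiniteGalois.mem_bot_iff_fixed]
    intro σ
    let g : Gal(L/ℚ) := (σ.restrictScalars ℚ).restrictNormal L
    have hg (x : L) : φ (g x) = σ (φ x) :=
      AlgEquiv.restrictNormal_commutes (σ.restrictScalars ℚ) L x
    rw [← hg, hfix g fun x => by rw [hg]; exact (spectralNorm_eq_of_equiv σ (φ x)).symm]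
  obtain ⟨y, hy⟩ := IntermediateField.mem_bot.1 hbot
  have hy0 : y ≠ 0 := by
    rintro rfl
    exact hz ((map_eq_zero φ).1 (by rw [← hy, map_zero]))
  refine ⟨-y.valuation, ?_⟩
  rw [← Padic.norm_eq_zpow_neg_valuation hy0, ← hy]
  exact PadicAlgCl.norm_extends p y

variable {ι : Type*} {a : ι → 𝓞 L}

-- The product of the `a i` over `B` is fixed by the decomposition group, so its valuation,
-- `s * |B| / m` times that of `p`, is an integral multiple of that of `p`.
lemma dvd_mul_ncard_of_norm_pow_eq [IsGalois ℚ L] [Finite ι] [MulAction Gal(L/ℚ) ι]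
    (hsmul : ∀ (σ : Gal(L/ℚ)) i, a (σ • i) = σ • a i) {m s : ℕ} (hm : m ≠ 0) {B : Set ι}
    (hB : ∀ g ∈ decompositionGroup φ, g • B ⊆ B)
    (hnorm : ∀ i ∈ B, ‖φ (a i)‖ ^ m = ((p : ℝ) ^ s)⁻¹) : m ∣ s * B.ncard := by
  classical
  have := Fintype.ofFinite ι
  have hp : 1 < (p : ℝ) := by exact_mod_cast (Fact.out : p.Prime).one_lt
  let z : L := ∏ i ∈ B.toFinset, (a i : L)
  have hz : z ≠ 0 := Finset.prod_ne_zero_iff.2 fun i hi h => by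
    have := hnorm i (Set.mem_toFinset.1 hi)
    rw [h, map_zero, norm_zero, zero_pow hm, eq_comm, inv_eq_zero] at this
    exact pow_ne_zero s (zero_lt_one.trans hp).ne' this
  obtain ⟨k, hk⟩ := exists_norm_eq_zpow φ hz fun g hg => by
    rw [map_prod]
    refine Finset.prod_bij' (fun i _ => g • i) (fun i _ => g⁻¹ • i) ?_ ?_ ?_ ?_ ?_
    · exact fun i hi => Set.mem_toFinset.2 (hB g hg (Set.smul_mem_smul_set (Set.mem_toFinset.1 hi)))
    · exact fun i hi => Set.mem_toFinset.2
        (hB g⁻¹ (inv_mem hg) (Set.smul_mem_smul_set (Set.mem_toFinset.1 hi)))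
    · exact fun i _ => inv_smul_smul g i
    · exact fun i _ => smul_inv_smul g i
    · exact fun i _ => by rw [hsmul]; rfl
  have hpow : (p : ℝ) ^ (k * m) = (p : ℝ) ^ (-(s * B.ncard : ℤ)) := by
    calc (p : ℝ) ^ (k * m) = ‖φ z‖ ^ m := by rw [hk, zpow_mul, zpow_natCast]
      _ = ∏ i ∈ B.toFinset, ‖φ (a i)‖ ^ m := by rw [map_prod, norm_prod, Finset.prod_pow]
      _ = ((p : ℝ) ^ s)⁻¹ ^ B.ncard := by
        rw [Set.ncard_eq_toFinset_card']
        exact Finset.prod_eq_pow_card fun i hi => hnorm i (Set.mem_toFinset.1 hi)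
      _ = (p : ℝ) ^ (-(s * B.ncard : ℤ)) := by
        rw [inv_pow, ← pow_mul, zpow_neg]
        norm_cast
  have hkm := zpow_right_injective₀ (zero_lt_one.trans hp) hp.ne' hpow
  have hdvd : (m : ℤ) ∣ ((s * B.ncard : ℕ) : ℤ) := ⟨-k, by push_cast; linarith⟩
  exact_mod_cast hdvd

variable [Fintype ι]

lemma map_intCast_padicAlgCl_eq_prod {F : ℤ[X]}
    (hF : F.map (algebraMap ℤ (𝓞 L)) = ∏ i, (X - C (a i))) :
    F.map (Int.castRingHom (PadicAlgCl p)) = ∏ i, (X - C (φ (a i))) := by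
  have h := congrArg (Polynomial.map (φ.toRingHom.comp (algebraMap (𝓞 L) L))) hF
  rw [Polynomial.map_map, Polynomial.map_prod] at h
  simp only [Polynomial.map_sub, map_X, map_C] at h
  rwa [RingHom.ext_int (Int.castRingHom _) _]

lemma isRoot_padicAlgCl {F : ℤ[X]} (hF : F.map (algebraMap ℤ (𝓞 L)) = ∏ i, (X - C (a i)))
    (i : ι) : (F.map (Int.castRingHom (PadicAlgCl p))).IsRoot (φ (a i)) := by
  rw [map_intCast_padicAlgCl_eq_prod φ hF, isRoot_prod]
  exact ⟨i, Finset.mem_univ i, root_X_sub_C.2 rfl⟩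

lemma prod_norm_padicAlgCl {F : ℤ[X]} (hF : F.map (algebraMap ℤ (𝓞 L)) = ∏ i, (X - C (a i))) :
    ∏ i, ‖φ (a i)‖ = ‖((F.eval 0 : ℤ) : PadicAlgCl p)‖ := by
  have h := congrArg (eval 0) (map_intCast_padicAlgCl_eq_prod φ hF)
  rw [← coeff_zero_eq_eval_zero, coeff_map, eval_prod] at h
  rw [← coeff_zero_eq_eval_zero, ← eq_intCast (Int.castRingHom _), h, norm_prod]
  simp

variable [MulAction Gal(L/ℚ) ι] {F g : ℤ[X]} {m n s : ℕ} {c : ℤ}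

-- All roots have valuation `s / n`, so by coprimality the degree of every factor over `ℚ_[p]`
-- is a multiple of `n` (Dumas' criterion).
theorem isPretransitive_of_eq_X_pow_add [IsGalois ℚ L]
    (hsmul : ∀ (σ : Gal(L/ℚ)) i, a (σ • i) = σ • a i)
    (hF : F.map (algebraMap ℤ (𝓞 L)) = ∏ i, (X - C (a i)))
    (hform : F = X ^ n + C ((p : ℤ) ^ s) * g)
    (hcard : Fintype.card ι = n) (hn : n ≠ 0) (hg : ¬ (p : ℤ) ∣ g.coeff 0)
    (hdeg : g.natDegree ≤ n) (hs : s ≠ 0) (hns : n.Coprime s) :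
    MulAction.IsPretransitive Gal(L/ℚ) ι := by
  subst hform
  have : Nonempty ι := Fintype.card_pos_iff.1 (by lia)
  let φ : L →ₐ[ℚ] PadicAlgCl p := IsAlgClosed.lift
  refine isPretransitive_of_card_dvd_ncard fun B hB => ?_
  rw [Nat.card_eq_fintype_card, hcard]
  exact hns.dvd_of_dvd_mul_left (dvd_mul_ncard_of_norm_pow_eq φ hsmul hn (fun σ _ => hB σ)
    fun i _ => padicAlgCl_norm_pow_of_isRoot hg hs hdeg (isRoot_padicAlgCl φ hF i))

-- One root is a unit and the other `m` have valuation `s / m`; the unit root is thus fixed by the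
-- decomposition group, whose other orbits are large.
theorem exists_dvd_mul_ncard_sub_one_of_isBlock (p : ℕ) [Fact p.Prime] [IsGalois ℚ L]
    (hsmul : ∀ (σ : Gal(L/ℚ)) i, a (σ • i) = σ • a i)
    (hF : F.map (algebraMap ℤ (𝓞 L)) = ∏ i, (X - C (a i)))
    (hform : F = X ^ m * (X - C c) + C ((p : ℤ) ^ s) * g)
    (hcard : Fintype.card ι = m + 1) (hm : m ≠ 0) (hc : ¬ (p : ℤ) ∣ c)
    (hg : ¬ (p : ℤ) ∣ g.coeff 0) (hdeg : g.natDegree ≤ m + 1) (hs : s ≠ 0) :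
    ∃ i : ι, ∀ B : Set ι, i ∈ B → MulAction.IsBlock Gal(L/ℚ) B → m ∣ s * (B.ncard - 1) := by
  subst hform
  let φ : L →ₐ[ℚ] PadicAlgCl p := IsAlgClosed.lift
  have hlt := inv_prime_pow_lt_one p hs
  have hnorm (i : ι) : ‖φ (a i)‖ = 1 ∨ ‖φ (a i)‖ ^ m = ((p : ℝ) ^ s)⁻¹ :=
    padicAlgCl_norm_eq_one_or_norm_pow_of_isRoot hc hg hs hdeg (isRoot_padicAlgCl φ hF i)
  have hprod : ∏ i, ‖φ (a i)‖ = ((p : ℝ) ^ s)⁻¹ := by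
    rw [prod_norm_padicAlgCl φ hF, eval_add, eval_mul, eval_pow, eval_X, zero_pow hm, zero_mul,
      zero_add, eval_mul, eval_C, padicAlgCl_norm_pow_mul, ← coeff_zero_eq_eval_zero,
      padicAlgCl_norm_intCast_eq_one hg, mul_one]
  have hpos : 0 < ((p : ℝ) ^ s)⁻¹ :=
    inv_pos.2 (pow_pos (by exact_mod_cast (Fact.out : p.Prime).pos) s)
  obtain ⟨i, hi, hne⟩ := exists_eq_one_of_prod_eq hpos hlt hcard hnorm hprod
  have hfix (σ) (hσ : σ ∈ decompositionGroup φ) : σ • i = i := by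
    by_contra h
    have hσi : ‖φ (a (σ • i))‖ = 1 := by
      rw [hsmul, ← hi]
      exact hσ (a i)
    exact hlt.ne (by rw [← hne _ h, hσi, one_pow])
  exact ⟨i, fun B hiB hB => dvd_mul_ncard_sub_one_of_isBlock hfix
    (fun B' hB' hstab => dvd_mul_ncard_of_norm_pow_eq φ hsmul hm hstab fun j hj => hne j (hB' hj))
    hiB hB⟩

theorem isPreprimitive_of_coprime [IsGalois ℚ L]
    (hsmul : ∀ (σ : Gal(L/ℚ)) i, a (σ • i) = σ • a i)
    (hF : F.map (algebraMap ℤ (𝓞 L)) = ∏ i, (X - C (a i)))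
    (hform : F = X ^ m * (X - C c) + C ((p : ℤ) ^ s) * g)
    (hcard : Fintype.card ι = m + 1) (hm : m ≠ 0) (hc : ¬ (p : ℤ) ∣ c)
    (hg : ¬ (p : ℤ) ∣ g.coeff 0) (hdeg : g.natDegree ≤ m + 1) (hs : s ≠ 0) (hms : m.Coprime s)
    (hroot : ∀ z : ℤ, F.eval z ≠ 0) :
    MulAction.IsPreprimitive Gal(L/ℚ) ι := by
  obtain ⟨i, hi⟩ := exists_dvd_mul_ncard_sub_one_of_isBlock p hsmul hF hform hcard hm hc hg hdeg hs
  refine MulAction.IsPreprimitive.of_isTrivialBlock_of_notMem_fixedPoints (a := i) ?_ ?_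
  · intro hfix
    obtain ⟨z, hz⟩ := Algebra.IsInvariant.isInvariant (A := ℤ) (G := Gal(L/ℚ)) (a i)
      fun σ => by rw [← hsmul, hfix σ]
    have h := congrArg (eval (a i)) hF
    rw [← hz, eval_map_algebraMap, aeval_algebraMap_apply, hz, eval_prod,
      Finset.prod_eq_zero (Finset.mem_univ i) (by simp), coe_aeval_eq_eval,
      FaithfulSMul.algebraMap_eq_zero_iff] at h
    exact hroot z h
  · intro B hiB hB
    have hdvd := hms.dvd_of_dvd_mul_left (hi B hiB hB)
    rcases Nat.eq_zero_or_pos (B.ncard - 1) with h0 | hpos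
    · exact .inl (Set.ncard_le_one_iff_subsingleton.1 (by lia))
    · refine .inr ((Set.eq_univ_iff_ncard B).2 ((Set.ncard_le_card B).antisymm ?_))
      have := Nat.le_of_dvd hpos hdvd
      rw [Nat.card_eq_fintype_card, hcard]
      lia

theorem isPreprimitive_of_isPretransitive [IsGalois ℚ L] [MulAction.IsPretransitive Gal(L/ℚ) ι]
    (hsmul : ∀ (σ : Gal(L/ℚ)) i, a (σ • i) = σ • a i)
    (hF : F.map (algebraMap ℤ (𝓞 L)) = ∏ i, (X - C (a i)))
    (hform : F = X ^ m * (X - C c) + C ((p : ℤ) ^ 2) * g)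
    (hcard : Fintype.card ι = m + 1) (hm : m ≠ 0) (hc : ¬ (p : ℤ) ∣ c)
    (hg : ¬ (p : ℤ) ∣ g.coeff 0) (hdeg : g.natDegree ≤ m + 1) :
    MulAction.IsPreprimitive Gal(L/ℚ) ι := by
  obtain ⟨i, hi⟩ := exists_dvd_mul_ncard_sub_one_of_isBlock p hsmul hF hform hcard hm hc hg hdeg
    two_ne_zero
  refine MulAction.IsPreprimitive.of_isTrivialBlock_base i fun {B} hiB hB => ?_
  rcases Nat.eq_zero_or_pos (B.ncard - 1) with h0 | hpos
  · exact .inl (Set.ncard_le_one_iff_subsingleton.1 (by lia))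
  · refine .inr (hB.eq_univ_of_card_lt ?_)
    have := Nat.le_of_dvd (by lia) (hi B hiB hB)
    rw [Nat.card_eq_fintype_card, hcard]
    lia

end PadicEmbedding

section Criterion

lemma nonempty_mulEquiv_alternatingGroup {G ι : Type*} [Group G] [Fintype ι] [DecidableEq ι]
    [MulAction G ι] [FaithfulSMul G ι] [MulAction.IsPreprimitive G ι]
    (hsign : ∀ g : G, Equiv.Perm.sign (MulAction.toPerm g : Equiv.Perm ι) = 1)
    (hcycle : ∃ g : G, (MulAction.toPerm g : Equiv.Perm ι).IsThreeCycle) :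
    Nonempty (G ≃* alternatingGroup ι) := by
  let φ : G →* Equiv.Perm ι := MulAction.toPermHom G ι
  have hprim : MulAction.IsPreprimitive φ.range ι := by
    let f : ι →ₑ[φ.rangeRestrict] ι := { toFun := id, map_smul' := fun _ _ => rfl }
    exact MulAction.IsPreprimitive.of_surjective (f := f) Function.surjective_id
  have hrange : φ.range = alternatingGroup ι := by
    apply le_antisymm
    · rintro _ ⟨g, rfl⟩
      exact Equiv.Perm.mem_alternatingGroup.2 (hsign g)
    · obtain ⟨g, hg⟩ := hcycle
      exact Equiv.Perm.alternatingGroup_le_of_isPreprimitive_of_isThreeCycle_mem hprim hg ⟨g, rfl⟩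
  exact ⟨(φ.ofInjective MulAction.toPerm_injective).trans (MulEquiv.subgroupCongr hrange)⟩

/-- `G` occurs as a Galois group over `ℚ`. The field lives in `Type`, which loses nothing since
number fields are countable. -/
def OccursAsGaloisGroupOverRat (G : Type*) [Group G] : Prop :=
  ∃ (M : Type) (_ : Field M) (_ : Algebra ℚ M),
    FiniteDimensional ℚ M ∧ IsGalois ℚ M ∧ Nonempty ((M ≃ₐ[ℚ] M) ≃* G)

lemma exists_numberField_isSplittingField (f : ℚ[X]) :
    ∃ (L : Type) (_ : Field L) (_ : NumberField L), f.IsSplittingField ℚ L := by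
  have canonical (L : Type) [Field L] [CharZero L] [i : Algebra ℚ L] (hL : f.IsSplittingField ℚ L) :
      ∃ (L : Type) (_ : Field L) (_ : NumberField L), f.IsSplittingField ℚ L := by
    obtain rfl : i = DivisionRing.toRatAlgebra := Subsingleton.elim _ _
    have := hL.finiteDimensional L f
    exact ⟨L, inferInstance, ⟨⟩, hL⟩
  have : CharZero f.SplittingField := algebraRat.charZero _
  exact canonical f.SplittingField (IsSplittingField.splittingField f)

section

variable {F : ℤ[X]}

lemma card_eq_natDegree_of_map_eq_prod {R S ι : Type*} [CommRing R] [CommRing S] [Nontrivial S]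
    [Algebra R S] [Fintype ι] {f : R[X]} (hf : f.Monic) {a : ι → S}
    (h : f.map (algebraMap R S) = ∏ i, (X - C (a i))) : Fintype.card ι = f.natDegree := by
  rw [← hf.natDegree_map (algebraMap R S), h, natDegree_finsetProd_X_sub_C_eq_card,
    Finset.card_univ]

lemma separable_map_of_discr_ne_zero {R K : Type*} [CommRing R] [Field K] [Algebra R K]
    [FaithfulSMul R K] {f : R[X]} (hf : f.Monic) (hd : f.discr ≠ 0) :
    (f.map (algebraMap R K)).Separable := by
  rw [Separable, ← isUnit_resultant_iff_isCoprime (hf.map _),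
    resultant_derivative_of_monic (hf.map _), discr_map_of_monic _ hf]
  exact (isUnit_neg_one.pow _).mul
    (IsUnit.mk0 _ ((FaithfulSMul.algebraMap_eq_zero_iff R K).not.2 hd))

variable {L : Type*} [Field L] [NumberField L] [hL : (F.map (algebraMap ℤ ℚ)).IsSplittingField ℚ L]

lemma splits_ringOfIntegers (hF : F.Monic) : (F.map (algebraMap ℤ (𝓞 L))).Splits := by
  have htower : (F.map (algebraMap ℤ (𝓞 L))).map (algebraMap (𝓞 L) L) =
      (F.map (algebraMap ℤ ℚ)).map (algebraMap ℚ L) := by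
    simp_rw [Polynomial.map_map, ← IsScalarTower.algebraMap_eq]
  refine Splits.of_splits_map_of_injective RingOfIntegers.coe_injective
    (htower ▸ hL.splits') fun x hx => ?_
  have hx' : aeval x F = 0 := by
    rw [htower, mem_roots', IsRoot, eval_map_algebraMap, aeval_map_algebraMap] at hx
    exact hx.2
  exact ⟨⟨x, F, hF, hx'⟩, rfl⟩

lemma map_eq_prod_rootSet_ringOfIntegers (hF : F.Monic) (hd : F.discr ≠ 0) :
    F.map (algebraMap ℤ (𝓞 L)) = ∏ x : F.rootSet (𝓞 L), (X - C (x : 𝓞 L)) := by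
  classical
  have hs := splits_ringOfIntegers (L := L) hF
  have hnodup : (F.aroots (𝓞 L)).Nodup := by
    have h := nodup_roots (separable_map_of_discr_ne_zero (K := L) hF hd)
    rw [IsScalarTower.algebraMap_eq ℤ (𝓞 L) L, ← Polynomial.map_map,
      hs.roots_map_of_injective RingOfIntegers.coe_injective] at h
    exact h.of_map
  calc F.map (algebraMap ℤ (𝓞 L)) = ((F.aroots (𝓞 L)).map fun x => X - C x).prod :=
        hs.eq_prod_roots_of_monic (hF.map _)
    _ = ∏ x ∈ (F.aroots (𝓞 L)).toFinset, (X - C x) := by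
        rw [Finset.prod, Multiset.toFinset_val, hnodup.dedup]
    _ = ∏ x : F.rootSet (𝓞 L), (X - C (x : 𝓞 L)) :=
        (Finset.prod_coe_sort _ _).symm

lemma faithfulSMul_rootSet_ringOfIntegers (hF : F.Monic) :
    FaithfulSMul Gal(L/ℚ) (F.rootSet (𝓞 L)) := by
  refine ⟨fun {σ τ} h => AlgEquiv.coe_toAlgHom_injective
    (AlgHom.ext_of_adjoin_eq_top hL.adjoin_rootSet' fun x hx => ?_)⟩
  have hx' : aeval x F = 0 := by
    rw [← aeval_map_algebraMap ℚ]
    exact (mem_rootSet.1 hx).2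
  let y : 𝓞 L := ⟨x, F, hF, hx'⟩
  have hy : y ∈ F.rootSet (𝓞 L) := mem_rootSet.2 ⟨hF.ne_zero, RingOfIntegers.coe_injective (by
    rw [← aeval_algebraMap_apply, map_zero]
    exact hx')⟩
  exact congrArg (fun z : F.rootSet (𝓞 L) => ((z : 𝓞 L) : L)) (h ⟨y, hy⟩)

end

/-- The Galois group of `F` acts primitively on the roots of `F`. The condition is imposed over
every Galois number field in which `F` has only simple roots and splits, the action factoring
through the Galois group of the splitting field. -/
def HasPrimitiveGaloisGroup (F : ℤ[X]) : Prop :=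
  ∀ (L : Type) [Field L] [NumberField L] [IsGalois ℚ L],
    F.map (algebraMap ℤ (𝓞 L)) = ∏ x : F.rootSet (𝓞 L), (X - C (x : 𝓞 L)) →
      MulAction.IsPreprimitive Gal(L/ℚ) (F.rootSet (𝓞 L))

theorem occursAsGaloisGroupOverRat_alternatingGroup {F : ℤ[X]} (hF : F.Monic)
    (hprim : HasPrimitiveGaloisGroup F) (hd0 : F.discr ≠ 0) (hd : IsSquare F.discr)
    {A B : ℤ[X]} {κ γ : ℤ} {k : ℕ}
    (hid : A * derivative F - B * F = C κ * X ^ k * (X - C γ) ^ 2) {r : ℕ} (hr : r.Prime)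
    (hκ : ¬ (r : ℤ) ∣ κ) (h0 : ¬ (r : ℤ) ∣ F.eval 0) (hA : ¬ (r : ℤ) ∣ A.eval γ)
    (h1 : (r : ℤ) ∣ F.eval γ) (h2 : ¬ (r : ℤ) ^ 2 ∣ F.eval γ) :
    OccursAsGaloisGroupOverRat (alternatingGroup (Fin F.natDegree)) := by
  classical
  obtain ⟨L, _, _, hL⟩ := exists_numberField_isSplittingField (F.map (algebraMap ℤ ℚ))
  have : Normal ℚ L := Normal.of_isSplittingField (F.map (algebraMap ℤ ℚ))
  have : IsGalois ℚ L := ⟨⟩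
  have hprod := map_eq_prod_rootSet_ringOfIntegers (L := L) hF hd0
  have := hprim L hprod
  have := faithfulSMul_rootSet_ringOfIntegers (L := L) hF
  have hsign (σ : Gal(L/ℚ)) :
      Equiv.Perm.sign (MulAction.toPerm σ : Equiv.Perm (F.rootSet (𝓞 L))) = 1 := by
    refine sign_toPerm_eq_one (f := F.map (algebraMap ℤ ℚ))
      (a := fun x : F.rootSet (𝓞 L) => ((x : 𝓞 L) : L)) ?_ ?_ ?_ ?_ σ
    · exact RingOfIntegers.coe_injective.comp Subtype.val_injective
    · exact fun σ x => rfl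
    · have h := congrArg (Polynomial.map (algebraMap (𝓞 L) L)) hprod
      rw [Polynomial.map_map, ← IsScalarTower.algebraMap_eq, Polynomial.map_prod] at h
      simpa only [Polynomial.map_map, ← IsScalarTower.algebraMap_eq, Polynomial.map_sub, map_X,
        map_C] using h
    · rw [discr_map_of_monic _ hF]
      exact hd.map _
  obtain ⟨e⟩ := nonempty_mulEquiv_alternatingGroup hsign
    (exists_isThreeCycle (fun σ x => rfl) hprod hsign hid hr hκ h0 hA h1 h2)
  exact ⟨L, inferInstance, inferInstance, inferInstance, inferInstance,
    ⟨e.trans (Fintype.equivFinOfCardEq (card_eq_natDegree_of_map_eq_prod hF hprod)).altCongrHom⟩⟩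

end Criterion

section Parameters

lemma exists_prime_dvd_sq_mul_add {B d ε : ℤ} (hB : B ≠ 0) (h2B : 2 ∣ B) (hd : 0 < d)
    (hε : IsUnit ε) :
    ∃ r : ℕ, r.Prime ∧ ¬ (r : ℤ) ∣ B ∧ ¬ (r : ℤ) ∣ d ∧ (r : ℤ) ∣ B ^ 2 * d + ε := by
  have hne : (B ^ 2 * d + ε).natAbs ≠ 1 := by
    obtain ⟨b, rfl⟩ := h2B
    have hb : 0 < b ^ 2 := sq_pos_of_ne_zero (right_ne_zero_of_mul hB)
    rcases Int.isUnit_iff.1 hε with rfl | rfl <;> have : 3 < (2 * b) ^ 2 * d := by nlinarith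
    all_goals omega
  obtain ⟨r, hr, hrd⟩ := Nat.exists_prime_and_dvd hne
  have hrd : (r : ℤ) ∣ B ^ 2 * d + ε := Int.natCast_dvd.2 hrd
  have hrε : ¬ (r : ℤ) ∣ ε := fun h =>
    (Nat.prime_iff_prime_int.1 hr).not_isUnit (isUnit_of_dvd_unit h hε)
  exact ⟨r, hr, fun h => hrε ((Int.dvd_add_right ((h.pow two_ne_zero).mul_right d)).1 hrd),
    fun h => hrε ((Int.dvd_add_right (h.mul_left _)).1 hrd), hrd⟩

lemma exists_sq_add_dvd_not_sq_dvd {r x e : ℤ} (hr : Prime r) (h2 : ¬ r ∣ 2) (hx : ¬ r ∣ x)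
    (h : r ∣ x ^ 2 + e) : ∃ s, r ∣ s ^ 2 + e ∧ ¬ r ^ 2 ∣ s ^ 2 + e := by
  by_cases hsq : r ^ 2 ∣ x ^ 2 + e
  · have hexp : (x + r) ^ 2 + e = (x ^ 2 + e) + r * (2 * x + r) := by ring
    refine ⟨x + r, hexp ▸ h.add (dvd_mul_right _ _), fun hdvd => ?_⟩
    rw [hexp, Int.dvd_add_right hsq, pow_two, mul_dvd_mul_iff_left hr.ne_zero,
      Int.dvd_add_left dvd_rfl] at hdvd
    exact (hr.dvd_or_dvd hdvd).elim h2 hx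
  · exact ⟨x, h, hsq⟩

lemma exists_isCoprime_and_dvd_mul_sub {R M : ℤ} (h : IsCoprime R M) (s : ℤ) :
    ∃ u, IsCoprime M u ∧ R ∣ M * u - s := by
  obtain ⟨a, b, hab⟩ := h.pow_right (n := 2)
  refine ⟨1 + M * (b * (s - M)), isCoprime_one_right.add_mul_left_right _, (M - s) * a, ?_⟩
  linear_combination (s - M) * hab

lemma exists_parameters {M B d ε : ℤ} (hB : B ≠ 0) (h2B : 2 ∣ B) (hMB : M ∣ B) (hd : 0 < d)
    (hε : IsUnit ε) :
    ∃ (r : ℕ) (u : ℤ), r.Prime ∧ ¬ (r : ℤ) ∣ B ∧ IsCoprime M u ∧ ¬ (r : ℤ) ∣ M * u ∧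
      (r : ℤ) ∣ (M * u) ^ 2 + ε * d ∧ ¬ (r : ℤ) ^ 2 ∣ (M * u) ^ 2 + ε * d := by
  obtain ⟨r, hr, hrB, hrd, hdvd⟩ := exists_prime_dvd_sq_mul_add hB h2B hd hε
  have hrp := Nat.prime_iff_prime_int.1 hr
  obtain ⟨s, hs, hs2⟩ := exists_sq_add_dvd_not_sq_dvd hrp (fun h => hrB (h.trans h2B))
    (fun h => (hrp.dvd_or_dvd h).elim hrB hrd)
    (show (r : ℤ) ∣ (B * d) ^ 2 + ε * d from
      (show (B ^ 2 * d + ε) * d = (B * d) ^ 2 + ε * d by ring) ▸ hdvd.mul_right d)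
  have hcop : IsCoprime ((r : ℤ) ^ 2) M :=
    (hrp.coprime_iff_not_dvd.2 fun h => hrB (h.trans hMB)).pow_left
  obtain ⟨u, hMu, hus⟩ := exists_isCoprime_and_dvd_mul_sub hcop s
  have hsq : (r : ℤ) ^ 2 ∣ ((M * u) ^ 2 + ε * d) - (s ^ 2 + ε * d) := by
    rw [add_sub_add_right_eq_sub, sq_sub_sq]
    exact hus.mul_left _
  have hr1 : (r : ℤ) ∣ (M * u) ^ 2 + ε * d :=
    (dvd_iff_dvd_of_dvd_sub ((dvd_pow_self _ two_ne_zero).trans hsq)).2 hs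
  refine ⟨r, u, hr, hrB, hMu, fun h => ?_, hr1, mt (dvd_iff_dvd_of_dvd_sub hsq).1 hs2⟩
  exact hrd (hε.dvd_mul_left.1 ((Int.dvd_add_right (h.pow two_ne_zero)).1 hr1))

lemma isSquare_and_ne_zero_of_isUnit_mul_eq {ε d c S V : ℤ} {n k : ℕ} (hε : IsUnit ε)
    (hn : Even n) (hk : Odd k) (hc : c ≠ 0) (hS : S ≠ 0) (hV : V ≠ 0)
    (h : ε * d = c ^ n * (ε * S ^ 2) ^ k * V ^ 2) : IsSquare d ∧ d ≠ 0 := by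
  obtain ⟨m, rfl⟩ := hn
  have hεk : ε ^ k = ε := by rcases Int.isUnit_iff.1 hε with rfl | rfl <;> simp [hk.neg_one_pow]
  have hd : d = c ^ m * S ^ k * V * (c ^ m * S ^ k * V) := mul_left_cancel₀ hε.ne_zero <| by
    rw [h, mul_pow, hεk]
    ring
  exact ⟨⟨_, hd⟩, hd ▸ by positivity⟩

theorem occursAsGaloisGroupOverRat_alternatingGroup_of_family {F : ℤ → ℤ[X]} {A B : ℤ[X]}
    {M D ε κ γ b c : ℤ} {n m k : ℕ} (hmonic : ∀ T, (F T).Monic) (hn : ∀ T, (F T).natDegree = n)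
    (hid : ∀ T, A * derivative (F T) - B * F T = C κ * X ^ k * (X - C γ) ^ 2)
    (hdiscr : ∀ T, ε * (F T).discr = κ ^ m * T ^ k * (D + T) ^ 2)
    (h0 : ∀ T, (F T).eval 0 = b * T) (hγ : ∀ T, (F T).eval γ = c * (D + T))
    (hε : IsUnit ε) (hm : Even m) (hk : Odd k) (hM2 : 2 ∣ M) (hM : M ≠ 0) (hD : 0 < D)
    (hκ : κ ≠ 0) (hb : b ≠ 0) (hc : c ≠ 0) (hA : A.eval γ ≠ 0)
    (hprim : ∀ u, IsCoprime M u → HasPrimitiveGaloisGroup (F (ε * (M * u) ^ 2))) :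
    OccursAsGaloisGroupOverRat (alternatingGroup (Fin n)) := by
  obtain ⟨r, u, hr, hrB, hu, hrS, h1, h2⟩ := exists_parameters
    (B := M * (κ * b * c * A.eval γ)) (by positivity) (hM2.mul_right _) (dvd_mul_right _ _) hD hε
  have hrp := Nat.prime_iff_prime_int.1 hr
  simp only [hrp.dvd_mul, not_or] at hrB
  obtain ⟨-, ⟨⟨hrκ, hrb⟩, hrc⟩, hrA⟩ := hrB
  let T : ℤ := ε * (M * u) ^ 2
  have hDT : D + T = ε * ((M * u) ^ 2 + ε * D) := by
    linear_combination (-D) * Int.isUnit_mul_self hε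
  have hS0 : M * u ≠ 0 := fun h => hrS (h ▸ dvd_zero _)
  have hDT0 : D + T ≠ 0 := fun h => h2 (hε.dvd_mul_left.1 (hDT ▸ h ▸ dvd_zero _))
  obtain ⟨hsq, hne⟩ := isSquare_and_ne_zero_of_isUnit_mul_eq hε hm hk hκ hS0 hDT0 (hdiscr T)
  refine hn T ▸ occursAsGaloisGroupOverRat_alternatingGroup (hmonic T) (hprim u hu) hne hsq (hid T)
    hr hrκ ?_ hrA ?_ ?_
  · rw [h0]
    exact fun h => (hrp.dvd_or_dvd h).elim hrb fun h =>
      hrS (hrp.dvd_of_dvd_pow (hε.dvd_mul_left.1 h))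
  · rw [hγ, hDT]
    exact (h1.mul_left _).mul_left _
  · rw [hγ, hDT]
    exact fun h => h2 (hε.dvd_mul_left.1 (hrp.pow_dvd_of_dvd_mul_left 2 hrc h))

end Parameters

section PolynomialCover

/-- The fibre over `-T` of the polynomial map of degree `k + 3` whose derivative is
`(k + 3) * x ^ k * (x - (k + 2) * (k + 1)) ^ 2`: a cover of the line ramified to order `k + 3` over
`∞`, to order `k + 1` at `0` and to order `3` at `(k + 2) * (k + 1)`. It realises `Aₙ` for
even `n = k + 3`. -/
noncomputable def polynomialCover (k : ℕ) (T : ℤ) : ℤ[X] :=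
  X ^ (k + 1) * (X ^ 2 - C (2 * (k + 3) * (k + 1) : ℤ) * X +
    C ((k + 3) * (k + 2) ^ 2 * (k + 1) : ℤ)) + C T

variable {k p : ℕ} {T ε u : ℤ}

lemma eval_polynomialCover (z : ℤ) : (polynomialCover k T).eval z =
    z ^ (k + 1) * (z ^ 2 - 2 * (k + 3) * (k + 1) * z + (k + 3) * (k + 2) ^ 2 * (k + 1)) + T := by
  simp only [polynomialCover, eval_add, eval_sub, eval_mul, eval_pow, eval_X, eval_C]

lemma natDegree_polynomialCover : (polynomialCover k T).natDegree = k + 3 := by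
  rw [polynomialCover]
  compute_degree!

lemma monic_polynomialCover : (polynomialCover k T).Monic := by
  rw [polynomialCover]
  monicity!

lemma derivative_polynomialCover : derivative (polynomialCover k T) =
    C (k + 3 : ℤ) * X ^ k * (X - C ((k + 2) * (k + 1) : ℤ)) ^ 2 := by
  simp only [polynomialCover, derivative_add, derivative_sub, derivative_mul, derivative_X_pow,
    derivative_C, derivative_X]
  simp only [map_mul, map_add, map_pow, map_natCast, map_ofNat, map_one, Nat.add_sub_cancel,
    Nat.cast_add, Nat.cast_one]
  ring

lemma eval_polynomialCover_branch : (polynomialCover k T).eval ((k + 2) * (k + 1) : ℤ) =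
    2 * ((k + 2) * (k + 1)) ^ (k + 2) + T := by
  rw [eval_polynomialCover]
  ring

lemma discr_polynomialCover : (-1) ^ ((k + 3) * (k + 2) / 2) * (polynomialCover k T).discr =
    (k + 3) ^ (k + 3) * T ^ k * (2 * ((k + 2) * (k + 1)) ^ (k + 2) + T) ^ 2 := by
  have h := resultant_mul_discr_of_derivative_eq (f := polynomialCover k T) (A := 1) (B := 0)
    monic_polynomialCover (by rw [one_mul, zero_mul, sub_zero, derivative_polynomialCover])
  have heven : Even ((k + 3) * k) := by
    simpa [Nat.even_mul, parity_simps] using Nat.even_or_odd k |>.symm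
  rw [resultant_one_right, natDegree_one, pow_zero, one_mul, natDegree_polynomialCover,
    heven.neg_one_pow, one_mul, coeff_zero_eq_eval_zero, eval_polynomialCover,
    zero_pow k.succ_ne_zero, zero_mul, zero_add, eval_polynomialCover_branch] at h
  exact h

-- An integral root is even. As `k + 1` is even, every other term is then divisible by `8`,
-- whereas `T` is divisible by `4` only.
lemma eval_polynomialCover_ne_zero (hk : Odd k) (hε : IsUnit ε) {v : ℤ} (hv : ¬ 2 ∣ v) (z : ℤ) :
    (polynomialCover k (ε * (2 * v) ^ 2)).eval z ≠ 0 := by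
  obtain ⟨j, rfl⟩ := hk
  intro h
  rw [eval_polynomialCover] at h
  push_cast at h
  have hz : 2 ∣ z := by
    refine Int.prime_two.dvd_of_dvd_pow (n := 2 * j + 4) ⟨z ^ (2 * j + 2) * (2 * (2 * j + 4) *
      (j + 1) * z - (j + 2) * (2 * j + 3) ^ 2 * (2 * j + 2)) - 2 * ε * v ^ 2, ?_⟩
    linear_combination h
  obtain ⟨w, rfl⟩ := hz
  have hv2 : 2 ∣ ε * v ^ 2 := by
    refine ⟨-(w ^ 2 * (2 * w) ^ (2 * j) * (2 * w ^ 2 - 2 * (2 * j + 4) * (2 * j + 2) * w +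
      (j + 2) * (2 * j + 3) ^ 2 * (2 * j + 2))), mul_left_cancel₀ four_ne_zero ?_⟩
    linear_combination h
  exact hv (Int.prime_two.dvd_of_dvd_pow (hε.dvd_mul_left.1 hv2))

lemma hasPrimitiveGaloisGroup_polynomialCover (hk : Odd k) (hp : p.Prime) (hpk : p ∣ k + 2)
    (hε : IsUnit ε) (hu : IsCoprime (2 * p : ℤ) u) :
    HasPrimitiveGaloisGroup (polynomialCover k (ε * (2 * p * u) ^ 2)) := by
  intro L _ _ _ hprod
  have : Fact p.Prime := ⟨hp⟩
  have hpp := Nat.prime_iff_prime_int.1 hp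
  have hpk' : (p : ℤ) ∣ k + 2 := mod_cast hpk
  have h2p : IsCoprime (2 : ℤ) p := Nat.isCoprime_iff_coprime.2
    ((hk.add_even even_two).of_dvd_nat hpk).coprime_two_left
  obtain ⟨t, ht⟩ := hpk
  have ht : (k + 2 : ℤ) = p * t := mod_cast ht
  refine isPreprimitive_of_coprime (p := p) (m := k + 2) (c := 2 * (k + 3) * (k + 1)) (s := 2)
    (g := C ((k + 3) * t ^ 2 * (k + 1) : ℤ) * X ^ (k + 1) + C (ε * (2 * u) ^ 2)) (fun _ _ => rfl)
    hprod ?_ ?_ (by lia) ?_ ?_ ?_ two_ne_zero ?_ ?_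
  · rw [polynomialCover, ht]
    simp only [map_mul, map_pow, map_natCast]
    ring
  · rw [card_eq_natDegree_of_map_eq_prod monic_polynomialCover hprod,
      natDegree_polynomialCover]
  · rw [show (2 * (k + 3) * (k + 1) : ℤ) = 2 * (k + 2) * (k + 2) - 2 by ring,
      dvd_sub_right (hpk'.mul_left _)]
    exact hpp.coprime_iff_not_dvd.1 h2p.symm
  · rw [coeff_zero_eq_eval_zero]
    simp only [eval_add, eval_mul, eval_C, eval_pow, eval_X, zero_pow k.succ_ne_zero, mul_zero,
      zero_add, hε.dvd_mul_left]
    exact mt hpp.dvd_of_dvd_pow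
      (hpp.coprime_iff_not_dvd.1 (h2p.symm.mul_right hu.of_mul_left_right))
  · compute_degree
    lia
  · exact Nat.coprime_two_right.2 (by grind)
  · intro z
    rw [mul_assoc]
    exact eval_polynomialCover_ne_zero hk hε
      (Int.prime_two.coprime_iff_not_dvd.1 (h2p.mul_right hu.of_mul_left_left)) z

theorem occursAsGaloisGroupOverRat_alternatingGroup_add_three (hk : Odd k) :
    OccursAsGaloisGroupOverRat (alternatingGroup (Fin (k + 3))) := by
  obtain ⟨p, hp, hpk⟩ := Nat.exists_prime_and_dvd (n := k + 2) (by lia)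
  have hε : IsUnit ((-1 : ℤ) ^ ((k + 3) * (k + 2) / 2)) := isUnit_neg_one.pow _
  refine occursAsGaloisGroupOverRat_alternatingGroup_of_family (F := polynomialCover k)
    (A := 1) (B := 0) (γ := (k + 2) * (k + 1)) (M := 2 * p) (b := 1) (c := 1)
    (fun _ => monic_polynomialCover) (fun _ => natDegree_polynomialCover) (fun T => ?_)
    (fun _ => discr_polynomialCover) (fun T => ?_) (fun T => ?_) hε (hk.add_odd (by decide)) hk
    (dvd_mul_right _ _) ?_ (by positivity) (by positivity) one_ne_zero one_ne_zero ?_ fun u hu =>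
      hasPrimitiveGaloisGroup_polynomialCover hk hp hpk hε hu
  · rw [one_mul, zero_mul, sub_zero, derivative_polynomialCover]
  · rw [eval_polynomialCover, zero_pow k.succ_ne_zero, zero_mul, zero_add, one_mul]
  · rw [eval_polynomialCover_branch, one_mul]
  · simp [hp.ne_zero]
  · rw [eval_one]
    exact one_ne_zero

end PolynomialCover

section RationalCover

/-- The numerator of the fibre over `T` of the map
`x ↦ x ^ (k + 1) * (x - (k + 2) ^ 2) / (x - k ^ 2)`, a cover of the line ramified to order `k + 1`
at `0` and `∞` and to order `3` at `(k + 2) * k`. It realises `Aₙ` for odd `n = k + 2`. -/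
noncomputable def rationalCover (k : ℕ) (T : ℤ) : ℤ[X] :=
  X ^ (k + 1) * (X - C ((k + 2) ^ 2 : ℤ)) - C T * (X - C (k ^ 2 : ℤ))

variable {k p : ℕ} {T ε u : ℤ}

lemma eval_rationalCover (z : ℤ) : (rationalCover k T).eval z =
    z ^ (k + 1) * (z - (k + 2) ^ 2) - T * (z - k ^ 2) := by
  simp only [rationalCover, eval_sub, eval_mul, eval_pow, eval_X, eval_C]

lemma natDegree_rationalCover : (rationalCover k T).natDegree = k + 2 := by
  rw [rationalCover]
  compute_degree!
  simp

lemma monic_rationalCover : (rationalCover k T).Monic := by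
  rw [rationalCover]
  monicity!

lemma derivative_rationalCover :
    (X - C (k ^ 2 : ℤ)) * derivative (rationalCover k T) - 1 * rationalCover k T =
      C (k + 1 : ℤ) * X ^ k * (X - C ((k + 2) * k : ℤ)) ^ 2 := by
  simp only [rationalCover, derivative_sub, derivative_mul, derivative_X_pow, derivative_C,
    derivative_X]
  simp only [map_mul, map_add, map_pow, map_natCast, map_ofNat, map_one, Nat.add_sub_cancel,
    Nat.cast_add, Nat.cast_one]
  ring

lemma eval_rationalCover_branch : (rationalCover k T).eval ((k + 2) * k : ℤ) =
    -(2 * k) * (k ^ k * (k + 2) ^ (k + 2) + T) := by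
  rw [eval_rationalCover, mul_pow]
  ring

lemma discr_rationalCover (hk : k ≠ 0) :
    (-1) ^ ((k + 2) * (k + 1) / 2 + 1) * (rationalCover k T).discr =
      (k + 1) ^ (k + 1) * T ^ k * (k ^ k * (k + 2) ^ (k + 2) + T) ^ 2 := by
  have h := resultant_mul_discr_of_derivative_eq monic_rationalCover
    (derivative_rationalCover (k := k) (T := T))
  have hsign : (-1 : ℤ) ^ ((k + 2) * k) = (-1) ^ k :=
    neg_one_pow_congr (by simp [Nat.even_mul, parity_simps])
  rw [natDegree_X_sub_C, resultant_X_sub_C_right _ _ _ le_rfl, natDegree_rationalCover,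
    coeff_zero_eq_eval_zero, eval_rationalCover, eval_rationalCover, eval_rationalCover_branch,
    hsign, Nat.add_sub_assoc one_le_two] at h
  have hne : ((-1) ^ k * (4 * (k + 1) * k ^ (2 * k + 2)) : ℤ) ≠ 0 :=
    mul_ne_zero (pow_ne_zero _ (by simp)) (by positivity)
  refine mul_left_cancel₀ hne ?_
  rw [zero_pow k.succ_ne_zero, zero_mul, zero_sub, zero_sub, mul_neg, neg_neg, mul_pow] at h
  linear_combination h

lemma isPretransitive_rootSet_rationalCover {L : Type*} [Field L] [NumberField L] [IsGalois ℚ L]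
    (hk : Odd k) (hp : p.Prime) (hpk : p ∣ k + 2) (hε : IsUnit ε) (hu : IsCoprime (2 * p : ℤ) u)
    (hprod : (rationalCover k (ε * (2 * p * u) ^ 2)).map (algebraMap ℤ (𝓞 L)) =
      ∏ x : (rationalCover k (ε * (2 * p * u) ^ 2)).rootSet (𝓞 L), (X - C (x : 𝓞 L))) :
    MulAction.IsPretransitive Gal(L/ℚ)
      ((rationalCover k (ε * (2 * p * u) ^ 2)).rootSet (𝓞 L)) := by
  have : Fact p.Prime := ⟨hp⟩
  have hpp := Nat.prime_iff_prime_int.1 hp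
  have hp2 : IsCoprime (p : ℤ) 2 := Nat.isCoprime_iff_coprime.2
    ((hk.add_even even_two).of_dvd_nat hpk).coprime_two_right
  obtain ⟨t, ht⟩ := hpk
  have ht : (k + 2 : ℤ) = p * t := mod_cast ht
  have hpk : IsCoprime (p : ℤ) k := by
    rw [show (k : ℤ) = -2 + p * t by linear_combination ht]
    exact hp2.neg_right.add_mul_left_right _
  refine isPretransitive_of_eq_X_pow_add (p := p) (n := k + 2) (s := 2)
    (g := -C (t ^ 2 : ℤ) * X ^ (k + 1) - C (ε * (2 * u) ^ 2) * (X - C (k ^ 2 : ℤ)))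
    (fun _ _ => rfl) hprod ?_ ?_ (by lia) ?_ ?_ two_ne_zero
    (hk.add_even even_two).coprime_two_right
  · rw [rationalCover, ht]
    simp only [map_mul, map_pow, map_natCast]
    ring
  · rw [card_eq_natDegree_of_map_eq_prod monic_rationalCover hprod, natDegree_rationalCover]
  · rw [coeff_zero_eq_eval_zero, show eval 0 _ = ε * (2 * u * k) ^ 2 by simp; ring,
      hε.dvd_mul_left]
    exact mt hpp.dvd_of_dvd_pow (hpp.coprime_iff_not_dvd.1
      ((hp2.mul_right hu.of_mul_left_right).mul_right hpk))
  · compute_degree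
    lia

lemma hasPrimitiveGaloisGroup_rationalCover (hk : Odd k) (hp : p.Prime) (hpk : p ∣ k + 2)
    (hε : IsUnit ε) (hu : IsCoprime (2 * p : ℤ) u) :
    HasPrimitiveGaloisGroup (rationalCover k (ε * (2 * p * u) ^ 2)) := by
  intro L _ _ _ hprod
  have : Fact (Nat.Prime 2) := ⟨Nat.prime_two⟩
  have h2p : IsCoprime (2 : ℤ) p := Nat.isCoprime_iff_coprime.2
    ((hk.add_even even_two).of_dvd_nat hpk).coprime_two_left
  have h2k : IsCoprime (2 : ℤ) k := Nat.isCoprime_iff_coprime.2 hk.coprime_two_left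
  have := isPretransitive_rootSet_rationalCover hk hp hpk hε hu hprod
  refine isPreprimitive_of_isPretransitive (p := 2) (m := k + 1) (c := (k + 2) ^ 2)
    (g := -C (ε * (p * u) ^ 2) * (X - C (k ^ 2 : ℤ))) (fun _ _ => rfl) hprod ?_ ?_ (by lia)
    ?_ ?_ ?_
  · rw [rationalCover]
    simp only [map_mul, map_pow, map_natCast, map_ofNat, Nat.cast_ofNat]
    ring
  · rw [card_eq_natDegree_of_map_eq_prod monic_rationalCover hprod, natDegree_rationalCover]
  · refine mt Int.prime_two.dvd_of_dvd_pow ?_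
    rw [dvd_add_self_right]
    exact Int.prime_two.coprime_iff_not_dvd.1 h2k
  · rw [coeff_zero_eq_eval_zero, show eval 0 _ = ε * (p * u * k) ^ 2 by simp; ring,
      hε.dvd_mul_left]
    exact mt Int.prime_two.dvd_of_dvd_pow (Int.prime_two.coprime_iff_not_dvd.1
      ((h2p.mul_right hu.of_mul_left_left).mul_right h2k))
  · compute_degree
    lia

theorem occursAsGaloisGroupOverRat_alternatingGroup_add_two (hk : Odd k) :
    OccursAsGaloisGroupOverRat (alternatingGroup (Fin (k + 2))) := by
  obtain ⟨p, hp, hpk⟩ := Nat.exists_prime_and_dvd (n := k + 2) (by lia)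
  have hk0 : k ≠ 0 := hk.pos.ne'
  have hε : IsUnit ((-1 : ℤ) ^ ((k + 2) * (k + 1) / 2 + 1)) := isUnit_neg_one.pow _
  refine occursAsGaloisGroupOverRat_alternatingGroup_of_family (F := rationalCover k)
    (γ := (k + 2) * k) (M := 2 * p) (b := k ^ 2)
    (fun _ => monic_rationalCover) (fun _ => natDegree_rationalCover)
    (fun _ => derivative_rationalCover)
    (fun _ => discr_rationalCover hk0) (fun T => ?_) (fun _ => eval_rationalCover_branch) hε
    hk.add_one hk (dvd_mul_right _ _) ?_ (by positivity) (by positivity) (by positivity) ?_ ?_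
    fun u hu => hasPrimitiveGaloisGroup_rationalCover hk hp hpk hε hu
  · rw [eval_rationalCover]
    ring
  · simp [hp.ne_zero]
  · simp [hk0]
  · rw [eval_sub, eval_X, eval_C]
    have : (0 : ℤ) < k := mod_cast hk.pos
    nlinarith

end RationalCover

theorem occursAsGaloisGroupOverRat_of_subsingleton (G : Type*) [Group G] [Subsingleton G] :
    OccursAsGaloisGroupOverRat G := by
  have : Subsingleton (ℚ ≃ₐ[ℚ] ℚ) :=
    ⟨fun f g => AlgEquiv.ext fun x => (f.commutes x).trans (g.commutes x).symm⟩
  have : Unique G := uniqueOfSubsingleton 1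
  have : Unique (ℚ ≃ₐ[ℚ] ℚ) := uniqueOfSubsingleton 1
  exact ⟨ℚ, inferInstance, inferInstance, inferInstance, inferInstance, ⟨MulEquiv.ofUnique⟩⟩

end HilbertAlternating

/-- **Hilbert.** For every natural number `n ≥ 1`, the alternating group `Aₙ` occurs as a
Galois group over `ℚ`. -/
theorem alternatingGroup_occurs_as_galoisGroup_over_rat (n : ℕ) (hn : 1 ≤ n) :
    ∃ (M : Type) (_ : Field M) (_ : Algebra ℚ M),
      FiniteDimensional ℚ M ∧ IsGalois ℚ M ∧
        Nonempty ((M ≃ₐ[ℚ] M) ≃* alternatingGroup (Fin n)) := by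
  rcases le_or_gt n 2 with hn2 | hn2
  · have : Subsingleton (alternatingGroup (Fin n)) := by
      interval_cases n <;> exact Fintype.card_le_one_iff_subsingleton.1 (by decide)
    exact HilbertAlternating.occursAsGaloisGroupOverRat_of_subsingleton _
  · rcases n.even_or_odd with heven | hodd
    · obtain ⟨k, rfl⟩ := Nat.exists_eq_add_of_le' (show 3 ≤ n from hn2)
      exact HilbertAlternating.occursAsGaloisGroupOverRat_alternatingGroup_add_three (by grind)
    · obtain ⟨k, rfl⟩ := Nat.exists_eq_add_of_le' hn2.le
      exact HilbertAlternating.occursAsGaloisGroupOverRat_alternatingGroup_add_two (by grind)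
end

section
/- Let f(t, X) ∈ ℚ[t][X] be a polynomial in X with coefficients in ℚ[t] which has degree at least 1 in X and is irreducible as a polynomial in X over the rational function field ℚ(t). Then the set of rational numbers a ∈ ℚ such that the specialized polynomial f(a, X) ∈ ℚ[X] has the same degree in X and is irreducible over ℚ is infinite. (This is the Hilbert Irreducibility Theorem: ℚ is Hilbertian.) -/
/-!
Choose `a ∈ ℚ` for which `f(a, Y)` is separable of full degree, so that near `a` the roots of
`f(x, Y)` are analytic functions `ξ_i(x)`. If `f(a + 1/s, Y)` is reducible for all large `s`, then
each of these polynomials has a monic rational factor, the product of the `Y - ξ_i(a + 1/s)` over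
some index set `ω`. By van der Waerden's theorem one and the same `ω` occurs along arbitrarily long
arithmetic progressions. For a coefficient `φ(a + 1/s)` of that factor, multiplied by a fixed
polynomial that clears denominators, `s ^ N * φ(a + 1/s)` is an integer at these `s`, and it is a
polynomial in `s` plus a null sequence. A high enough difference along the progression kills the
polynomial and is an integer tending to zero, hence vanishes; so `φ` is a polynomial, with rational
coefficients since it is rational at rational points. Thus, up to a scalar factor, the product over
`ω` is `G(x, Y)` for some `G ∈ ℚ[t][Y]` of smaller degree than `f`, which has a common factor with
`f(x, Y)` at infinitely many `x`, although `f` and `G` are coprime over `ℚ(t)`.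
-/

open Polynomial Filter Topology

namespace HilbertIrreducibility

section ArithmeticProgressions

/-- A set of natural numbers is *AP-rich* if for every `k` there is a step `h > 0` such that it
contains infinitely many of the progressions `s, s + h, …, s + k * h`. -/
def IsAPRich (S : Set ℕ) : Prop :=
  ∀ k : ℕ, ∃ h > 0, ∃ᶠ s in atTop, ∀ j ≤ k, s + j * h ∈ S

variable {S T : Set ℕ}

theorem IsAPRich.mono_of_eventually (hS : IsAPRich S) (hST : ∀ᶠ s in atTop, s ∈ S → s ∈ T) :
    IsAPRich T := fun k ↦
  let ⟨h, h_pos, hSh⟩ := hS k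
  ⟨h, h_pos, (hSh.and_eventually (eventually_forall_ge_atTop.2 hST)).mono fun _ ⟨hs, hsT⟩ j hj ↦
    hsT _ (Nat.le_add_right _ _) (hs j hj)⟩

theorem IsAPRich.frequently (hS : IsAPRich S) : ∃ᶠ s in atTop, s ∈ S :=
  let ⟨_, _, hSh⟩ := hS 0
  hSh.mono fun s hs ↦ by simpa using hs 0 le_rfl

/- Van der Waerden's theorem is applied to the limit, along a non-principal ultrafilter in `s`, of
the colourings `m ↦ (colour of s + m)`: a progression `b + j * h` that is monochromatic in the
limit gives the progressions `s + b + j * h` with the same step for infinitely many `s`. -/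
theorem exists_isAPRich_of_eventually_mem {ι : Type*} [Finite ι] {S : ι → Set ℕ}
    (hS : ∀ᶠ s in atTop, ∃ i, s ∈ S i) : ∃ i, IsAPRich (S i) := by
  by_contra hpoor
  simp only [IsAPRich, not_exists, not_and, not_forall] at hpoor
  choose k hk using hpoor
  obtain ⟨K, hkK⟩ := (Set.finite_range k).bddAbove
  have hcolor (m : ℕ) : ∃ i, ∀ᶠ s in (hyperfilter ℕ : Filter ℕ), s + m ∈ S i :=
    Ultrafilter.eventually_exists_iff.1
      (((tendsto_add_atTop_nat m).eventually hS).filter_mono Nat.hyperfilter_le_atTop)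
  choose color hcolor using hcolor
  obtain ⟨h, h_pos, b, i, hmono⟩ :=
    Combinatorics.exists_mono_homothetic_copy (Finset.range (K + 1)) color
  have hAP : ∀ᶠ s in (hyperfilter ℕ : Filter ℕ), ∀ j ∈ Finset.range (K + 1), s + b + j * h ∈ S i :=
    (eventually_all_finset _).2 fun j hj ↦ (hcolor (h • j + b)).mono fun s hs ↦ by
      rwa [hmono j hj, show s + (h • j + b) = s + b + j * h by rw [smul_eq_mul]; ring] at hs
  refine hk i h h_pos ((tendsto_add_atTop_nat b).frequently ?_)
  refine (hAP.frequently.filter_mono Nat.hyperfilter_le_atTop).mono fun s hs j hj ↦ hs j ?_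
  exact Finset.mem_range_succ_iff.2 (hj.trans (hkK ⟨i, rfl⟩))

end ArithmeticProgressions

section ForwardDifferences

theorem fwdDiff_iter_mem {M G σ : Type*} [AddCommMonoid M] [AddCommGroup G] [SetLike σ G]
    [AddSubgroupClass σ G] {A : σ} {f : M → G} {h x : M} {k : ℕ}
    (hf : ∀ j ≤ k, f (x + j • h) ∈ A) : (fwdDiff h)^[k] f x ∈ A := by
  rw [fwdDiff_iter_eq_sum_shift]
  exact sum_mem fun j hj ↦ zsmul_mem (hf j (Finset.mem_range_succ_iff.1 hj)) _

theorem fwdDiff_iter_eval_natCast_eq_zero {R : Type*} [CommRing R] {P : R[X]} {k : ℕ}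
    (hk : P.natDegree < k) (h s : ℕ) :
    (fwdDiff h)^[k] (fun n : ℕ ↦ P.eval (n : R)) s = 0 := by
  have hdeg : (P.comp (C (h : R) * X + C (s : R))).natDegree < k :=
    (natDegree_comp_le.trans (mul_le_of_le_one_right' natDegree_linear_le)).trans_lt hk
  have := congrFun (fwdDiff_iter_eq_zero_of_degree_lt hdeg) 0
  simpa [fwdDiff_iter_eq_sum_shift, mul_comm, add_comm] using this

variable {G : Type*} [AddCommGroup G] [TopologicalSpace G]

theorem tendsto_fwdDiff_iter_zero [IsTopologicalAddGroup G] {y : ℕ → G}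
    (hy : Tendsto y atTop (𝓝 0)) (h k : ℕ) :
    Tendsto ((fwdDiff h)^[k] y) atTop (𝓝 0) := by
  induction k with
  | zero => exact hy
  | succ k ih =>
    rw [Function.iterate_succ_apply', ← sub_self 0]
    exact (ih.comp (tendsto_add_atTop_nat h)).sub ih

theorem eventually_eq_zero_of_fwdDiff [T2Space G] {y : ℕ → G} {h : ℕ} (h_pos : 0 < h)
    (hy : Tendsto y atTop (𝓝 0)) (hΔ : ∀ᶠ s in atTop, fwdDiff h y s = 0) :
    ∀ᶠ s in atTop, y s = 0 := by
  filter_upwards [eventually_forall_ge_atTop.2 hΔ] with s hs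
  have hperiodic (m : ℕ) : y (s + m * h) = y s := by
    induction m with
    | zero => simp
    | succ m ih =>
      rw [← ih, add_one_mul, ← add_assoc]
      exact sub_eq_zero.1 (hs _ (Nat.le_add_right _ _))
  have hsub : Tendsto (fun m ↦ s + m * h) atTop atTop :=
    tendsto_atTop_mono (fun m ↦ le_add_left (Nat.le_mul_of_pos_right m h_pos)) tendsto_id
  exact tendsto_nhds_unique
    (tendsto_const_nhds.congr fun m ↦ (hperiodic m).symm) (hy.comp hsub)

theorem eventually_eq_zero_of_fwdDiff_iter [IsTopologicalAddGroup G] [T2Space G] {y : ℕ → G}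
    {h k : ℕ} (h_pos : 0 < h) (hy : Tendsto y atTop (𝓝 0))
    (hΔ : ∀ᶠ s in atTop, (fwdDiff h)^[k] y s = 0) : ∀ᶠ s in atTop, y s = 0 := by
  induction k with
  | zero => exact hΔ
  | succ k ih =>
    rw [Function.iterate_succ_apply'] at hΔ
    exact ih (eventually_eq_zero_of_fwdDiff h_pos (tendsto_fwdDiff_iter_zero hy h k) hΔ)

end ForwardDifferences

section AnalyticFunctions

variable {𝕜 : Type*} [RCLike 𝕜]

theorem tendsto_add_inv_natCast (a : 𝕜) :
    Tendsto (fun s : ℕ ↦ a + (s : 𝕜)⁻¹) atTop (𝓝[≠] a) := by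
  refine tendsto_nhdsWithin_iff.2 ⟨?_, ?_⟩
  · simpa using tendsto_inv_atTop_nhds_zero_nat.const_add a
  · filter_upwards [eventually_ne_atTop 0] with s hs
    simpa using hs

theorem tendsto_ratCast_add_inv_natCast (a : ℚ) :
    Tendsto (fun s : ℕ ↦ ((a + (s : ℚ)⁻¹ : ℚ) : 𝕜)) atTop (𝓝[≠] (a : 𝕜)) := by
  simpa using tendsto_add_inv_natCast (a : 𝕜)

theorem eventually_eq_zero_of_frequently_add_inv {v : 𝕜 → 𝕜} {a : 𝕜} (hv : AnalyticAt 𝕜 v a)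
    (hzero : ∃ᶠ s : ℕ in atTop, v (a + (s : 𝕜)⁻¹) = 0) : ∀ᶠ x in 𝓝 a, v x = 0 :=
  hv.frequently_zero_iff_eventually_zero.1 ((tendsto_add_inv_natCast a).frequently hzero)

theorem frequently_eq_zero_of_mem_range_intCast {y : ℕ → 𝕜} (hy : Tendsto y atTop (𝓝 0))
    (hint : ∃ᶠ s in atTop, y s ∈ (Int.castRingHom 𝕜).range) : ∃ᶠ s in atTop, y s = 0 := by
  have hsmall : ∀ᶠ s in atTop, ‖y s‖ < 1 := hy.norm.eventually_lt_const (by simp)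
  refine (hint.and_eventually hsmall).mono fun s ⟨⟨n, hn⟩, hs⟩ ↦ ?_
  rw [← hn, eq_intCast, ← RCLike.ofReal_intCast, RCLike.norm_ofReal] at hs
  have hn0 : n = 0 := Int.abs_lt_one_iff.1 (by exact_mod_cast hs)
  rw [← hn, hn0, map_zero]

theorem exists_analyticAt_fwdDiff_iter {w : 𝕜 → 𝕜} (hw : AnalyticAt 𝕜 w 0) (h k : ℕ) :
    ∃ v : 𝕜 → 𝕜, AnalyticAt 𝕜 v 0 ∧
      ∀ᶠ s : ℕ in atTop, (fwdDiff h)^[k] (fun n : ℕ ↦ w (n : 𝕜)⁻¹) s = v (s : 𝕜)⁻¹ := by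
  induction k with
  | zero => exact ⟨w, hw, .of_forall fun _ ↦ rfl⟩
  | succ k ih =>
    obtain ⟨v, hv, hΔ⟩ := ih
    have hshift : AnalyticAt 𝕜 (fun u : 𝕜 ↦ u / (1 + h * u)) 0 := by
      fun_prop (disch := simp)
    refine ⟨fun u ↦ v (u / (1 + h * u)) - v u, (hv.comp_of_eq hshift (by simp)).sub hv, ?_⟩
    filter_upwards [hΔ, (tendsto_add_atTop_nat h).eventually hΔ, eventually_ne_atTop 0]
      with s hs hsh hs0
    have hinv : ((s + h : ℕ) : 𝕜)⁻¹ = (s : 𝕜)⁻¹ / (1 + h * (s : 𝕜)⁻¹) := by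
      have : (s : 𝕜) ≠ 0 := Nat.cast_ne_zero.2 hs0
      push_cast
      field_simp
    rw [Function.iterate_succ_apply', fwdDiff, hs, hsh, hinv]

theorem exists_eq_eval_add_pow_mul {φ : 𝕜 → 𝕜} (hφ : AnalyticAt 𝕜 φ 0) (N : ℕ) :
    ∃ (T : 𝕜[X]) (w : 𝕜 → 𝕜), T.natDegree ≤ N ∧ AnalyticAt 𝕜 w 0 ∧ w 0 = 0 ∧
      ∀ u, φ u = T.eval u + u ^ N * w u := by
  obtain ⟨R, hR, hφR⟩ := hφ.exists_eq_sum_add_pow_mul (N + 1)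
  refine ⟨∑ i ∈ Finset.range (N + 1), C (iteratedDeriv i φ 0 / i.factorial) * X ^ i,
    fun u ↦ u * R u, natDegree_sum_le_of_forall_le _ _ fun i hi ↦ ?_, analyticAt_id.mul hR,
    zero_mul _, fun u ↦ ?_⟩
  · exact (natDegree_C_mul_X_pow_le _ _).trans (Finset.mem_range_succ_iff.1 hi)
  · simp only [hφR u, eval_finsetSum, eval_C_mul, eval_X_pow, smul_eq_mul, pow_succ, mul_assoc]
    simp only [div_mul_eq_mul_div, mul_comm (u ^ _)]

theorem pow_mul_eval_inv {K : Type*} [Field K] {T : K[X]} {N : ℕ} (hT : T.natDegree ≤ N) {x : K}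
    (hx : x ≠ 0) : x ^ N * T.eval x⁻¹ = (T.reflect N).eval x := by
  let := invertibleOfNonzero (inv_ne_zero hx)
  have hreflect := eval₂_reflect_mul_pow (RingHom.id K) x⁻¹ N T hT
  rw [invOf_eq_inv, inv_inv, inv_pow, ← div_eq_mul_inv, div_eq_iff (pow_ne_zero N hx)] at hreflect
  exact (mul_comm _ _).trans hreflect.symm

theorem eventually_eq_zero_of_isAPRich_add {w : 𝕜 → 𝕜} (hw : AnalyticAt 𝕜 w 0) (hw0 : w 0 = 0)
    (Q : 𝕜[X])
    (hAP : IsAPRich {s : ℕ | Q.eval (s : 𝕜) + w (s : 𝕜)⁻¹ ∈ (Int.castRingHom 𝕜).range}) :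
    ∀ᶠ u in 𝓝 0, w u = 0 := by
  obtain ⟨h, h_pos, hAP⟩ := hAP (Q.natDegree + 1)
  have hnull : Tendsto (fun n : ℕ ↦ w (n : 𝕜)⁻¹) atTop (𝓝 0) :=
    hw0 ▸ hw.continuousAt.tendsto.comp tendsto_inv_atTop_nhds_zero_nat
  have hΔ_int : ∃ᶠ s in atTop, (fwdDiff h)^[Q.natDegree + 1] (fun n : ℕ ↦ w (n : 𝕜)⁻¹) s ∈
      (Int.castRingHom 𝕜).range := by
    refine hAP.mono fun s hs ↦ ?_
    have hmem := fwdDiff_iter_mem (A := (Int.castRingHom 𝕜).range)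
      (f := (fun n : ℕ ↦ Q.eval (n : 𝕜)) + fun n : ℕ ↦ w (n : 𝕜)⁻¹) hs
    rwa [fwdDiff_iter_add, Pi.add_apply,
      fwdDiff_iter_eval_natCast_eq_zero (Nat.lt_succ_self _), zero_add] at hmem
  obtain ⟨v, hv, hΔ⟩ := exists_analyticAt_fwdDiff_iter hw h (Q.natDegree + 1)
  have hv_zero : ∀ᶠ u in 𝓝 0, v u = 0 := by
    have hΔ_zero := frequently_eq_zero_of_mem_range_intCast (tendsto_fwdDiff_iter_zero hnull h _)
      hΔ_int
    refine eventually_eq_zero_of_frequently_add_inv hv ((hΔ_zero.and_eventually hΔ).mono ?_)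
    rintro s ⟨hs, hsv⟩
    rw [zero_add, ← hsv, hs]
  have hw_zero : ∀ᶠ s : ℕ in atTop, w (s : 𝕜)⁻¹ = 0 := by
    refine eventually_eq_zero_of_fwdDiff_iter (k := Q.natDegree + 1) h_pos hnull ?_
    filter_upwards [hΔ, tendsto_inv_atTop_nhds_zero_nat.eventually hv_zero] with s hs hvs
    rw [hs, hvs]
  refine eventually_eq_zero_of_frequently_add_inv hw ?_
  simpa only [zero_add] using hw_zero.frequently

theorem exists_eventually_eq_eval_of_isAPRich {φ : 𝕜 → 𝕜} (hφ : AnalyticAt 𝕜 φ 0) {N : ℕ}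
    (hAP : IsAPRich {s : ℕ | (s : 𝕜) ^ N * φ (s : 𝕜)⁻¹ ∈ (Int.castRingHom 𝕜).range}) :
    ∃ T : 𝕜[X], ∀ᶠ u in 𝓝 0, φ u = T.eval u := by
  obtain ⟨T, w, hT, hw, hw0, hφT⟩ := exists_eq_eval_add_pow_mul hφ N
  have hw_zero : ∀ᶠ u in 𝓝 0, w u = 0 := by
    refine eventually_eq_zero_of_isAPRich_add hw hw0 (T.reflect N) (hAP.mono_of_eventually ?_)
    filter_upwards [eventually_ne_atTop 0] with s hs hmem
    have hs : (s : 𝕜) ≠ 0 := Nat.cast_ne_zero.2 hs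
    rwa [hφT, mul_add, pow_mul_eval_inv hT hs, ← mul_assoc, ← mul_pow,
      mul_inv_cancel₀ hs, one_pow, one_mul] at hmem
  exact ⟨T, hw_zero.mono fun u hu ↦ by rw [hφT, hu, mul_zero, add_zero]⟩

end AnalyticFunctions

section Descent

theorem mem_lifts_of_infinite_eval_mem_range {K L : Type*} [Field K] [Field L] (i : K →+* L)
    {P : L[X]} (hP : {x : K | P.eval (i x) ∈ i.range}.Infinite) : P ∈ lifts i := by
  obtain ⟨t, ht, hcard⟩ := hP.exists_subset_card_eq (P.natDegree + 1)
  choose! r hr using show ∀ x : K, P.eval (i x) ∈ i.range → ∃ y, i y = P.eval (i x) from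
    fun _ ↦ id
  classical
  refine ⟨Lagrange.interpolate t id r, ?_⟩
  refine eq_of_degrees_lt_of_eval_index_eq (v := i) t i.injective.injOn ?_ ?_ fun x hx ↦ ?_
  · rw [coe_mapRingHom, degree_map]
    exact Lagrange.degree_interpolate_lt r Function.injective_id.injOn
  · exact hcard ▸ degree_le_natDegree.trans_lt (Nat.cast_lt.2 (Nat.lt_succ_self _))
  · rw [coe_mapRingHom, eval_map_apply, ← id_eq x,
      Lagrange.eval_interpolate_at_node r Function.injective_id.injOn hx, id_eq, hr x (ht hx)]

theorem tendsto_add_inv_natCast_cofinite {K : Type*} [Field K] [CharZero K] (a : K) :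
    Tendsto (fun s : ℕ ↦ a + (s : K)⁻¹) atTop cofinite :=
  Nat.cofinite_eq_atTop ▸
    ((add_right_injective a).comp (inv_injective.comp Nat.cast_injective)).tendsto_cofinite

theorem infinite_setOf_of_frequently_add_inv {K : Type*} [Field K] [CharZero K] {p : K → Prop}
    {a : K} (hp : ∃ᶠ s : ℕ in atTop, p (a + (s : K)⁻¹)) : {x | p x}.Infinite :=
  frequently_cofinite_iff_infinite.1 ((tendsto_add_inv_natCast_cofinite a).frequently hp)

variable {𝕜 : Type*} [RCLike 𝕜]

theorem exists_eventually_eq_aeval_of_isAPRich {Φ : 𝕜 → 𝕜} {a : ℚ} (hΦ : AnalyticAt 𝕜 Φ a) {N : ℕ}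
    (hAP : IsAPRich
      {s : ℕ | (s : 𝕜) ^ N * Φ ((a + (s : ℚ)⁻¹ : ℚ) : 𝕜) ∈ (Int.castRingHom 𝕜).range}) :
    ∃ P : ℚ[X], ∀ᶠ x in 𝓝 (a : 𝕜), Φ x = aeval x P := by
  have hshift : AnalyticAt 𝕜 (fun u ↦ Φ (a + u)) 0 := hΦ.comp_of_eq (by fun_prop) (add_zero _)
  push_cast at hAP
  obtain ⟨T, hT⟩ := exists_eventually_eq_eval_of_isAPRich hshift hAP
  have hTs : ∀ᶠ s : ℕ in atTop, Φ (a + (s : 𝕜)⁻¹) = T.eval (s : 𝕜)⁻¹ :=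
    tendsto_inv_atTop_nhds_zero_nat.eventually hT
  have hrat : ∃ᶠ s : ℕ in atTop,
      T.eval (algebraMap ℚ 𝕜 (0 + (s : ℚ)⁻¹)) ∈ (algebraMap ℚ 𝕜).range := by
    refine (hAP.frequently.and_eventually (hTs.and (eventually_ne_atTop 0))).mono ?_
    rintro s ⟨⟨n, hn⟩, hs, hs0⟩
    refine ⟨n / s ^ N, ?_⟩
    rw [hs, eq_intCast] at hn
    rw [map_div₀, map_pow, map_natCast, map_intCast, zero_add, map_inv₀, map_natCast, hn,
      mul_div_cancel_left₀ _ (pow_ne_zero N (Nat.cast_ne_zero.2 hs0))]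
  obtain ⟨Q, rfl⟩ := mem_lifts_of_infinite_eval_mem_range (algebraMap ℚ 𝕜)
    (infinite_setOf_of_frequently_add_inv hrat)
  refine ⟨Q.comp (X - C a), ?_⟩
  have hsub : Tendsto (fun x : 𝕜 ↦ x - a) (𝓝 a) (𝓝 0) := by
    simpa using (continuous_sub_right (a : 𝕜)).tendsto a
  filter_upwards [hsub.eventually hT] with x hx
  rw [add_sub_cancel] at hx
  simp [hx, aeval_def, eval_map]

end Descent

section Specialization

/-- The specialization `f(x, Y)` of `f(t, Y) ∈ K[t][Y]` at a point `x` of a `K`-algebra. -/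
noncomputable abbrev specialize {K L : Type*} [CommSemiring K] [CommSemiring L] [Algebra K L]
    (f : K[X][X]) (x : L) : L[X] :=
  f.map (aeval (R := K) x : K[X] →+* L)

variable {K L : Type*} [CommSemiring K] [CommSemiring L] [Algebra K L] {f : K[X][X]} {x : L}

theorem natDegree_specialize (hlc : aeval x f.leadingCoeff ≠ 0) :
    (specialize f x).natDegree = f.natDegree :=
  natDegree_map_of_leadingCoeff_ne_zero _ hlc

theorem leadingCoeff_specialize (hlc : aeval x f.leadingCoeff ≠ 0) :
    (specialize f x).leadingCoeff = aeval x f.leadingCoeff :=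
  leadingCoeff_map_of_leadingCoeff_ne_zero _ hlc

theorem map_specialize (f : K[X][X]) (a : K) :
    (specialize f a).map (algebraMap K L) = specialize f (algebraMap K L a) := by
  rw [specialize, specialize, Polynomial.map_map]
  congr 1
  ext <;> simp

end Specialization

section AnalyticRoots
variable {𝕜 : Type*} [RCLike 𝕜]

theorem exists_analyticAt_implicit {Φ : 𝕜 × 𝕜 → 𝕜} {a b d : 𝕜} (hΦ : AnalyticAt 𝕜 Φ (a, b))
    (hd : HasDerivAt (fun y ↦ Φ (a, y)) d b) (hd0 : d ≠ 0) :
    ∃ ξ : 𝕜 → 𝕜, AnalyticAt 𝕜 ξ a ∧ ξ a = b ∧ ∀ᶠ x in 𝓝 a, Φ (x, ξ x) = Φ (a, b) := by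
  have hpartial : HasFDerivAt (fun y ↦ Φ (a, y)) (fderiv 𝕜 Φ (a, b) ∘L .inr 𝕜 𝕜 𝕜) b :=
    hΦ.differentiableAt.hasFDerivAt.comp b (hasFDerivAt_prodMk_right a b)
  have hinv : (fderiv 𝕜 Φ (a, b) ∘L .inr 𝕜 𝕜 𝕜).IsInvertible := by
    refine ⟨ContinuousLinearEquiv.unitsEquivAut 𝕜 (Units.mk0 d hd0), ?_⟩
    rw [hpartial.unique hd.hasFDerivAt]
    ext
    simp
  have hcd : ContDiffAt 𝕜 ⊤ Φ (a, b) := hΦ.contDiffAt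
  exact ⟨hcd.implicitFunction (by simp) hinv,
    (hcd.contDiffAt_implicitFunction (by simp) hinv).analyticAt,
    hcd.implicitFunction_apply_self (by simp) hinv,
    hcd.eventually_apply_implicitFunction (by simp) hinv⟩

variable {K : Type*} [CommRing K] [Algebra K 𝕜]

theorem analyticAt_eval_specialize (f : K[X][X]) (z : 𝕜 × 𝕜) :
    AnalyticAt 𝕜 (fun z : 𝕜 × 𝕜 ↦ (specialize f z.1).eval z.2) z := by
  simp only [eval_map, eval₂_eq_sum_range]
  refine Finset.analyticAt_fun_sum _ fun i _ ↦ .mul ?_ (analyticAt_snd.pow i)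
  exact analyticAt_fst.aeval_polynomial (f.coeff i)

theorem exists_analyticAt_root (f : K[X][X]) {a b : 𝕜} (hroot : (specialize f a).IsRoot b)
    (hsimple : (specialize f a).derivative.eval b ≠ 0) :
    ∃ ξ : 𝕜 → 𝕜, AnalyticAt 𝕜 ξ a ∧ ξ a = b ∧ ∀ᶠ x in 𝓝 a, (specialize f x).IsRoot (ξ x) := by
  obtain ⟨ξ, hξ, hξa, hξ_root⟩ := exists_analyticAt_implicit (analyticAt_eval_specialize f (a, b))
    ((specialize f a).hasDerivAt b) hsimple
  exact ⟨ξ, hξ, hξa, hξ_root.mono fun x hx ↦ hx.trans hroot⟩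

theorem eventually_leadingCoeff_ne_zero (f : K[X][X]) {a : 𝕜} (hlc : aeval a f.leadingCoeff ≠ 0) :
    ∀ᶠ x in 𝓝 a, aeval x f.leadingCoeff ≠ 0 :=
  f.leadingCoeff.continuous_aeval.continuousAt.eventually_ne hlc

theorem exists_analytic_factorization (f : K[X][X]) {a : 𝕜} (hlc : aeval a f.leadingCoeff ≠ 0)
    (hsep : (specialize f a).Separable) (hsplit : (specialize f a).Splits) :
    ∃ (B : Finset 𝕜) (ξ : B → 𝕜 → 𝕜), (∀ b, AnalyticAt 𝕜 (ξ b) a) ∧ ∀ᶠ x in 𝓝 a,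
      specialize f x = C (aeval x f.leadingCoeff) * ∏ b, (X - C (ξ b x)) := by
  classical
  have hroot (b : (specialize f a).roots.toFinset) : (specialize f a).IsRoot b :=
    isRoot_of_mem_roots (Multiset.mem_toFinset.1 b.2)
  choose ξ hξ hξa hξ_root using fun b ↦ exists_analyticAt_root f (hroot b)
    (Separable.aeval_derivative_ne_zero hsep (hroot b))
  have hξ_inj : ∀ᶠ x in 𝓝 a, Function.Injective fun b ↦ ξ b x := by
    have hne : ∀ᶠ x in 𝓝 a, ∀ b c, b ≠ c → ξ b x ≠ ξ c x := by
      simp only [eventually_all]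
      intro b c hbc
      refine ((hξ b).continuousAt.ne_iff_eventually_ne (hξ c).continuousAt).1 ?_
      rwa [hξa, hξa, Subtype.coe_ne_coe]
    exact hne.mono fun x hx b c hbc ↦ not_ne_iff.1 fun h ↦ hx b c h hbc
  refine ⟨_, ξ, hξ, ?_⟩
  filter_upwards [eventually_leadingCoeff_ne_zero f hlc, hξ_inj, eventually_all.2 hξ_root]
    with x hlcx hinj hrootx
  have hdvd : ∏ b, (X - C (ξ b x)) ∣ specialize f x :=
    Finset.prod_dvd_of_coprime ((pairwise_coprime_X_sub_C hinj).set_pairwise _)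
      fun b _ ↦ dvd_iff_isRoot.2 (hrootx b)
  have hdeg : (specialize f x).natDegree ≤ (∏ b, (X - C (ξ b x))).natDegree := by
    rw [natDegree_finsetProd_X_sub_C_eq_card, Finset.card_univ, Fintype.card_coe,
      Multiset.toFinset_card_of_nodup (nodup_roots hsep), ← hsplit.natDegree_eq_card_roots,
      natDegree_specialize hlc]
    exact natDegree_map_le
  rw [eq_leadingCoeff_mul_of_monic_of_dvd_of_natDegree_le (monic_prod_X_sub_C _ _) hdvd hdeg,
    leadingCoeff_specialize hlcx]

end AnalyticRoots

section GenericSpecialization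

theorem exists_forall_isCoprime_map {R K : Type*} [CommRing R] [Nontrivial R] [CommRing K]
    [Algebra R K] [IsFractionRing R K] {f g : R[X]}
    (hfg : IsCoprime (f.map (algebraMap R K)) (g.map (algebraMap R K))) :
    ∃ d : R, d ≠ 0 ∧ ∀ {L : Type*} [Field L] (φ : R →+* L), φ d ≠ 0 →
      IsCoprime (f.map φ) (g.map φ) := by
  obtain ⟨u, v, huv⟩ := hfg
  obtain ⟨b, hb, hu⟩ := IsLocalization.integerNormalization_spec (nonZeroDivisors R) u
  obtain ⟨c, hc, hv⟩ := IsLocalization.integerNormalization_spec (nonZeroDivisors R) v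
  set U := IsLocalization.integerNormalization (nonZeroDivisors R) u
  set V := IsLocalization.integerNormalization (nonZeroDivisors R) v
  have hUV : C c * U * f + C b * V * g = C (b * c) := by
    apply map_injective _ (IsFractionRing.injective R K)
    simp only [Polynomial.map_add, Polynomial.map_mul, map_C, hu, hv, map_mul,
      ← algebraMap_smul K b u, ← algebraMap_smul K c v, smul_eq_C_mul]
    linear_combination (C (algebraMap R K b) * C (algebraMap R K c)) * huv
  refine ⟨b * c, nonZeroDivisors.ne_zero (mul_mem hb hc), fun φ hφ ↦
    ⟨C (φ (b * c))⁻¹ * (C c * U).map φ, C (φ (b * c))⁻¹ * (C b * V).map φ, ?_⟩⟩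
  rw [mul_assoc, mul_assoc, ← mul_add, ← Polynomial.map_mul, ← Polynomial.map_mul,
    ← Polynomial.map_add, hUV, map_C, ← C_mul, inv_mul_cancel₀ hφ, C_1]

theorem eventually_cofinite_aeval_ne_zero {K L : Type*} [Field K] [CommRing L] [IsDomain L]
    [Algebra K L] {p : K[X]} (hp : p ≠ 0) : ∀ᶠ x : L in cofinite, aeval x p ≠ 0 := by
  filter_upwards [(p.rootSet_finite L).compl_mem_cofinite] with x hx hroot
  exact hx ((mem_rootSet_of_ne hp).2 hroot)

theorem eventually_aeval_add_inv_ne_zero {K : Type*} [Field K] [CharZero K] {p : K[X]}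
    (hp : p ≠ 0) (a : K) : ∀ᶠ s : ℕ in atTop, aeval (a + (s : K)⁻¹) p ≠ 0 :=
  (tendsto_add_inv_natCast_cofinite a).eventually (eventually_cofinite_aeval_ne_zero hp)

theorem eventually_isCoprime_specialize {K L : Type*} [Field K] [Field L] [Algebra K L]
    {f g : K[X][X]} (hfg : IsCoprime (f.map (algebraMap K[X] (RatFunc K)))
      (g.map (algebraMap K[X] (RatFunc K)))) :
    ∀ᶠ x : L in cofinite, IsCoprime (specialize f x) (specialize g x) :=
  let ⟨_, hd, hcoprime⟩ := exists_forall_isCoprime_map hfg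
  (eventually_cofinite_aeval_ne_zero hd).mono fun _ hx ↦ hcoprime _ hx

end GenericSpecialization

section Divisors

theorem exists_isPrimitive_map_eq_C_mul (R : Type*) {K : Type*} [CommRing R] [IsDomain R]
    [NormalizedGCDMonoid R] [Field K] [Algebra R K] [IsFractionRing R K] {p : K[X]} (hp : p ≠ 0) :
    ∃ (P : R[X]) (u : K), P.IsPrimitive ∧ u ≠ 0 ∧ P.map (algebraMap R K) = C u * p := by
  obtain ⟨b, hb, hbp⟩ := IsLocalization.integerNormalization_spec (nonZeroDivisors R) p
  set Q := IsLocalization.integerNormalization (nonZeroDivisors R) p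
  have hb0 : algebraMap R K b ≠ 0 := IsFractionRing.to_map_ne_zero_of_mem_nonZeroDivisors hb
  rw [← algebraMap_smul K b p, smul_eq_C_mul] at hbp
  have hQ0 : Q ≠ 0 := by
    rintro hQ
    rw [hQ, Polynomial.map_zero] at hbp
    exact mul_ne_zero (C_ne_zero.2 hb0) hp hbp.symm
  have hc0 : algebraMap R K Q.content ≠ 0 := by
    rwa [Ne, FaithfulSMul.algebraMap_eq_zero_iff, content_eq_zero_iff]
  refine ⟨Q.primPart, (algebraMap R K Q.content)⁻¹ * algebraMap R K b, Q.isPrimitive_primPart,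
    mul_ne_zero (inv_ne_zero hc0) hb0, ?_⟩
  have hcQ : C (algebraMap R K Q.content) * Q.primPart.map (algebraMap R K) =
      C (algebraMap R K b) * p := by
    rw [← hbp, ← map_C, ← Polynomial.map_mul, ← Q.eq_C_content_mul_primPart]
  rw [C_mul, mul_assoc, ← hcQ, ← mul_assoc, ← C_mul, inv_mul_cancel₀ hc0, C_1, one_mul]

theorem C_leadingCoeff_mul_mem_lifts_of_monic_of_dvd_map {R K : Type*} [CommRing R] [IsDomain R]
    [NormalizedGCDMonoid R] [Field K] [Algebra R K] [IsFractionRing R K] {p : K[X]} {q : R[X]}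
    (hp : p.Monic) (hpq : p ∣ q.map (algebraMap R K)) :
    C (algebraMap R K q.leadingCoeff) * p ∈ lifts (algebraMap R K) := by
  obtain ⟨P, u, hP, hu, hPp⟩ := exists_isPrimitive_map_eq_C_mul R hp.ne_zero
  obtain ⟨Q, rfl⟩ : P ∣ q := hP.dvd_of_fraction_map_dvd_fraction_map <| by
    rwa [hPp, (isUnit_C.2 hu.isUnit).mul_left_dvd]
  have hu_eq : u = algebraMap R K P.leadingCoeff := by
    rw [← leadingCoeff_map_of_injective (IsFractionRing.injective R K), hPp,
      leadingCoeff_mul_monic hp, leadingCoeff_C]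
  refine ⟨C Q.leadingCoeff * P, ?_⟩
  rw [coe_mapRingHom, Polynomial.map_mul, map_C, hPp, hu_eq, leadingCoeff_mul,
    mul_comm P.leadingCoeff, map_mul, C_mul, mul_assoc]

theorem exists_eq_prod_X_sub_C_of_monic_of_dvd {K ι : Type*} [Field K] {c : K} (hc : c ≠ 0)
    {s : Finset ι} {r : ι → K} {p : K[X]} (hp : p.Monic) (hdvd : p ∣ C c * ∏ i ∈ s, (X - C (r i))) :
    ∃ t ⊆ s, p = ∏ i ∈ t, (X - C (r i)) := by
  classical
  obtain ⟨q, hq⟩ := hdvd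
  obtain ⟨t, t', b, d, hts, -, hbd, rfl, -⟩ :=
    mul_eq_mul_prime_prod (fun i _ ↦ prime_X_sub_C (r i)) hq.symm
  have hb : b = 1 := ((monic_prod_X_sub_C r t).of_mul_monic_right hp).eq_one_of_isUnit <|
    isUnit_of_dvd_unit ⟨d, hbd⟩ (isUnit_C.2 hc.isUnit)
  exact ⟨t, hts ▸ Finset.subset_union_left, by rw [hb, one_mul]⟩

end Divisors

section Denominators

theorem exists_natDegree_coeff_le {R : Type*} [Semiring R] (g : R[X][X]) :
    ∃ N, ∀ i, (g.coeff i).natDegree ≤ N := by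
  refine ⟨g.support.sup fun i ↦ (g.coeff i).natDegree, fun i ↦ ?_⟩
  by_cases hi : i ∈ g.support
  · exact Finset.le_sup (f := fun i ↦ (g.coeff i).natDegree) hi
  · simp [notMem_support_iff.1 hi]

theorem exists_map_mapRingHom_eq_C_C_mul (R : Type*) {K : Type*} [CommRing R] [Nontrivial R]
    [CommRing K] [Algebra R K] [IsFractionRing R K] (f : K[X][X]) :
    ∃ (g : R[X][X]) (m : R), m ≠ 0 ∧
      g.map (mapRingHom (algebraMap R K)) = C (C (algebraMap R K m)) * f := by
  let := Polynomial.algebra R K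
  have := Polynomial.isLocalization (nonZeroDivisors R) K
  obtain ⟨_, ⟨m, hm, rfl⟩, hg⟩ :=
    IsLocalization.integerNormalization_spec ((nonZeroDivisors R).map (C : R →+* R[X])) f
  refine ⟨_, m, nonZeroDivisors.ne_zero hm, hg.trans ?_⟩
  rw [← algebraMap_smul K[X] (C m) f, smul_eq_C_mul]
  simp

theorem exists_pow_mul_specialize_mem_lifts (f : ℚ[X][X]) (a : ℚ) :
    ∃ c : ℤ, c ≠ 0 ∧ ∃ N : ℕ, ∀ s : ℕ, s ≠ 0 →
      C ((c : ℚ) * (s : ℚ) ^ N) * specialize f (a + (s : ℚ)⁻¹) ∈ lifts (algebraMap ℤ ℚ) := by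
  obtain ⟨g, m, hm, hg⟩ := exists_map_mapRingHom_eq_C_C_mul ℤ f
  obtain ⟨N, hN⟩ := exists_natDegree_coeff_le g
  have hden : (a.den : ℚ) ≠ 0 := Nat.cast_ne_zero.2 a.den_ne_zero
  refine ⟨m * a.den ^ N, mul_ne_zero hm (pow_ne_zero N (mod_cast a.den_ne_zero)), N,
    fun s hs ↦ (lifts_iff_coeff_lifts _).2 fun i ↦ ?_⟩
  have hs : (s : ℚ) ≠ 0 := Nat.cast_ne_zero.2 hs
  have hunit : ((a.den : ℚ) * s)⁻¹ * algebraMap ℤ ℚ (a.den * s) = 1 := by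
    simpa using inv_mul_cancel₀ (mul_ne_zero hden hs)
  obtain ⟨D, bi, hbi, hD⟩ :=
    denomsClearable_of_natDegree_le N (a.num * s + a.den) hunit (g.coeff i) (hN i)
  refine ⟨D, hD.trans ?_⟩
  have hpoint : algebraMap ℤ ℚ (a.num * s + a.den) * bi = a + (s : ℚ)⁻¹ := by
    rw [eq_inv_of_mul_eq_one_left hbi, eq_intCast, eq_intCast]
    conv_rhs => rw [← Rat.num_div_den a]
    push_cast
    field_simp
  have hcoeff : (g.coeff i).map (algebraMap ℤ ℚ) = C (m : ℚ) * f.coeff i := by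
    simpa using congrArg (coeff · i) hg
  rw [hpoint, hcoeff, coeff_C_mul, coeff_map]
  simp only [eq_intCast, Int.cast_mul, Int.cast_natCast, eval_mul, eval_intCast, Int.cast_pow,
    map_intCast, coe_aeval_eq_evalRingHom, coe_evalRingHom]
  ring

end Denominators

section RationalFactors

variable {𝕜 : Type*} [RCLike 𝕜] {ι : Type*} {ξ : ι → 𝕜 → 𝕜}

theorem analyticAt_coeff_prod_X_sub_C {a : 𝕜} (hξ : ∀ i, AnalyticAt 𝕜 (ξ i) a) (ω : Finset ι)
    (j : ℕ) : AnalyticAt 𝕜 (fun x ↦ (∏ i ∈ ω, (X - C (ξ i x))).coeff j) a := by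
  classical
  induction ω using Finset.induction_on generalizing j with
  | empty => simpa only [Finset.prod_empty] using analyticAt_const
  | insert i ω hi ih =>
    simp only [Finset.prod_insert hi, sub_mul, coeff_sub, coeff_C_mul]
    refine .sub ?_ ((hξ i).mul (ih j))
    cases j with
    | zero => simpa only [coeff_X_mul_zero] using analyticAt_const
    | succ j => simpa only [coeff_X_mul] using ih j

theorem exists_eventually_specialize_eq_of_isAPRich {g : 𝕜 → 𝕜[X]} {a : ℚ} {n N : ℕ}
    (hg : ∀ j, AnalyticAt 𝕜 (fun x ↦ (g x).coeff j) a) (hdeg : ∀ x, (g x).natDegree ≤ n)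
    (hAP : IsAPRich {s : ℕ |
      C ((s : 𝕜) ^ N) * g ((a + (s : ℚ)⁻¹ : ℚ) : 𝕜) ∈ lifts (Int.castRingHom 𝕜)}) :
    ∃ G : ℚ[X][X], G.natDegree ≤ n ∧ ∀ᶠ x in 𝓝 (a : 𝕜), specialize G x = g x := by
  have hcoeff (j : ℕ) : ∃ P : ℚ[X], ∀ᶠ x in 𝓝 (a : 𝕜), (g x).coeff j = aeval x P := by
    refine exists_eventually_eq_aeval_of_isAPRich (N := N) (hg j)
      (hAP.mono_of_eventually (.of_forall fun s hs ↦ ?_))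
    have := (lifts_iff_coeff_lifts _).1 hs j
    rwa [coeff_C_mul] at this
  choose P hP using hcoeff
  refine ⟨∑ j ∈ Finset.range (n + 1), C (P j) * X ^ j, ?_, ?_⟩
  · exact natDegree_sum_le_of_forall_le _ _ fun j hj ↦
      (natDegree_C_mul_X_pow_le _ _).trans (Finset.mem_range_succ_iff.1 hj)
  · filter_upwards [(eventually_all_finset (Finset.range (n + 1))).2 fun j _ ↦ hP j] with x hx
    rw [(g x).as_sum_range_C_mul_X_pow' (Nat.lt_succ_of_le (hdeg x)), specialize,
      Polynomial.map_sum]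
    refine Finset.sum_congr rfl fun j hj ↦ ?_
    simp [hx j hj]

theorem exists_eventually_mul_monic_mem_lifts {f : ℚ[X][X]} (hf : f ≠ 0) (a : ℚ) :
    ∃ d : ℚ[X], d ≠ 0 ∧ ∃ N : ℕ, ∀ᶠ s : ℕ in atTop, ∀ p : ℚ[X], p.Monic →
      p ∣ specialize f (a + (s : ℚ)⁻¹) →
        C ((s : ℚ) ^ N * aeval (a + (s : ℚ)⁻¹) d) * p ∈ lifts (algebraMap ℤ ℚ) := by
  obtain ⟨c, hc, N, hN⟩ := exists_pow_mul_specialize_mem_lifts f a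
  have hlc0 : f.leadingCoeff ≠ 0 := leadingCoeff_ne_zero.2 hf
  refine ⟨C (c : ℚ) * f.leadingCoeff,
    mul_ne_zero (C_ne_zero.2 (Int.cast_ne_zero.2 hc)) hlc0, N, ?_⟩
  filter_upwards [eventually_ne_atTop 0, eventually_aeval_add_inv_ne_zero hlc0 a]
    with s hs hlc p hp hdvd
  obtain ⟨q, hq⟩ := hN s hs
  rw [coe_mapRingHom] at hq
  have hlc_q : algebraMap ℤ ℚ q.leadingCoeff =
      (s : ℚ) ^ N * aeval (a + (s : ℚ)⁻¹) (C (c : ℚ) * f.leadingCoeff) := by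
    rw [← leadingCoeff_map_of_injective (IsFractionRing.injective ℤ ℚ), hq, leadingCoeff_mul,
      leadingCoeff_C, leadingCoeff_specialize hlc, map_mul, aeval_C, eq_ratCast, Rat.cast_intCast]
    ring
  rw [← hlc_q]
  exact C_leadingCoeff_mul_mem_lifts_of_monic_of_dvd_map hp (hq ▸ hdvd.mul_left _)

/-- The set of `s` for which the factor `∏ i ∈ ω, (Y - ξ i x)` at `x = a + 1/s` is the base change
of a divisor of `f(x, Y)` in `ℚ[Y]`; the `ξ i` are meant to be branches of the roots of `f`. -/
def rationalFactorSet (f : ℚ[X][X]) (a : ℚ) (ξ : ι → 𝕜 → 𝕜) (ω : Finset ι) : Set ℕ :=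
  {s | ∃ p : ℚ[X], p ∣ specialize f (a + (s : ℚ)⁻¹) ∧
    p.map (algebraMap ℚ 𝕜) = ∏ i ∈ ω, (X - C (ξ i (a + (s : ℚ)⁻¹ : ℚ)))}

variable {f : ℚ[X][X]} {a : ℚ} {ω : Finset ι}

theorem exists_specialize_eq_of_isAPRich_rationalFactorSet
    (hf : f ≠ 0) (hξ : ∀ i, AnalyticAt 𝕜 (ξ i) a) (hAP : IsAPRich (rationalFactorSet f a ξ ω)) :
    ∃ G : ℚ[X][X], G.natDegree ≤ ω.card ∧ ∃ d : ℚ[X], d ≠ 0 ∧ ∀ᶠ x in 𝓝 (a : 𝕜),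
      specialize G x = C (aeval x d) * ∏ i ∈ ω, (X - C (ξ i x)) := by
  obtain ⟨d, hd, N, hN⟩ := exists_eventually_mul_monic_mem_lifts hf a
  have hanalytic (j : ℕ) : AnalyticAt 𝕜
      (fun x ↦ (C (aeval x d) * ∏ i ∈ ω, (X - C (ξ i x))).coeff j) a := by
    simp only [coeff_C_mul]
    exact (analyticAt_id.aeval_polynomial d).mul (analyticAt_coeff_prod_X_sub_C hξ ω j)
  have hdeg (x : 𝕜) : (C (aeval x d) * ∏ i ∈ ω, (X - C (ξ i x))).natDegree ≤ ω.card :=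
    (natDegree_C_mul_le _ _).trans (natDegree_finsetProd_X_sub_C_eq_card _ _).le
  have hint : IsAPRich {s : ℕ | C ((s : 𝕜) ^ N) * (C (aeval ((a + (s : ℚ)⁻¹ : ℚ) : 𝕜) d) *
      ∏ i ∈ ω, (X - C (ξ i (a + (s : ℚ)⁻¹ : ℚ)))) ∈ lifts (Int.castRingHom 𝕜)} := by
    refine hAP.mono_of_eventually ?_
    filter_upwards [hN] with s hs ⟨p, hdvd, hp⟩
    have hp_monic : p.Monic := by
      rw [← monic_map_iff (f := algebraMap ℚ 𝕜), hp]
      exact monic_prod_X_sub_C _ _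
    obtain ⟨q, hq⟩ := hs p hp_monic hdvd
    refine ⟨q, ?_⟩
    rw [RingHom.ext_int (Int.castRingHom 𝕜) ((algebraMap ℚ 𝕜).comp (algebraMap ℤ ℚ)),
      coe_mapRingHom, ← Polynomial.map_map, ← coe_mapRingHom (algebraMap ℤ ℚ), hq,
      Polynomial.map_mul, map_C, hp, map_mul, map_pow, map_natCast, ← aeval_algebraMap_apply,
      eq_ratCast, C_mul, mul_assoc]
  obtain ⟨G, hGdeg, hG⟩ := exists_eventually_specialize_eq_of_isAPRich hanalytic hdeg hint
  exact ⟨G, hGdeg, d, hd, hG⟩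

theorem not_isAPRich_rationalFactorSet
    (hirr : Irreducible (f.map (algebraMap ℚ[X] (RatFunc ℚ)))) (hξ : ∀ i, AnalyticAt 𝕜 (ξ i) a)
    (hω : ω.Nonempty) (hωf : ω.card < f.natDegree) : ¬ IsAPRich (rationalFactorSet f a ξ ω) := by
  intro hAP
  have hinj := IsFractionRing.injective ℚ[X] (RatFunc ℚ)
  have hf : f ≠ 0 := ne_zero_of_natDegree_gt hωf
  obtain ⟨G, hGdeg, d, hd, hG⟩ := exists_specialize_eq_of_isAPRich_rationalFactorSet hf hξ hAP
  have hG0 : G ≠ 0 := by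
    rintro rfl
    obtain ⟨x, hx, hdx⟩ := ((hG.filter_mono nhdsWithin_le_nhds).and
      ((eventually_cofinite_aeval_ne_zero hd).filter_mono (nhdsNE_le_cofinite _))).exists
    rw [specialize, Polynomial.map_zero, zero_eq_mul, C_eq_zero] at hx
    exact hx.elim hdx (monic_prod_X_sub_C _ _).ne_zero
  have hcoprime : IsCoprime (f.map (algebraMap ℚ[X] (RatFunc ℚ)))
      (G.map (algebraMap ℚ[X] (RatFunc ℚ))) := by
    refine hirr.coprime_iff_not_dvd.2 (not_dvd_of_natDegree_lt ?_ ?_)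
    · exact (Polynomial.map_ne_zero_iff hinj).2 hG0
    · rw [natDegree_map_eq_of_injective hinj, natDegree_map_eq_of_injective hinj]
      exact hGdeg.trans_lt hωf
  have hcoprime_s := (tendsto_ratCast_add_inv_natCast (𝕜 := 𝕜) a).eventually
    (((eventually_isCoprime_specialize hcoprime).filter_mono (nhdsNE_le_cofinite _)).and
      (hG.filter_mono nhdsWithin_le_nhds))
  obtain ⟨s, ⟨p, hdvd, hp⟩, hcop, hGs⟩ := (hAP.frequently.and_eventually hcoprime_s).exists
  have hunit : IsUnit (∏ i ∈ ω, (X - C (ξ i (a + (s : ℚ)⁻¹ : ℚ)))) := by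
    refine hcop.isUnit_of_dvd' ?_ (hGs ▸ dvd_mul_left _ _)
    rw [← hp, ← eq_ratCast (algebraMap ℚ 𝕜), ← map_specialize]
    exact Polynomial.map_dvd _ hdvd
  have := natDegree_eq_zero_of_isUnit hunit
  rw [natDegree_finsetProd_X_sub_C_eq_card] at this
  exact hω.card_ne_zero this

theorem exists_mem_rationalFactorSet {s : ℕ} [Fintype ι] {u : 𝕜}
    (hfactor : specialize f ((a + (s : ℚ)⁻¹ : ℚ) : 𝕜) =
      C u * ∏ i, (X - C (ξ i (a + (s : ℚ)⁻¹ : ℚ))))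
    (hdeg : 0 < (specialize f (a + (s : ℚ)⁻¹)).natDegree)
    (hred : ¬ Irreducible (specialize f (a + (s : ℚ)⁻¹))) :
    ∃ ω : Finset ι, (ω.Nonempty ∧ ω.card < (specialize f (a + (s : ℚ)⁻¹)).natDegree) ∧
      s ∈ rationalFactorSet f a ξ ω := by
  have hne := ne_zero_of_natDegree_gt hdeg
  rw [irreducible_iff_lt_natDegree_lt hne (not_isUnit_of_natDegree_pos _ hdeg)] at hred
  push Not at hred
  obtain ⟨q, hq, hqdeg, hdvd⟩ := hred
  rw [← eq_ratCast (algebraMap ℚ 𝕜), ← map_specialize] at hfactor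
  have hu : u ≠ 0 := by
    rintro rfl
    rw [C_0, zero_mul, Polynomial.map_eq_zero] at hfactor
    exact hne hfactor
  obtain ⟨ω, -, hω⟩ := exists_eq_prod_X_sub_C_of_monic_of_dvd hu (hq.map (algebraMap ℚ 𝕜))
    (hfactor ▸ Polynomial.map_dvd (algebraMap ℚ 𝕜) hdvd)
  have hcard : ω.card = q.natDegree := by
    rw [← natDegree_map (algebraMap ℚ 𝕜), hω, natDegree_finsetProd_X_sub_C_eq_card]
  rw [Finset.mem_Ioc] at hqdeg
  exact ⟨ω, ⟨Finset.card_pos.1 (by lia), by lia⟩, q, hdvd, hω⟩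

end RationalFactors

theorem frequently_irreducible_specialize {f : ℚ[X][X]} {a : ℚ}
    (hirr : Irreducible (f.map (algebraMap ℚ[X] (RatFunc ℚ))))
    (hlc : aeval a f.leadingCoeff ≠ 0) (hsep : (specialize f a).Separable) :
    ∃ᶠ s : ℕ in atTop, Irreducible (specialize f (a + (s : ℚ)⁻¹)) := by
  intro hred
  have hdeg : 0 < f.natDegree := by
    rw [← natDegree_map_eq_of_injective (IsFractionRing.injective ℚ[X] (RatFunc ℚ))]
    exact hirr.natDegree_pos
  have hlcℂ : aeval (a : ℂ) f.leadingCoeff ≠ 0 := by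
    rwa [← eq_ratCast (algebraMap ℚ ℂ), aeval_algebraMap_apply, _root_.map_ne_zero]
  have hsepℂ : (specialize f (a : ℂ)).Separable := by
    rw [← eq_ratCast (algebraMap ℚ ℂ), ← map_specialize]
    exact hsep.map
  obtain ⟨B, ξ, hξ, hfactor⟩ :=
    exists_analytic_factorization f hlcℂ hsepℂ (IsAlgClosed.splits _)
  have hcover : ∀ᶠ s : ℕ in atTop, ∃ ω : {ω : Finset B // ω.Nonempty ∧ ω.card < f.natDegree},
      s ∈ rationalFactorSet f a ξ ω := by
    filter_upwards [hred, (tendsto_ratCast_add_inv_natCast a).eventually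
      (hfactor.filter_mono nhdsWithin_le_nhds),
      eventually_aeval_add_inv_ne_zero (leadingCoeff_ne_zero.2 (ne_zero_of_natDegree_gt hdeg)) a]
      with s hs hfs hlcs
    have hdeg_s : (specialize f (a + (s : ℚ)⁻¹)).natDegree = f.natDegree :=
      natDegree_specialize hlcs
    obtain ⟨ω, hω, hmem⟩ := exists_mem_rationalFactorSet hfs (hdeg_s ▸ hdeg) hs
    exact ⟨⟨ω, hdeg_s ▸ hω⟩, hmem⟩
  obtain ⟨⟨ω, hω, hωf⟩, hAP⟩ := exists_isAPRich_of_eventually_mem hcover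
  exact not_isAPRich_rationalFactorSet hirr hξ hω hωf hAP

end HilbertIrreducibility

open HilbertIrreducibility

/-- **Hilbert Irreducibility Theorem: `ℚ` is Hilbertian.** Let `f ∈ ℚ[t][X]` have degree
at least `1` in `X` and be irreducible as a polynomial in `X` over `ℚ(t)`. Then there are
infinitely many `a ∈ ℚ` such that the specialization `f(a, X) ∈ ℚ[X]` has the same degree
in `X` and is irreducible over `ℚ`. -/
theorem hilbert_irreducibility (f : Polynomial (Polynomial ℚ))
    (hdeg : 1 ≤ f.natDegree)
    (hirr : Irreducible (f.map (algebraMap (Polynomial ℚ) (RatFunc ℚ)))) :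
    {a : ℚ | (f.map (Polynomial.evalRingHom a)).natDegree = f.natDegree ∧
      Irreducible (f.map (Polynomial.evalRingHom a))}.Infinite := by
  have hlc : f.leadingCoeff ≠ 0 := leadingCoeff_ne_zero.2 (ne_zero_of_natDegree_gt hdeg)
  have hsep : IsCoprime (f.map (algebraMap ℚ[X] (RatFunc ℚ)))
      (f.derivative.map (algebraMap ℚ[X] (RatFunc ℚ))) :=
    derivative_map f (algebraMap ℚ[X] (RatFunc ℚ)) ▸ hirr.separable
  obtain ⟨a, hlc_a, hsep_a⟩ := ((eventually_cofinite_aeval_ne_zero hlc).and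
    (eventually_isCoprime_specialize (L := ℚ) hsep)).exists
  rw [specialize, specialize, ← derivative_map] at hsep_a
  simp only [← coe_aeval_eq_evalRingHom]
  refine infinite_setOf_of_frequently_add_inv (a := a) ?_
  exact ((frequently_irreducible_specialize hirr hlc_a hsep_a).and_eventually
    (eventually_aeval_add_inv_ne_zero hlc a)).mono fun s ⟨hs, hlc_s⟩ ↦
      ⟨natDegree_specialize hlc_s, hs⟩
end

section
/- Let f(t, X) ∈ ℚ[t][X] be a polynomial in X with coefficients in ℚ[t], of degree at least 1 in X, such that f, regarded as a polynomial in X over the rational function field ℚ(t), has no root in ℚ(t). Then there exists a ∈ ℚ such that the specialized polynomial f(a, X) ∈ ℚ[X] has no root in ℚ. -/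
/-!
Suppose that `f(n, X)` has a rational root for every large integer `n`. Clearing denominators,
normalizing to a monic polynomial and passing to the radical, we may take `f` to be monic over
`ℤ[t]` and separable over `ℚ(t)`; the roots `b(n)` are then integers, and `|b(n)| ≤ c n ^ d`. Fix
`a` at which the resultant of `f` and `∂f/∂X` does not vanish, and let `p` be a large prime. By
pigeonhole, `b(a + p t)` takes a single value modulo `p` for many `t` in a bounded range, and
Newton iteration from that simple root shows that there `b(a + p t)` is congruent modulo
`p ^ (d + 1)` to an integer polynomial in `t` of degree at most `d`. Hence the Lagrange relation
among any `d + 2` of these values, with denominators cleared, is divisible by `p ^ (d + 1)`; as its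
size is `O(p ^ d)`, it vanishes. So `b` agrees with a polynomial at too many points for that
polynomial not to be a root of `f`.
-/

open Polynomial Filter Finset
open scoped NNReal

section Growth

variable {K : Type*} [NormedField K]

lemma nnnorm_eval_le_of_natDegree_le {p : K[X]} {d : ℕ} (hp : p.natDegree ≤ d) {x : K}
    (hx : 1 ≤ ‖x‖₊) : ‖p.eval x‖₊ ≤ (∑ i ∈ range (d + 1), ‖p.coeff i‖₊) * ‖x‖₊ ^ d := by
  rw [eval_eq_sum_range' (Nat.lt_succ_of_le hp), sum_mul]
  refine nnnorm_sum_le_of_le _ fun i hi ↦ ?_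
  rw [nnnorm_mul, nnnorm_pow]
  gcongr
  exact Nat.le_of_lt_succ (mem_range.1 hi)

lemma exists_forall_nnnorm_le_mul_pow_of_evalEval_eq_zero {G : K[X][X]} (hG : G.Monic) {d : ℕ}
    (hd : ∀ i, (G.coeff i).natDegree ≤ d) :
    ∃ c : ℝ≥0, ∀ x y : K, 1 ≤ ‖x‖₊ → G.evalEval x y = 0 → ‖y‖₊ ≤ c * ‖x‖₊ ^ d := by
  set c : ℕ → ℝ≥0 := fun i ↦ ∑ j ∈ range (d + 1), ‖(G.coeff i).coeff j‖₊
  refine ⟨(range G.natDegree).sup c + 1, fun x y hx hxy ↦ ?_⟩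
  have hGx : (G.map (evalRingHom x)).Monic := hG.map _
  have hroot : (G.map (evalRingHom x)).IsRoot y := by rwa [IsRoot.def, map_evalRingHom_eval]
  refine (hroot.norm_lt_cauchyBound hGx.ne_zero).le.trans ?_
  rw [cauchyBound, hGx.leadingCoeff, nnnorm_one, div_one, hG.natDegree_map, add_mul, one_mul]
  refine add_le_add (Finset.sup_le fun i hi ↦ ?_) (one_le_pow₀ hx)
  rw [coeff_map, coe_evalRingHom]
  refine (nnnorm_eval_le_of_natDegree_le (hd i) hx).trans ?_
  gcongr
  exact le_sup (f := c) hi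

lemma exists_forall_abs_le_mul_pow_of_evalEval_eq_zero {G : ℤ[X][X]} (hG : G.Monic) {d : ℕ}
    (hd : ∀ i, (G.coeff i).natDegree ≤ d) :
    ∃ c : ℕ, ∀ x y : ℤ, x ≠ 0 → G.evalEval x y = 0 → |y| ≤ c * |x| ^ d := by
  obtain ⟨c, hc⟩ := exists_forall_nnnorm_le_mul_pow_of_evalEval_eq_zero
    (hG.map (mapRingHom (Int.castRingHom ℚ))) (d := d) fun i ↦ by
      rw [coeff_map]
      exact natDegree_map_le.trans (hd i)
  refine ⟨⌈c⌉₊, fun x y hx hxy ↦ ?_⟩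
  have hx' : 1 ≤ ‖(x : ℚ)‖₊ := by
    rw [← NNReal.coe_le_coe, NNReal.coe_one, coe_nnnorm, Int.norm_cast_rat, Int.norm_eq_abs]
    exact_mod_cast Int.one_le_abs hx
  have hle := hc x y hx' (by simpa [hxy] using map_mapRingHom_evalEval (Int.castRingHom ℚ) G x y)
  rw [← NNReal.coe_le_coe, NNReal.coe_mul, NNReal.coe_pow, coe_nnnorm, coe_nnnorm,
    Int.norm_cast_rat, Int.norm_cast_rat, Int.norm_eq_abs, Int.norm_eq_abs] at hle
  have hceil : (c : ℝ) ≤ (⌈c⌉₊ : ℕ) := by exact_mod_cast Nat.le_ceil c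
  exact_mod_cast hle.trans (mul_le_mul_of_nonneg_right hceil (by positivity))

end Growth

section DegreeBounds

variable {R : Type*} [CommRing R]

lemma eval_eval_eq_evalEval (G : R[X][X]) (P : R[X]) (x : R) :
    (G.eval P).eval x = G.evalEval x (P.eval x) := by
  rw [← eval₂_evalRingHom]
  exact (eval₂_at_apply (evalRingHom x) P).symm

lemma exists_forall_natDegree_coeff_le (G : R[X][X]) : ∃ d, ∀ i, (G.coeff i).natDegree ≤ d := by
  refine ⟨G.support.sup fun i ↦ (G.coeff i).natDegree, fun i ↦ ?_⟩
  by_cases hi : i ∈ G.support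
  · exact le_sup (f := fun i ↦ (G.coeff i).natDegree) hi
  · simp [notMem_support_iff.1 hi]

lemma natDegree_eval_le {G : R[X][X]} {Q : R[X]} {d m : ℕ}
    (hd : ∀ i, (G.coeff i).natDegree ≤ d) (hQ : Q.natDegree ≤ m) :
    (G.eval Q).natDegree ≤ d + G.natDegree * m := by
  rw [eval_eq_sum_range]
  refine natDegree_sum_le_of_forall_le _ _ fun i hi ↦ natDegree_mul_le_of_le (hd i) ?_
  refine natDegree_pow_le_of_le i hQ |>.trans ?_
  gcongr
  exact Nat.le_of_lt_succ (mem_range.1 hi)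

lemma eval_eq_zero_of_forall_evalEval_eq_zero [IsDomain R] {G : R[X][X]} {Q : R[X]} {d m : ℕ}
    (hd : ∀ i, (G.coeff i).natDegree ≤ d) (hQ : Q.natDegree ≤ m) {ι : Type*} {T : Finset ι}
    {v : ι → R} (hv : Set.InjOn v T) (hT : d + G.natDegree * m < #T)
    (hzero : ∀ t ∈ T, G.evalEval (v t) (Q.eval (v t)) = 0) : G.eval Q = 0 := by
  refine eq_zero_of_degree_lt_of_eval_index_eq_zero _ hv ?_ fun t ht ↦ ?_
  · exact degree_le_natDegree.trans_lt
      (Nat.cast_lt.2 ((natDegree_eval_le hd hQ).trans_lt hT))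
  · rw [eval_eval_eq_evalEval, hzero t ht]

end DegreeBounds

section Newton

variable {R : Type*} [CommRing R]

lemma dvd_evalEval_sub_evalEval (G : R[X][X]) {q x x' y y' : R} (hx : q ∣ x - x')
    (hy : q ∣ y - y') : q ∣ G.evalEval x y - G.evalEval x' y' := by
  rw [← sub_add_sub_cancel _ (G.evalEval x y')]
  refine dvd_add ?_ (hx.trans (sub_dvd_eval_sub _ _ _))
  simpa only [map_evalRingHom_eval] using
    hy.trans (sub_dvd_eval_sub y y' (G.map (evalRingHom x)))

lemma exists_evalEval_add_eq (G : R[X][X]) (x y δ : R) :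
    ∃ c, G.evalEval x (y + δ) = G.evalEval x y + (derivative G).evalEval x y * δ + c * δ ^ 2 := by
  obtain ⟨c, hc⟩ := (G.map (evalRingHom x)).binomExpansion y δ
  exact ⟨c, by simpa only [derivative_map, map_evalRingHom_eval] using hc⟩

lemma exists_pow_dvd_eval_sub_of_isCoprime (G : R[X][X]) {q a b : R}
    (hcop : IsCoprime q ((derivative G).evalEval a b)) (k : ℕ) :
    ∃ P : R[X], ∀ x y, q ∣ x - a → q ∣ y - b → G.evalEval x y = 0 →
      q ^ (k + 1) ∣ P.eval x - y := by
  obtain ⟨u, v, huv⟩ := hcop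
  induction k with
  | zero => exact ⟨C b, fun x y _ hy _ ↦ by simpa [dvd_sub_comm] using hy⟩
  | succ k ih =>
    obtain ⟨P, hP⟩ := ih
    -- Dividing by the derivative at `(a, b)`, via its fixed inverse `v` modulo `q`, loses quadratic
    -- convergence but keeps the iterates polynomial in `x`.
    refine ⟨P - C v * G.eval P, fun x y hx hy hxy ↦ ?_⟩
    set δ := P.eval x - y
    obtain ⟨c, hc⟩ := exists_evalEval_add_eq G x y δ
    have hstep : (P - C v * G.eval P).eval x - y
        = δ * (1 - v * (derivative G).evalEval x y - v * c * δ) := by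
      rw [eval_sub, eval_mul, eval_C, eval_eval_eq_evalEval, show P.eval x = y + δ by ring, hc, hxy]
      ring
    have hqδ : q ∣ δ := (dvd_pow_self q k.succ_ne_zero).trans (hP x y hx hy hxy)
    have hqv : q ∣ 1 - v * (derivative G).evalEval x y := by
      have := (dvd_evalEval_sub_evalEval (derivative G) hx hy).mul_left v
      rw [← huv, show ∀ w, u * q + v * w - v * (derivative G).evalEval x y
        = u * q - v * ((derivative G).evalEval x y - w) from fun w ↦ by ring]
      exact dvd_sub (dvd_mul_left q u) this
    rw [hstep, pow_succ]
    exact mul_dvd_mul (hP x y hx hy hxy) (dvd_sub hqv (hqδ.mul_left _))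

lemma exists_natDegree_le_forall_pow_dvd_eval_sub_eval (P : R[X]) (a : R) (k : ℕ) :
    ∃ Q : R[X], Q.natDegree ≤ k ∧
      ∀ q x, q ∣ x - a → q ^ (k + 1) ∣ P.eval x - Q.eval x := by
  nontriviality R
  have hmonic : ((X - C a) ^ (k + 1)).Monic := (monic_X_sub_C a).pow _
  have hdeg : ((X - C a) ^ (k + 1)).natDegree = k + 1 := by
    rw [(monic_X_sub_C a).natDegree_pow, natDegree_X_sub_C, mul_one]
  refine ⟨P %ₘ (X - C a) ^ (k + 1), ?_, fun q x hx ↦ ?_⟩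
  · refine Nat.le_of_lt_succ ((natDegree_modByMonic_lt P hmonic fun h ↦ ?_).trans_eq hdeg)
    simp [h] at hdeg
  · nth_rw 1 [← modByMonic_add_div P ((X - C a) ^ (k + 1))]
    simpa using (pow_dvd_pow_of_dvd hx (k + 1)).mul_right _

end Newton

section Interpolation

lemma exists_mul_eval_interpolate_eq_sum {A K ι : Type*} [CommRing A] [Nontrivial A] [Field K]
    [Algebra A K] [IsFractionRing A K] [DecidableEq ι] (s : Finset ι) (v : ι → K) (x : K) :
    ∃ d : A, d ≠ 0 ∧ ∃ w : ι → A, ∀ r : ι → A,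
      algebraMap A K d * (Lagrange.interpolate s v (algebraMap A K ∘ r)).eval x =
        algebraMap A K (∑ i ∈ s, w i * r i) := by
  obtain ⟨⟨d, hd⟩, hint⟩ := IsLocalization.exist_integer_multiples (nonZeroDivisors A) s
    fun i ↦ (Lagrange.basis s v i).eval x
  choose! w hw using hint
  refine ⟨d, nonZeroDivisors.ne_zero hd, w, fun r ↦ ?_⟩
  rw [Lagrange.interpolate_apply, eval_finsetSum, mul_sum, map_sum]
  refine sum_congr rfl fun i hi ↦ ?_
  rw [map_mul, hw i hi, Algebra.smul_def, eval_mul, eval_C, Function.comp_apply]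
  ring

lemma eventually_mul_eq_sum_of_pow_dvd (s : Finset ℤ) (x d : ℤ) (w : ℤ → ℤ) (c m : ℕ) :
    ∀ᶠ q : ℕ in atTop, ∀ b : ℤ → ℤ, (∀ t ∈ insert x s, |b t| ≤ c * q ^ m) →
      (q : ℤ) ^ (m + 1) ∣ d * b x - ∑ i ∈ s, w i * b i → d * b x = ∑ i ∈ s, w i * b i := by
  filter_upwards [eventually_gt_atTop (c * (d.natAbs + ∑ i ∈ s, (w i).natAbs))]
    with q hq b hbound hdvd
  obtain ⟨hbx, hbs⟩ := (forall_mem_insert ..).1 hbound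
  refine sub_eq_zero.1 (Int.eq_zero_of_abs_lt_dvd hdvd ?_)
  calc |d * b x - ∑ i ∈ s, w i * b i|
      ≤ |d * b x| + ∑ i ∈ s, |w i * b i| :=
        (abs_sub _ _).trans (add_le_add_right (abs_sum_le_sum_abs _ _) _)
    _ ≤ |d| * (c * q ^ m) + ∑ i ∈ s, |w i| * (c * q ^ m) := by
        simp only [abs_mul]
        gcongr with i hi
        exact hbs i hi
    _ = ((c * (d.natAbs + ∑ i ∈ s, (w i).natAbs) : ℕ) : ℤ) * q ^ m := by
        push_cast [Int.natCast_natAbs]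
        rw [← sum_mul]
        ring
    _ < q * q ^ m := by
        gcongr
        exact pow_pos (by lia) m
    _ = q ^ (m + 1) := (pow_succ' _ _).symm

lemma eventually_eval_interpolate_eq (s : Finset ℤ) (x : ℤ) (c m : ℕ) :
    ∀ᶠ q : ℕ in atTop, ∀ (b : ℤ → ℤ) (y : ℤ[X]), y.degree < #s →
      (∀ t ∈ insert x s, |b t| ≤ c * q ^ m) →
      (∀ t ∈ insert x s, (q : ℤ) ^ (m + 1) ∣ y.eval t - b t) →
      (Lagrange.interpolate s (Int.cast : ℤ → ℚ) (Int.cast ∘ b)).eval (x : ℚ) = b x := by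
  obtain ⟨d, hd, w, hw⟩ := exists_mul_eval_interpolate_eq_sum (A := ℤ) s (Int.cast : ℤ → ℚ) x
  simp only [algebraMap_int_eq, Int.coe_castRingHom] at hw
  filter_upwards [eventually_mul_eq_sum_of_pow_dvd s x d w c m] with q hq b y hy hbound hdvd
  obtain ⟨hyx, hys⟩ := (forall_mem_insert ..).1 hdvd
  have hy_sum : d * y.eval x = ∑ i ∈ s, w i * y.eval i := by
    have hy_interpolate : y.map (Int.castRingHom ℚ)
        = Lagrange.interpolate s (Int.cast : ℤ → ℚ) (Int.cast ∘ y.eval) :=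
      Lagrange.eq_interpolate_of_eval_eq _ Int.cast_injective.injOn
        (degree_map_le.trans_lt hy) fun i _ ↦ eval_intCast_map (Int.castRingHom ℚ) y i
    have := hw (y.eval ·)
    rw [← hy_interpolate, eval_intCast_map, eq_intCast] at this
    exact_mod_cast this
  have hb_sum : d * b x = ∑ i ∈ s, w i * b i := by
    refine hq b hbound ?_
    have : d * b x - ∑ i ∈ s, w i * b i
        = ∑ i ∈ s, w i * (y.eval i - b i) - d * (y.eval x - b x) := by
      simp only [mul_sub, sum_sub_distrib, hy_sum]
      ring
    rw [this]
    exact dvd_sub (dvd_sum fun i hi ↦ (hys i hi).mul_left _) (hyx.mul_left _)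
  have := hw b
  rw [← hb_sum, Int.cast_mul] at this
  exact mul_left_cancel₀ (Int.cast_ne_zero.2 hd) this

lemma eventually_exists_forall_eval_eq (T : Finset ℤ) (c : ℕ) {m : ℕ} (hm : m < #T) :
    ∀ᶠ q : ℕ in atTop, ∀ (b : ℤ → ℤ) (y : ℤ[X]), y.natDegree ≤ m →
      (∀ t ∈ T, |b t| ≤ c * q ^ m) → (∀ t ∈ T, (q : ℤ) ^ (m + 1) ∣ y.eval t - b t) →
      ∃ P : ℚ[X], P.natDegree ≤ m ∧ ∀ t ∈ T, P.eval (t : ℚ) = b t := by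
  obtain ⟨s, hsT, hs⟩ := exists_subset_card_eq (Nat.succ_le_of_lt hm)
  filter_upwards [(eventually_all_finset T).2 fun x _ ↦ eventually_eval_interpolate_eq s x c m]
    with q hq b y hy hbound hdvd
  refine ⟨Lagrange.interpolate s Int.cast (Int.cast ∘ b), ?_, fun t ht ↦ ?_⟩
  · have := Lagrange.degree_interpolate_le (s := s) (Int.cast ∘ b : ℤ → ℚ)
      Int.cast_injective.injOn
    rw [hs] at this
    exact natDegree_le_of_degree_le this
  · have hsub := insert_subset ht hsT
    exact hq t ht b y (degree_le_natDegree.trans_lt (Nat.cast_lt.2 (by lia)))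
      (fun i hi ↦ hbound i (hsub hi)) fun i hi ↦ hdvd i (hsub hi)

end Interpolation

section Resultant

variable {R S : Type*} [CommRing R] [CommRing S]

lemma dvd_map_C_resultant {f : R[X]} (hf : f.Monic) (g : R[X]) (φ : R[X] →+* S) {q : S}
    (hqf : q ∣ φ f) (hqg : q ∣ φ g) : q ∣ φ (C (resultant f g)) := by
  rcases eq_or_ne f.natDegree 0 with hdeg | hdeg
  · rw [hf.natDegree_eq_zero.1 hdeg, map_one] at hqf
    exact hqf.trans (one_dvd _)
  · obtain ⟨u, v, -, -, huv⟩ :=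
      exists_mul_add_mul_eq_C_resultant f g le_rfl le_rfl (Or.inl hdeg)
    rw [← huv, map_add, map_mul, map_mul]
    exact dvd_add (hqf.mul_right _) (hqg.mul_right _)

lemma resultant_derivative_ne_zero_of_separable_map [IsDomain S] {φ : R →+* S}
    (hφ : Function.Injective φ) {f : R[X]} (hf : (f.map φ).Separable) :
    resultant f (derivative f) ≠ 0 := by
  have hne := resultant_ne_zero _ _ hf
  rw [derivative_map, natDegree_map_eq_of_injective hφ, natDegree_map_eq_of_injective hφ,
    resultant_map_map] at hne
  exact ne_zero_of_map hne

end Resultant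

lemma exists_lt_card_filter_eq_of_eval_eq_zero {F ι : Type*} [CommRing F] [IsDomain F]
    [DecidableEq F] {g : F[X]} (hg : g ≠ 0) {s : Finset ι} {β : ι → F}
    (hβ : ∀ i ∈ s, g.eval (β i) = 0) {D : ℕ} (hs : g.natDegree * D < #s) :
    ∃ y, D < #{i ∈ s | β i = y} := by
  obtain ⟨y, -, hy⟩ := exists_lt_card_fiber_of_mul_lt_card_of_maps_to (s := s)
    (t := g.roots.toFinset) (f := β) (n := D) (fun i hi ↦ by simpa [hg] using hβ i hi)
    (hs.trans_le' (Nat.mul_le_mul_right D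
      ((Multiset.toFinset_card_le _).trans (card_roots' g))))
  exact ⟨y, hy⟩

section LocalApproximation

variable {G : ℤ[X][X]} {p : ℕ} [Fact p.Prime] {a : ℤ} {S : Finset ℤ} {b : ℤ → ℤ}

lemma exists_subset_forall_dvd_sub (hG : G.Monic)
    (hb : ∀ t ∈ S, G.evalEval (a + p * t) (b t) = 0) {D : ℕ} (hS : G.natDegree * D < #S) :
    ∃ T ⊆ S, D < #T ∧ ∀ s ∈ T, ∀ t ∈ T, (p : ℤ) ∣ b s - b t := by
  set g : (ZMod p)[X] := (G.map (evalRingHom a)).map (Int.castRingHom (ZMod p))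
  have hg : g.Monic := (hG.map _).map _
  have hroot : ∀ t ∈ S, g.eval (b t : ZMod p) = 0 := fun t ht ↦ by
    have hdvd : (p : ℤ) ∣ G.evalEval (a + p * t) (b t) - G.evalEval a (b t) :=
      dvd_evalEval_sub_evalEval G (by simp) (by simp)
    rw [hb t ht, zero_sub, dvd_neg] at hdvd
    rwa [eval_intCast_map, map_evalRingHom_eval, eq_intCast, ZMod.intCast_zmod_eq_zero_iff_dvd]
  obtain ⟨r, hr⟩ := exists_lt_card_filter_eq_of_eval_eq_zero hg.ne_zero hroot
    (by rwa [(hG.map _).natDegree_map, hG.natDegree_map])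
  refine ⟨_, filter_subset _ _, hr, fun s hs t ht ↦ ?_⟩
  rw [← ZMod.intCast_eq_intCast_iff_dvd_sub, (mem_filter.1 hs).2, (mem_filter.1 ht).2]

lemma exists_subset_forall_exists_pow_dvd (hG : G.Monic)
    (hpa : ¬(p : ℤ) ∣ (resultant G (derivative G)).eval a)
    (hb : ∀ t ∈ S, G.evalEval (a + p * t) (b t) = 0) {D : ℕ} (hS : G.natDegree * D < #S) :
    ∃ T ⊆ S, D < #T ∧ ∀ k : ℕ, ∃ y : ℤ[X], y.natDegree ≤ k ∧
      ∀ t ∈ T, (p : ℤ) ^ (k + 1) ∣ y.eval t - b t := by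
  obtain ⟨T, hTS, hT, hcongr⟩ := exists_subset_forall_dvd_sub hG hb hS
  obtain ⟨t₀, ht₀⟩ : T.Nonempty := card_pos.1 (by lia)
  have hx : ∀ t : ℤ, (p : ℤ) ∣ a + p * t - a := fun t ↦ by simp
  have hroot : (p : ℤ) ∣ G.evalEval a (b t₀) := by
    have hdvd := dvd_evalEval_sub_evalEval G (hx t₀) (hcongr t₀ ht₀ t₀ ht₀)
    rwa [hb t₀ (hTS ht₀), zero_sub, dvd_neg] at hdvd
  have hcop : IsCoprime (p : ℤ) ((derivative G).evalEval a (b t₀)) := by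
    refine (Nat.prime_iff_prime_int.1 (Fact.out : p.Prime)).coprime_iff_not_dvd.2 fun h ↦ hpa ?_
    simpa using dvd_map_C_resultant hG _ (evalEvalRingHom a (b t₀)) hroot h
  refine ⟨T, hTS, hT, fun k ↦ ?_⟩
  obtain ⟨P, hP⟩ := exists_pow_dvd_eval_sub_of_isCoprime G hcop k
  obtain ⟨Q, hQ, hPQ⟩ := exists_natDegree_le_forall_pow_dvd_eval_sub_eval P a k
  refine ⟨Q.comp (C (p : ℤ) * X + C a), ?_, fun t ht ↦ ?_⟩
  · exact natDegree_comp_le.trans ((Nat.mul_le_mul hQ natDegree_linear_le).trans_eq (mul_one k))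
  · have hnewton := hP _ _ (hx t) (hcongr t ht t₀ ht₀) (hb t (hTS ht))
    simpa [add_comm] using dvd_sub hnewton (hPQ _ _ (hx t))

end LocalApproximation

section RationalRoot

variable {G : ℤ[X][X]} {a : ℤ} {β : ℤ → ℤ} {d : ℕ}

lemma exists_forall_abs_le_mul_pow_of_progression (hG : G.Monic)
    (hd : ∀ i, (G.coeff i).natDegree ≤ d) (ha : 0 < a)
    (hβ : ∀ n ≥ a, G.evalEval n (β n) = 0) (R : ℕ) :
    ∃ c : ℕ, ∀ q : ℕ, 0 < q → ∀ t ∈ Ico (0 : ℤ) R, |β (a + q * t)| ≤ c * q ^ d := by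
  obtain ⟨c, hc⟩ := exists_forall_abs_le_mul_pow_of_evalEval_eq_zero hG hd
  refine ⟨c * (a.toNat + R) ^ d, fun q hq t ht ↦ ?_⟩
  obtain ⟨ht0, htR⟩ := mem_Ico.1 ht
  have hle : a + q * t ≤ (a + R) * q := by
    rw [add_mul, mul_comm (R : ℤ)]
    gcongr
    exact le_mul_of_one_le_right ha.le (by exact_mod_cast hq)
  have hpos : 0 < a + q * t := by positivity
  calc |β (a + q * t)| ≤ c * |a + q * t| ^ d :=
        hc _ _ hpos.ne' (hβ _ (le_add_of_nonneg_right (by positivity)))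
    _ ≤ c * ((a + R) * q) ^ d := by
        rw [abs_of_pos hpos]
        gcongr
    _ = (c * (a.toNat + R) ^ d : ℕ) * q ^ d := by
        push_cast [Int.toNat_of_nonneg ha.le]
        rw [mul_pow, mul_assoc]

lemma exists_interpolation_on_progression (hG : G.Monic)
    (hd : ∀ i, (G.coeff i).natDegree ≤ d) (ha : 0 < a)
    (hres : (resultant G (derivative G)).eval a ≠ 0)
    (hβ : ∀ n ≥ a, G.evalEval n (β n) = 0) {D : ℕ} (hD : d ≤ D) :
    ∃ p : ℕ, 0 < p ∧ ∃ T : Finset ℤ, D < #T ∧ ∃ P : ℚ[X], P.natDegree ≤ d ∧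
      ∀ t ∈ T, 0 ≤ t ∧ P.eval (t : ℚ) = β (a + p * t) := by
  set R := G.natDegree * D + 1
  obtain ⟨c, hc⟩ := exists_forall_abs_le_mul_pow_of_progression hG hd ha hβ R
  have hrigid : ∀ᶠ q : ℕ in atTop, ∀ T ∈ {T ∈ (Ico (0 : ℤ) R).powerset | d < #T},
      ∀ (b : ℤ → ℤ) (y : ℤ[X]), y.natDegree ≤ d → (∀ t ∈ T, |b t| ≤ c * q ^ d) →
        (∀ t ∈ T, (q : ℤ) ^ (d + 1) ∣ y.eval t - b t) →
        ∃ P : ℚ[X], P.natDegree ≤ d ∧ ∀ t ∈ T, P.eval (t : ℚ) = b t :=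
    (eventually_all_finset _).2 fun T hT ↦
      eventually_exists_forall_eval_eq T c (mem_filter.1 hT).2
  have hprimes : ∃ᶠ p : ℕ in atTop, p.Prime :=
    Nat.frequently_atTop_iff_infinite.2 Nat.infinite_setOfPred_prime
  obtain ⟨p, hp, hrigid, hlarge⟩ := (hprimes.and_eventually (hrigid.and
    (eventually_gt_atTop ((resultant G (derivative G)).eval a).natAbs))).exists
  have : Fact p.Prime := ⟨hp⟩
  have hpa : ¬(p : ℤ) ∣ (resultant G (derivative G)).eval a := fun h ↦
    hlarge.not_ge (Nat.le_of_dvd (Int.natAbs_pos.2 hres) (Int.natCast_dvd.1 h))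
  obtain ⟨T, hTS, hT, happrox⟩ := exists_subset_forall_exists_pow_dvd hG hpa (S := Ico (0 : ℤ) R)
    (b := fun t ↦ β (a + p * t)) (D := D) (fun t ht ↦ hβ _ (le_add_of_nonneg_right (by
      have := (mem_Ico.1 ht).1
      positivity))) (by simp [R])
  obtain ⟨y, hy, hyT⟩ := happrox d
  obtain ⟨P, hP, hPT⟩ := hrigid T (mem_filter.2 ⟨mem_powerset.2 hTS, hD.trans_lt hT⟩) _ y hy
    (fun t ht ↦ hc p hp.pos t (hTS ht)) hyT
  exact ⟨p, hp.pos, T, hT, P, hP, fun t ht ↦ ⟨(mem_Ico.1 (hTS ht)).1, hPT t ht⟩⟩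

theorem exists_eval_eq_zero_of_eventually_exists_evalEval_eq_zero (hG : G.Monic)
    (hres : resultant G (derivative G) ≠ 0)
    (h : ∀ᶠ n : ℤ in atTop, ∃ y : ℤ, G.evalEval n y = 0) :
    ∃ Q : ℚ[X], (G.map (mapRingHom (Int.castRingHom ℚ))).eval Q = 0 := by
  obtain ⟨d, hd⟩ := exists_forall_natDegree_coeff_le G
  obtain ⟨a, hroots, ha, hra⟩ := ((eventually_forall_ge_atTop.2 h).and ((eventually_gt_atTop 0).and
    (atTop_le_cofinite (finite_setOfPred_isRoot hres).compl_mem_cofinite))).exists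
  choose! β hβ using hroots
  obtain ⟨p, hp, T, hT, P, hP, hPT⟩ := exists_interpolation_on_progression hG hd ha hra hβ
    (D := d + G.natDegree * d) (Nat.le_add_right _ _)
  have hp' : (p : ℚ) ≠ 0 := by exact_mod_cast hp.ne'
  let L : ℚ[X] := C (p : ℚ)⁻¹ * X + C (-(a : ℚ) / p)
  have hL (t : ℤ) : L.eval ((a + p * t : ℤ) : ℚ) = t := by
    simp only [L, eval_add, eval_mul, eval_C, eval_X]
    push_cast
    field_simp
    ring
  refine ⟨P.comp L, eval_eq_zero_of_forall_evalEval_eq_zero (d := d) (m := d) (T := T)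
    (v := fun t ↦ ((a + p * t : ℤ) : ℚ)) (fun i ↦ ?_) ?_ (fun s _ t _ hst ↦ ?_) ?_ fun t ht ↦ ?_⟩
  · rw [coeff_map]
    exact natDegree_map_le.trans (hd i)
  · exact natDegree_comp_le.trans ((Nat.mul_le_mul hP natDegree_linear_le).trans_eq (mul_one d))
  · simpa only [hL, Int.cast_inj] using congrArg L.eval hst
  · rwa [hG.natDegree_map]
  · obtain ⟨ht0, hPt⟩ := hPT t ht
    have hzero := hβ (a + p * t) (le_add_of_nonneg_right (by positivity))
    rw [eval_comp, hL, hPt]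
    simpa [hzero] using map_mapRingHom_evalEval (Int.castRingHom ℚ) G (a + p * t) (β (a + p * t))

end RationalRoot

section Reduction

lemma exists_monic_dvd_pow_and_separable_map {R : Type*} (K : Type*) [CommRing R]
    [IsIntegrallyClosed R] [Field K] [PerfectField K] [Algebra R K] [IsFractionRing R K]
    {g : R[X]} (hg : g.Monic) :
    ∃ G : R[X], G.Monic ∧ G ∣ g ∧ (∃ N, g ∣ G ^ N) ∧ (G.map (algebraMap R K)).Separable := by
  classical
  set κ := algebraMap R K with hκ
  have hinj : Function.Injective κ := IsFractionRing.injective R K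
  set r := UniqueFactorizationMonoid.radical (g.map κ)
  have hdvd : r ∣ g.map κ := UniqueFactorizationMonoid.radical_dvd_self
  have hsq : Squarefree r := UniqueFactorizationMonoid.squarefree_radical
  have hlc : r.leadingCoeff ≠ 0 := leadingCoeff_ne_zero.2 hsq.ne_zero
  obtain ⟨N, hN⟩ := UniqueFactorizationMonoid.exists_dvd_radical_self_pow (hg.map κ).ne_zero
  obtain ⟨G, hGr⟩ := IsIntegrallyClosed.eq_map_mul_C_of_dvd K hg hdvd
  rw [← hκ] at hGr
  have hG : G.Monic := monic_of_injective hinj <| by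
    refine mul_right_cancel₀ hlc ?_
    simpa only [leadingCoeff_mul, leadingCoeff_C, one_mul] using congrArg leadingCoeff hGr
  have hassoc : Associated (G.map κ) r :=
    ⟨(isUnit_C.2 hlc.isUnit).unit, hGr⟩
  refine ⟨G, hG, ?_, ⟨N, ?_⟩, PerfectField.separable_iff_squarefree.2
    (hsq.squarefree_of_dvd hassoc.dvd)⟩
  · rw [← map_dvd_map κ hinj hG]
    exact hassoc.dvd.trans hdvd
  · rw [← map_dvd_map κ hinj hg, Polynomial.map_pow]
    exact hN.trans hassoc.symm.pow_pow.dvd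

lemma exists_evalEval_eq_zero_of_monic {A K : Type*} [CommRing A]
    [IsIntegrallyClosed A] [Field K] [Algebra A K] [IsFractionRing A K] {G : A[X][X]}
    (hG : G.Monic) {a : A} {x : K}
    (hx : (G.map (mapRingHom (algebraMap A K))).evalEval (algebraMap A K a) x = 0) :
    ∃ y : A, G.evalEval a y = 0 := by
  have hcomp : (evalRingHom (algebraMap A K a)).comp (mapRingHom (algebraMap A K)) =
      (algebraMap A K).comp (evalRingHom a) := by
    ext <;> simp
  have hint : IsIntegral A x := by
    refine ⟨G.map (evalRingHom a), hG.map _, ?_⟩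
    rwa [eval₂_map, ← hcomp, ← eval₂_map, eval₂_evalRingHom]
  obtain ⟨y, rfl⟩ := IsIntegrallyClosed.isIntegral_iff.1 hint
  refine ⟨y, IsFractionRing.injective A K ?_⟩
  rw [map_zero, ← hx, map_mapRingHom_evalEval]

theorem exists_eval_eq_zero_of_monic_of_eventually {g : ℤ[X][X]} (hg : g.Monic)
    (h : ∀ᶠ n : ℤ in atTop, ∃ x : ℚ,
      (g.map (mapRingHom (Int.castRingHom ℚ))).evalEval (n : ℚ) x = 0) :
    ∃ Q : ℚ[X], (g.map (mapRingHom (Int.castRingHom ℚ))).eval Q = 0 := by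
  obtain ⟨G, hG, hGg, ⟨N, hgG⟩, hsep⟩ :=
    exists_monic_dvd_pow_and_separable_map (FractionRing ℤ[X]) hg
  let μ := mapRingHom (Int.castRingHom ℚ)
  have hinteger : ∀ᶠ n : ℤ in atTop, ∃ y : ℤ, G.evalEval n y = 0 := by
    filter_upwards [h] with n ⟨x, hx⟩
    refine exists_evalEval_eq_zero_of_monic (K := ℚ) (x := x) hG ?_
    have hpow : (evalEvalRingHom (n : ℚ) x) (G.map μ) ^ N = 0 := by
      rw [← map_pow, ← Polynomial.map_pow]
      exact eval_eq_zero_of_dvd_of_eval_eq_zero (_root_.map_dvd (evalRingHom _)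
        (Polynomial.map_dvd μ hgG)) hx
    exact eq_zero_of_pow_eq_zero hpow
  obtain ⟨Q, hQ⟩ := exists_eval_eq_zero_of_eventually_exists_evalEval_eq_zero hG
    (resultant_derivative_ne_zero_of_separable_map (IsFractionRing.injective _ _) hsep) hinteger
  exact ⟨Q, eval_eq_zero_of_dvd_of_eval_eq_zero (Polynomial.map_dvd _ hGg) hQ⟩

attribute [local instance] Polynomial.algebra Polynomial.isLocalization in
lemma exists_map_mapRingHom_eq_C_C_mul {A K : Type*} [CommRing A] [CommRing K] [Algebra A K]
    (M : Submonoid A) [IsLocalization M K] (f : K[X][X]) :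
    ∃ d ∈ M, ∃ g : A[X][X],
      g.map (mapRingHom (algebraMap A K)) = C (C (algebraMap A K d)) * f := by
  obtain ⟨_, ⟨d, hd, rfl⟩, hg⟩ :=
    IsLocalization.integerNormalization_spec (M.map (C : A →+* A[X])) f
  refine ⟨d, hd, _, hg.trans ?_⟩
  rw [← algebraMap_smul K[X] (C d) f, smul_eq_C_mul, algebraMap_def, coe_mapRingHom, map_C]

lemma eval₂_div_eq_zero_of_integralNormalization {R K : Type*} [CommRing R] [Field K]
    {φ : R →+* K} {p : R[X]} (hdeg : 1 ≤ p.natDegree) (hlc : φ p.leadingCoeff ≠ 0) {z : K}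
    (hz : p.integralNormalization.eval₂ φ z = 0) : p.eval₂ φ (z / φ p.leadingCoeff) = 0 := by
  have h := integralNormalization_eval₂_leadingCoeff_mul hdeg φ (z / φ p.leadingCoeff)
  rw [mul_div_cancel₀ _ hlc, hz] at h
  exact (mul_eq_zero.1 h.symm).resolve_left (pow_ne_zero _ hlc)

theorem exists_isRoot_of_eventually_exists_isRoot {f : ℚ[X][X]} (hdeg : 1 ≤ f.natDegree)
    (h : ∀ᶠ n : ℤ in atTop, ∃ x : ℚ, (f.map (evalRingHom (n : ℚ))).IsRoot x) :
    ∃ r : RatFunc ℚ, (f.map (algebraMap ℚ[X] (RatFunc ℚ))).IsRoot r := by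
  set μ := mapRingHom (Int.castRingHom ℚ)
  have hμinj : Function.Injective μ := map_injective _ Int.cast_injective
  obtain ⟨d, hd, g, hg⟩ := exists_map_mapRingHom_eq_C_C_mul (nonZeroDivisors ℤ) f
  have hd' : C (d : ℚ) ≠ 0 := C_ne_zero.2 (Int.cast_ne_zero.2 (nonZeroDivisors.ne_zero hd))
  replace hg : g.map μ = C (C (d : ℚ)) * f := hg
  have hgdeg : 1 ≤ g.natDegree := by
    rwa [← natDegree_map_eq_of_injective hμinj, hg, natDegree_C_mul hd']
  have hg0 : g ≠ 0 := ne_zero_of_natDegree_gt hgdeg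
  obtain ⟨Q, hQ⟩ := exists_eval_eq_zero_of_monic_of_eventually
    (monic_integralNormalization hg0) <| by
    filter_upwards [h] with n ⟨x, hx⟩
    set φ := (evalRingHom (n : ℚ)).comp μ
    refine ⟨φ g.leadingCoeff * x, ?_⟩
    rw [← eval₂_evalRingHom, eval₂_map, integralNormalization_eval₂_leadingCoeff_mul hgdeg,
      ← eval₂_map, hg, eval₂_mul, eval₂_eq_eval_map (p := f), hx, mul_zero, mul_zero]
  have hlc : μ g.leadingCoeff ≠ 0 := (map_ne_zero_iff μ hμinj).2 (leadingCoeff_ne_zero.2 hg0)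
  set ι := algebraMap ℚ[X] (RatFunc ℚ)
  have hιinj : Function.Injective ι := RatFunc.algebraMap_injective ℚ
  have hz := eval₂_div_eq_zero_of_integralNormalization (φ := ι.comp μ) (z := ι Q) hgdeg
    ((map_ne_zero_iff ι hιinj).2 hlc) <| by
      rw [← hom_eval₂, ← eval_map, hQ, map_zero]
  rw [← eval₂_map, hg, eval₂_mul, eval₂_C, mul_eq_zero, map_eq_zero_iff ι hιinj] at hz
  exact ⟨_, (eval_map _ _).trans (hz.resolve_left hd')⟩

end Reduction

theorem hilbertian_no_root_specialization_general (f : ℚ[X][X])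
    (hroot : ∀ r : RatFunc ℚ, ¬(f.map (algebraMap ℚ[X] (RatFunc ℚ))).IsRoot r) :
    ∃ᶠ n : ℤ in atTop, ∀ x : ℚ, ¬(f.map (evalRingHom (n : ℚ))).IsRoot x := by
  intro h
  simp only [not_forall, not_not] at h
  by_cases hdeg : 1 ≤ f.natDegree
  · exact (exists_isRoot_of_eventually_exists_isRoot hdeg h).elim hroot
  · obtain ⟨c, rfl⟩ := natDegree_eq_zero.1 (Nat.lt_one_iff.1 (not_le.1 hdeg))
    have hc : c ≠ 0 := by
      rintro rfl
      exact hroot 0 (by simp)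
    obtain ⟨n, ⟨x, hx⟩, hn⟩ := (h.and (tendsto_intCast_atTop_atTop.eventually
      (eventually_atTop_not_isRoot c hc))).exists
    exact hn (by simpa using hx)

/-- Let `f ∈ ℚ[t][X]` have degree at least `1` in `X` and, regarded as a polynomial in
`X` over `ℚ(t)`, have no root in `ℚ(t)`. Then there is `a ∈ ℚ` such that the
specialization `f(a, X) ∈ ℚ[X]` has no root in `ℚ`. -/
theorem hilbertian_no_root_specialization (f : Polynomial (Polynomial ℚ))
    (hdeg : 1 ≤ f.natDegree)
    (hroot : ∀ r : RatFunc ℚ,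
      ¬ (f.map (algebraMap (Polynomial ℚ) (RatFunc ℚ))).IsRoot r) :
    ∃ a : ℚ, ∀ x : ℚ, ¬ (f.map (Polynomial.evalRingHom a)).IsRoot x := by
  obtain ⟨n, hn⟩ := (hilbertian_no_root_specialization_general f hroot).exists
  exact ⟨n, hn⟩
end
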